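/- arXiv:2401.11786 — 7 statements merged into one kernel-verified Lean document; each statement's English description precedes it below -/
import Mathlib

section
/- Let φ be a differentiable function on ℝ^m that is (μ,L)-strongly convex on a convex set 𝒴, let y* ∈ 𝒴 satisfy ∇φ(y*) = 0, and let 0 < τ ≤ (μ/L)^{1/2}. Suppose sequences (y_k), (ȳ_k), (s_k) satisfy the corrected semi-implicit recursions (ȳ_k − y_k)/τ = s_k − ȳ_k, (s_{k+1} − s_k)/τ = (ȳ_k − s_k) − (1/μ)∇φ(ȳ_k), and φ(y_{k+1}) ≤ φ(ȳ_k) − (1/(2L))‖∇φ(ȳ_k)‖², and that all iterates ȳ_k, y_k, s_k lie in 𝒴. Then the discrete Lyapunov function ℒ_k = φ(y_k) − φ(y*) + (μ/2)‖s_k − y*‖² satisfies ℒ_{k+1} ≤ (1 − τ)ℒ_k for all k ≥ 0. -/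
open RealInnerProductSpace

/-- Convergence of the corrected semi-implicit scheme: with φ (μ,L)-strongly convex
on 𝒴, ∇φ(y*) = 0, 0 < τ ≤ κ^{−1/2}, the recursions and the containment of all
iterates in 𝒴 imply ℒ_{k+1} ≤ (1 − τ)ℒ_k. -/
theorem stmt_12 (m : ℕ) (hm : 0 < m)
    (φ : EuclideanSpace ℝ (Fin m) → ℝ) (hφ : Differentiable ℝ φ)
    (Y : Set (EuclideanSpace ℝ (Fin m))) (hY : Convex ℝ Y)
    (μ L : ℝ) (hμ : 0 < μ) (hμL : μ ≤ L)
    (hconv : ∀ y₁ ∈ Y, ∀ y₂ ∈ Y,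
      μ / 2 * ‖y₁ - y₂‖ ^ 2 ≤ φ y₁ - φ y₂ - ⟪gradient φ y₂, y₁ - y₂⟫ ∧
      φ y₁ - φ y₂ - ⟪gradient φ y₂, y₁ - y₂⟫ ≤ L / 2 * ‖y₁ - y₂‖ ^ 2)
    (ystar : EuclideanSpace ℝ (Fin m)) (hystar : ystar ∈ Y)
    (hgrad0 : gradient φ ystar = 0)
    (τ : ℝ) (hτ0 : 0 < τ) (hτ : τ ≤ (L / μ) ^ (-(1/2 : ℝ)))
    (y ybar s : ℕ → EuclideanSpace ℝ (Fin m))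
    (hrec1 : ∀ k, τ⁻¹ • (ybar k - y k) = s k - ybar k)
    (hrec2 : ∀ k, τ⁻¹ • (s (k+1) - s k) = (ybar k - s k) - μ⁻¹ • gradient φ (ybar k))
    (hrec3 : ∀ k, φ (y (k+1)) ≤ φ (ybar k) - 1 / (2 * L) * ‖gradient φ (ybar k)‖ ^ 2)
    (hmem : ∀ k, y k ∈ Y ∧ ybar k ∈ Y ∧ s k ∈ Y) :
    ∀ k, φ (y (k+1)) - φ ystar + μ / 2 * ‖s (k+1) - ystar‖ ^ 2 ≤
      (1 - τ) * (φ (y k) - φ ystar + μ / 2 * ‖s k - ystar‖ ^ 2) := by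
  intro k
  obtain ⟨h1, h2, h3⟩ := hmem k
  have hL : 0 < L := lt_of_lt_of_le hμ hμL
  have hLμ : 0 < L / μ := div_pos hL hμ
  have hτ2 : τ ^ 2 ≤ μ / L := by
    have h := pow_le_pow_left₀ hτ0.le hτ 2
    have e : ((L / μ) ^ (-(1/2 : ℝ))) ^ 2 = μ / L := by
      rw [← Real.rpow_natCast, ← Real.rpow_mul hLμ.le]
      norm_num
      rw [Real.rpow_neg_one, inv_div]
    rwa [e] at h
  have hτ1 : τ ≤ 1 := by
    have : μ / L ≤ 1 := (div_le_one hL).2 hμL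
    nlinarith
  have hA := (hconv _ h1 _ h2).1
  have hB := (hconv _ hystar _ h2).1
  have hC := hrec3 k
  have r1 : y k - ybar k = -(τ • ((s k - ystar) - (ybar k - ystar))) := by
    have h := congrArg (fun v => τ • v) (hrec1 k)
    simp only [smul_smul, mul_inv_cancel₀ hτ0.ne', one_smul] at h
    rw [← neg_sub (ybar k) (y k), h]; congr 2; abel
  have r2 : s (k+1) - ystar = (s k - ystar) + τ • ((ybar k - ystar) - (s k - ystar))
      - (τ * μ⁻¹) • gradient φ (ybar k) := by
    have h := congrArg (fun v => τ • v) (hrec2 k)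
    simp only [smul_smul, mul_inv_cancel₀ hτ0.ne', one_smul] at h
    have h' : s (k+1) = s k + τ • (ybar k - s k - μ⁻¹ • gradient φ (ybar k)) := by
      rw [← h]; abel
    rw [h']; module
  have r3 : ystar - ybar k = -(ybar k - ystar) := by abel
  rw [r1] at hA
  rw [r3] at hB
  rw [r2]
  generalize s k - ystar = d at *
  generalize ybar k - ystar = e at *
  generalize gradient φ (ybar k) = g at *
  have hD : 0 ≤ ‖d - e‖ ^ 2 := by positivity
  have hG : τ ^ 2 / (2 * μ) * ‖g‖ ^ 2 ≤ 1 / (2 * L) * ‖g‖ ^ 2 := by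
    apply mul_le_mul_of_nonneg_right _ (by positivity)
    rw [le_div_iff₀ hL] at hτ2
    rw [div_le_div_iff₀ (by positivity) (by positivity)]
    nlinarith
  have hN : μ / 2 * ‖d + τ • (e - d) - (τ * μ⁻¹) • g‖ ^ 2 =
      μ / 2 * ((1 - τ) * ‖d‖ ^ 2 + τ * ‖e‖ ^ 2 - τ * (1 - τ) * ‖d - e‖ ^ 2)
      - τ * ((1 - τ) * ⟪g, d⟫ + τ * ⟪g, e⟫) + τ ^ 2 / (2 * μ) * ‖g‖ ^ 2 := by
    simp only [← real_inner_self_eq_norm_sq, inner_add_left, inner_add_right, inner_sub_left,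
      inner_sub_right, real_inner_smul_left, real_inner_smul_right]
    rw [real_inner_comm d e, real_inner_comm g d, real_inner_comm g e]
    field_simp
    ring
  rw [hN]
  simp only [inner_neg_right, real_inner_smul_right, inner_sub_right, norm_neg] at hA hB
  have hA' : 0 ≤ μ / 2 * ‖τ • (d - e)‖ ^ 2 := by positivity
  have hA2 := mul_le_mul_of_nonneg_left (hA'.trans hA) (sub_nonneg.2 hτ1)
  have hB2 := mul_le_mul_of_nonneg_left hB hτ0.le
  have hD2 : 0 ≤ μ / 2 * (τ * (1 - τ) * ‖d - e‖ ^ 2) := by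
    have := sub_nonneg.2 hτ1
    positivity
  linarith
end

section
/- Let φ : ℝ^m → ℝ be differentiable, (μ,L)-strongly convex on a convex set 𝒴, with unique minimizer y* ∈ 𝒴 and ∇φ(y*) = 0, and assume the gradient bounds μ‖y₁−y₂‖ ≤ ‖∇φ(y₁)−∇φ(y₂)‖ ≤ L‖y₁−y₂‖ hold for y₁,y₂ ∈ 𝒴. Set κ = L/μ and let 0 < τ ≤ κ^{−1/2}. Suppose the initials satisfy s₀ ∈ B_{R₁} and {y : φ(y) ≤ φ(y₀)} ⊆ B_{R₁} ⊆ B_{R₂} ⊆ 𝒴, where B_R = {y : ‖y − y*‖ ≤ R}, R₁ = (2ℒ₀/μ)^{1/2}, R₂ = max{2R₁, (1+τκ)R₁}, and ℒ₀ = φ(y₀) − φ(y*) + (μ/2)‖s₀ − y*‖². Generate iterates by the LONAG recursions: ȳ_k = (y_k + τ s_k)/(1+τ), s_{k+1} = (1−τ)s_k + τ ȳ_k − (τ/μ)∇φ(ȳ_k), and y_{k+1} a minimizer of φ over span{y_k, ȳ_k, ∇φ(ȳ_k)}. Then for all k ≥ 0: (a) ȳ_k ∈ B_{R₁} and y_{k+1}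 ∈ B_{R₁}; (b) φ(y_{k+1}) ≤ φ(ȳ_k) − (1/(2L))‖∇φ(ȳ_k)‖²; (c) ℒ_{k+1} ≤ (1−τ)ℒ_k, where ℒ_k = φ(y_k) − φ(y*) + (μ/2)‖s_k − y*‖²; and (d) s_{k+1} ∈ B_{R₁}. -/
open RealInnerProductSpace

theorem lonag_step_aux {E : Type*} [NormedAddCommGroup E] [InnerProductSpace ℝ E]
    (u w g : E) (μ L τ fx fy fp fs : ℝ) (hμ : 0 < μ) (hL : 0 < L) (hτ0 : 0 < τ) (hτ1 : τ ≤ 1)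
    (hτ2 : τ ^ 2 * L ≤ μ)
    (h1 : 0 ≤ fy - fx - ⟪g, τ • (w - u)⟫)
    (h2 : μ / 2 * ‖w‖ ^ 2 ≤ fs - fx + ⟪g, w⟫)
    (h3 : fp ≤ fx - 1 / (2 * L) * ‖g‖ ^ 2) :
    fp - fs + μ / 2 * ‖(1 - τ) • u + τ • w - (τ / μ) • g‖ ^ 2 ≤
      (1 - τ) * (fy - fs + μ / 2 * ‖u‖ ^ 2) := by
  have e : ‖(1 - τ) • u + τ • w - (τ / μ) • g‖ ^ 2 =
      (1 - τ) * ‖u‖ ^ 2 + τ * ‖w‖ ^ 2 - τ * (1 - τ) * ‖u - w‖ ^ 2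
      - 2 * (τ / μ) * ((1 - τ) * ⟪g, u⟫ + τ * ⟪g, w⟫) + (τ / μ) ^ 2 * ‖g‖ ^ 2 := by
    simp only [← real_inner_self_eq_norm_sq, inner_sub_left, inner_sub_right, inner_add_left,
      inner_add_right, real_inner_smul_left, real_inner_smul_right]
    rw [real_inner_comm u g, real_inner_comm w g, real_inner_comm u w]
    ring
  have e2 : μ / 2 * ‖(1 - τ) • u + τ • w - (τ / μ) • g‖ ^ 2 =
      μ / 2 * ((1 - τ) * ‖u‖ ^ 2 + τ * ‖w‖ ^ 2 - τ * (1 - τ) * ‖u - w‖ ^ 2)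
      - τ * ((1 - τ) * ⟪g, u⟫ + τ * ⟪g, w⟫) + τ ^ 2 / (2 * μ) * ‖g‖ ^ 2 := by
    rw [e]; field_simp
  have h4 : τ ^ 2 / (2 * μ) * ‖g‖ ^ 2 ≤ 1 / (2 * L) * ‖g‖ ^ 2 := by
    apply mul_le_mul_of_nonneg_right _ (sq_nonneg _)
    rw [div_le_div_iff₀ (by positivity) (by positivity)]
    linarith
  have h5 : 0 ≤ μ / 2 * (τ * (1 - τ) * ‖u - w‖ ^ 2) := by
    have : 0 ≤ 1 - τ := by linarith
    positivity
  rw [real_inner_smul_right, inner_sub_right] at h1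
  have h1' := mul_nonneg (sub_nonneg.2 hτ1) h1
  have h2' := mul_le_mul_of_nonneg_left h2 hτ0.le
  rw [e2]
  linarith

/-- LONAG containment and convergence: under strong convexity, gradient bounds,
step-size 0 < τ ≤ κ^{−1/2}, and the initial containment conditions, the LONAG
iterates satisfy (a) ȳ_k, y_{k+1} ∈ B_{R₁}; (b) the sufficient-declination
property; (c) ℒ_{k+1} ≤ (1−τ)ℒ_k; (d) s_{k+1} ∈ B_{R₁}. -/
theorem stmt_14 (m : ℕ) (hm : 0 < m)
    (φ : EuclideanSpace ℝ (Fin m) → ℝ) (hφ : Differentiable ℝ φ)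
    (Y : Set (EuclideanSpace ℝ (Fin m))) (hY : Convex ℝ Y)
    (μ L : ℝ) (hμ : 0 < μ) (hμL : μ ≤ L)
    (hconv : ∀ y₁ ∈ Y, ∀ y₂ ∈ Y,
      μ / 2 * ‖y₁ - y₂‖ ^ 2 ≤ φ y₁ - φ y₂ - ⟪gradient φ y₂, y₁ - y₂⟫ ∧
      φ y₁ - φ y₂ - ⟪gradient φ y₂, y₁ - y₂⟫ ≤ L / 2 * ‖y₁ - y₂‖ ^ 2)
    (hgradbd : ∀ y₁ ∈ Y, ∀ y₂ ∈ Y,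
      μ * ‖y₁ - y₂‖ ≤ ‖gradient φ y₁ - gradient φ y₂‖ ∧
      ‖gradient φ y₁ - gradient φ y₂‖ ≤ L * ‖y₁ - y₂‖)
    (ystar : EuclideanSpace ℝ (Fin m)) (hystar : ystar ∈ Y)
    (hmin : ∀ v ∈ Y, φ ystar ≤ φ v)
    (huniq : ∀ v ∈ Y, φ v = φ ystar → v = ystar)
    (hgrad0 : gradient φ ystar = 0)
    (κ : ℝ) (hκ : κ = L / μ)
    (τ : ℝ) (hτ0 : 0 < τ) (hτ : τ ≤ κ ^ (-(1/2 : ℝ)))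
    (y ybar s : ℕ → EuclideanSpace ℝ (Fin m))
    (L0 R1 R2 : ℝ)
    (hL0 : L0 = φ (y 0) - φ ystar + μ / 2 * ‖s 0 - ystar‖ ^ 2)
    (hR1 : R1 = Real.sqrt (2 * L0 / μ))
    (hR2 : R2 = max (2 * R1) ((1 + τ * κ) * R1))
    (hs0 : ‖s 0 - ystar‖ ≤ R1)
    (hlev : {v : EuclideanSpace ℝ (Fin m) | φ v ≤ φ (y 0)} ⊆
      {v | ‖v - ystar‖ ≤ R1})
    (hB12 : {v : EuclideanSpace ℝ (Fin m) | ‖v - ystar‖ ≤ R1} ⊆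
      {v | ‖v - ystar‖ ≤ R2})
    (hB2Y : {v : EuclideanSpace ℝ (Fin m) | ‖v - ystar‖ ≤ R2} ⊆ Y)
    (hrec1 : ∀ k, ybar k = (1 + τ)⁻¹ • (y k + τ • s k))
    (hrec2 : ∀ k, s (k+1) = (1 - τ) • s k + τ • ybar k - (τ / μ) • gradient φ (ybar k))
    (hrec3 : ∀ k, y (k+1) ∈
        (Submodule.span ℝ {y k, ybar k, gradient φ (ybar k)} :
          Submodule ℝ (EuclideanSpace ℝ (Fin m))) ∧
      ∀ v ∈ (Submodule.span ℝ {y k, ybar k, gradient φ (ybar k)} :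
          Submodule ℝ (EuclideanSpace ℝ (Fin m))),
        φ (y (k+1)) ≤ φ v) :
    ∀ k : ℕ,
      (‖ybar k - ystar‖ ≤ R1 ∧ ‖y (k+1) - ystar‖ ≤ R1) ∧
      (φ (y (k+1)) ≤ φ (ybar k) - 1 / (2 * L) * ‖gradient φ (ybar k)‖ ^ 2) ∧
      (φ (y (k+1)) - φ ystar + μ / 2 * ‖s (k+1) - ystar‖ ^ 2 ≤
        (1 - τ) * (φ (y k) - φ ystar + μ / 2 * ‖s k - ystar‖ ^ 2)) ∧
      ‖s (k+1) - ystar‖ ≤ R1 := by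
  have hL : 0 < L := by linarith
  have hκ1 : 0 < κ := by rw [hκ]; positivity
  have hτ2 : τ ^ 2 * L ≤ μ := by
    have h1 : τ ^ 2 ≤ κ⁻¹ := by
      calc τ ^ 2 ≤ (κ ^ (-(1/2 : ℝ))) ^ 2 := by gcongr
        _ = κ⁻¹ := by
          rw [← Real.rpow_natCast, ← Real.rpow_mul hκ1.le, ← Real.rpow_neg_one]
          norm_num
    have h2 : κ⁻¹ * L = μ := by rw [hκ]; field_simp
    calc τ ^ 2 * L ≤ κ⁻¹ * L := by gcongr
      _ = μ := h2
  have hτ1 : τ ≤ 1 := by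
    by_contra h
    push Not at h
    have : 1 < τ ^ 2 := by nlinarith
    nlinarith
  have hR1n : 0 ≤ R1 := by rw [hR1]; positivity
  have hB1Y : ∀ v, ‖v - ystar‖ ≤ R1 → v ∈ Y := fun v hv => hB2Y (hB12 hv)
  have hy0 : y 0 ∈ Y := hB1Y _ (hlev (le_refl (φ (y 0))))
  have hL0n : 0 ≤ L0 := by
    rw [hL0]
    have := hmin _ hy0
    have : 0 ≤ μ / 2 * ‖s 0 - ystar‖ ^ 2 := by positivity
    linarith
  have hR1sq : μ / 2 * R1 ^ 2 = L0 := by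
    rw [hR1, Real.sq_sqrt (by positivity)]; field_simp
  have step : ∀ k, φ (y k) ≤ φ (y 0) → ‖s k - ystar‖ ≤ R1 →
      φ (y k) - φ ystar + μ / 2 * ‖s k - ystar‖ ^ 2 ≤ L0 →
      (φ (y (k+1)) ≤ φ (y 0) ∧
        φ (y (k+1)) - φ ystar + μ / 2 * ‖s (k+1) - ystar‖ ^ 2 ≤ L0) ∧
      (‖ybar k - ystar‖ ≤ R1 ∧ ‖y (k+1) - ystar‖ ≤ R1) ∧
      (φ (y (k+1)) ≤ φ (ybar k) - 1 / (2 * L) * ‖gradient φ (ybar k)‖ ^ 2) ∧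
      (φ (y (k+1)) - φ ystar + μ / 2 * ‖s (k+1) - ystar‖ ^ 2 ≤
        (1 - τ) * (φ (y k) - φ ystar + μ / 2 * ‖s k - ystar‖ ^ 2)) ∧
      ‖s (k+1) - ystar‖ ≤ R1 := by
    intro k hk1 hk2 hk3
    have hyk : ‖y k - ystar‖ ≤ R1 := hlev hk1
    have hykY := hB1Y _ hyk
    have hτp : (1 + τ) ≠ 0 := by positivity
    have hyb : ‖ybar k - ystar‖ ≤ R1 := by
      have e : ybar k - ystar = (1 + τ)⁻¹ • ((y k - ystar) + τ • (s k - ystar)) := by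
        rw [hrec1 k]
        match_scalars <;> field_simp
        ring
      rw [e, norm_smul, Real.norm_of_nonneg (by positivity), inv_mul_le_iff₀ (by positivity)]
      calc _ ≤ ‖y k - ystar‖ + ‖τ • (s k - ystar)‖ := norm_add_le _ _
        _ = ‖y k - ystar‖ + τ * ‖s k - ystar‖ := by
          rw [norm_smul, Real.norm_of_nonneg hτ0.le]
        _ ≤ R1 + τ * R1 := by gcongr
        _ = _ := by ring
    have hybY := hB1Y _ hyb
    have hyk1 : φ (y (k+1)) ≤ φ (y k) :=
      (hrec3 k).2 _ (Submodule.subset_span (by simp))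
    have hyk10 := hyk1.trans hk1
    have hyk1B : ‖y (k+1) - ystar‖ ≤ R1 := hlev hyk10
    have hb : φ (y (k+1)) ≤ φ (ybar k) - 1 / (2 * L) * ‖gradient φ (ybar k)‖ ^ 2 := by
      have hg : ‖gradient φ (ybar k)‖ ≤ L * R1 := by
        have := (hgradbd _ hybY _ hystar).2
        rw [hgrad0, sub_zero] at this
        exact this.trans (by gcongr)
      set g := gradient φ (ybar k) with hgdef
      have hv : ybar k - L⁻¹ • g ∈ Y := by
        apply hB2Y
        show ‖ybar k - L⁻¹ • g - ystar‖ ≤ R2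
        rw [hR2]
        refine le_trans ?_ (le_max_left _ _)
        rw [sub_right_comm]
        refine (norm_sub_le _ _).trans ?_
        rw [norm_smul, Real.norm_of_nonneg (by positivity)]
        have : L⁻¹ * ‖g‖ ≤ R1 := by
          rw [inv_mul_le_iff₀ hL]; exact hg
        linarith
      have h1 := (hconv _ hv _ hybY).2
      have h2 : φ (y (k+1)) ≤ φ (ybar k - L⁻¹ • g) := by
        apply (hrec3 k).2
        refine Submodule.sub_mem _ (Submodule.subset_span (by simp))
          (Submodule.smul_mem _ _ (Submodule.subset_span (by simp [hgdef])))
      rw [← hgdef, sub_sub_cancel_left, inner_neg_right, norm_neg, real_inner_smul_right,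
        real_inner_self_eq_norm_sq, norm_smul, Real.norm_of_nonneg (by positivity)] at h1
      have e : L / 2 * (L⁻¹ * ‖g‖) ^ 2 - L⁻¹ * ‖g‖ ^ 2 = - (1 / (2 * L) * ‖g‖ ^ 2) := by
        field_simp
        ring
      linarith
    have hc : φ (y (k+1)) - φ ystar + μ / 2 * ‖s (k+1) - ystar‖ ^ 2 ≤
        (1 - τ) * (φ (y k) - φ ystar + μ / 2 * ‖s k - ystar‖ ^ 2) := by
      have e : s (k+1) - ystar = (1 - τ) • (s k - ystar) + τ • (ybar k - ystar)
          - (τ / μ) • gradient φ (ybar k) := by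
        rw [hrec2 k]; module
      rw [e]
      apply lonag_step_aux (s k - ystar) (ybar k - ystar) (gradient φ (ybar k)) μ L τ
        (φ (ybar k)) (φ (y k)) (φ (y (k+1))) (φ ystar) hμ hL hτ0 hτ1 hτ2 _ _ hb
      · have h := (hconv _ hykY _ hybY).1
        have e : y k - ybar k = τ • (ybar k - ystar - (s k - ystar)) := by
          have : y k = (1 + τ) • ybar k - τ • s k := by
            rw [hrec1 k, smul_smul, mul_inv_cancel₀ hτp]; module
          rw [this]; module
        rw [← e]
        exact le_trans (by positivity) h
      · have h := (hconv _ hystar _ hybY).1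
        rw [← neg_sub (ybar k) ystar, inner_neg_right, norm_neg] at h
        linarith
    have hLk : 0 ≤ φ (y k) - φ ystar + μ / 2 * ‖s k - ystar‖ ^ 2 := by
      have := hmin _ hykY
      have : 0 ≤ μ / 2 * ‖s k - ystar‖ ^ 2 := by positivity
      linarith
    have hL1 : φ (y (k+1)) - φ ystar + μ / 2 * ‖s (k+1) - ystar‖ ^ 2 ≤ L0 := by
      nlinarith
    refine ⟨⟨hyk10, hL1⟩, ⟨hyb, hyk1B⟩, hb, hc, ?_⟩
    have h6 := hmin _ (hB1Y _ hyk1B)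
    have h7 : μ / 2 * ‖s (k+1) - ystar‖ ^ 2 ≤ μ / 2 * R1 ^ 2 := by linarith
    have h8 := le_of_mul_le_mul_left h7 (by positivity)
    exact (sq_le_sq₀ (norm_nonneg _) hR1n).1 h8
  have inv : ∀ k, φ (y k) ≤ φ (y 0) ∧ ‖s k - ystar‖ ≤ R1 ∧
      φ (y k) - φ ystar + μ / 2 * ‖s k - ystar‖ ^ 2 ≤ L0 := by
    intro k
    induction k with
    | zero => exact ⟨le_rfl, hs0, hL0.ge⟩
    | succ k ih =>
      have h := step k ih.1 ih.2.1 ih.2.2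
      exact ⟨h.1.1, h.2.2.2.2, h.1.2⟩
  intro k
  exact (step k (inv k).1 (inv k).2.1 (inv k).2.2).2
end

section
/- Under the assumptions of the LONAG containment-and-convergence theorem (φ (μ,L)-strongly convex on 𝒴 with minimizer y*, ∇φ(y*) = 0, gradient bounds μ‖y₁−y₂‖ ≤ ‖∇φ(y₁)−∇φ(y₂)‖ ≤ L‖y₁−y₂‖ on 𝒴, step-size 0 < τ ≤ (μ/L)^{−1/2·(−1)} i.e. 0 < τ ≤ κ^{−1/2} with κ = L/μ, and initials satisfying s₀ ∈ B_{R₁} and {y : φ(y) ≤ φ(y₀)} ⊆ B_{R₁} ⊆ B_{R₂} ⊆ 𝒴 with R₁ = (2ℒ₀/μ)^{1/2}, R₂ = max{2R₁,(1+τκ)R₁}), the LONAG iterates satisfy φ(y_k) ≤ φ(y_{k−1}) ≤ … ≤ φ(y₀) and φ(y_k) − φ(y*) ≤ (1 − τ)^k ℒ₀ for all k ≥ 0, where ℒ₀ = φ(y₀) − φ(y*) + (μ/2)‖s₀ − y*‖². -/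
open RealInnerProductSpace

theorem lonag_step {E : Type*} [NormedAddCommGroup E] [InnerProductSpace ℝ E]
    (a x y g s' : E) (μ L τ fy fx fp fn : ℝ) (hμ : 0 < μ) (hL : 0 < L) (hτ0 : 0 < τ) (hτ1 : τ ≤ 1)
    (hτ : τ ^ 2 * L ≤ μ)
    (hy : y = x + τ • (x - a))
    (hs : s' = (1 - τ) • a + τ • x - (τ / μ) • g)
    (h1 : fn ≤ fx - 1 / (2 * L) * ‖g‖ ^ 2)
    (h2 : 0 ≤ fy - fx - inner ℝ g (y - x))
    (h3 : μ / 2 * ‖x‖ ^ 2 ≤ fp - fx - inner ℝ g (-x)) :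
    fn - fp + μ / 2 * ‖s'‖ ^ 2 ≤ (1 - τ) * (fy - fp + μ / 2 * ‖a‖ ^ 2) := by
  have e1 : y - x = τ • (x - a) := by rw [hy]; abel
  rw [e1, inner_smul_right, inner_sub_right] at h2
  rw [inner_neg_right] at h3
  have e2 : ‖s'‖ ^ 2 = (1 - τ) ^ 2 * ‖a‖ ^ 2 + τ ^ 2 * ‖x‖ ^ 2 + (τ / μ) ^ 2 * ‖g‖ ^ 2
      + 2 * (1 - τ) * τ * inner ℝ a x - 2 * (1 - τ) * (τ / μ) * inner ℝ g a
      - 2 * τ * (τ / μ) * inner ℝ g x := by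
    rw [hs, ← real_inner_self_eq_norm_sq, ← real_inner_self_eq_norm_sq,
      ← real_inner_self_eq_norm_sq, ← real_inner_self_eq_norm_sq]
    simp only [inner_sub_left, inner_sub_right, inner_add_left, inner_add_right,
      real_inner_smul_left, real_inner_smul_right]
    rw [real_inner_comm a x, real_inner_comm a g, real_inner_comm x g]
    ring
  have e3 : ‖a - x‖ ^ 2 = ‖a‖ ^ 2 - 2 * inner ℝ a x + ‖x‖ ^ 2 := norm_sub_sq_real a x
  have e4 : μ / 2 * ‖s'‖ ^ 2 = μ / 2 * ((1 - τ) * ‖a‖ ^ 2 + τ * ‖x‖ ^ 2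
      - τ * (1 - τ) * ‖a - x‖ ^ 2) - τ * ((1 - τ) * inner ℝ g a + τ * inner ℝ g x)
      + τ ^ 2 / (2 * μ) * ‖g‖ ^ 2 := by
    rw [e2, e3]; field_simp; ring
  have e5 : τ ^ 2 / (2 * μ) * ‖g‖ ^ 2 ≤ 1 / (2 * L) * ‖g‖ ^ 2 := by
    apply mul_le_mul_of_nonneg_right _ (by positivity)
    rw [div_le_div_iff₀ (by positivity) (by positivity)]
    linarith
  have e6 : 0 ≤ μ / 2 * (τ * (1 - τ) * ‖a - x‖ ^ 2) := by
    have : 0 ≤ 1 - τ := by linarith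
    positivity
  have e7 := mul_le_mul_of_nonneg_left h3 hτ0.le
  have e8 := mul_nonneg (sub_nonneg.2 hτ1) h2
  rw [e4]
  linarith

/-- Under the assumptions of the LONAG containment-and-convergence theorem,
the LONAG iterates satisfy φ(y_k) ≤ φ(y_{k−1}) ≤ ⋯ ≤ φ(y₀) and
φ(y_k) − φ(y*) ≤ (1 − τ)^k ℒ₀ for all k ≥ 0. -/
theorem stmt_15 (m : ℕ) (hm : 0 < m)
    (φ : EuclideanSpace ℝ (Fin m) → ℝ) (hφ : Differentiable ℝ φ)
    (Y : Set (EuclideanSpace ℝ (Fin m))) (hY : Convex ℝ Y)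
    (μ L : ℝ) (hμ : 0 < μ) (hμL : μ ≤ L)
    (hconv : ∀ y₁ ∈ Y, ∀ y₂ ∈ Y,
      μ / 2 * ‖y₁ - y₂‖ ^ 2 ≤ φ y₁ - φ y₂ - ⟪gradient φ y₂, y₁ - y₂⟫ ∧
      φ y₁ - φ y₂ - ⟪gradient φ y₂, y₁ - y₂⟫ ≤ L / 2 * ‖y₁ - y₂‖ ^ 2)
    (hgradbd : ∀ y₁ ∈ Y, ∀ y₂ ∈ Y,
      μ * ‖y₁ - y₂‖ ≤ ‖gradient φ y₁ - gradient φ y₂‖ ∧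
      ‖gradient φ y₁ - gradient φ y₂‖ ≤ L * ‖y₁ - y₂‖)
    (ystar : EuclideanSpace ℝ (Fin m)) (hystar : ystar ∈ Y)
    (hmin : ∀ v ∈ Y, φ ystar ≤ φ v)
    (huniq : ∀ v ∈ Y, φ v = φ ystar → v = ystar)
    (hgrad0 : gradient φ ystar = 0)
    (κ : ℝ) (hκ : κ = L / μ)
    (τ : ℝ) (hτ0 : 0 < τ) (hτ : τ ≤ κ ^ (-(1/2 : ℝ)))
    (y ybar s : ℕ → EuclideanSpace ℝ (Fin m))
    (L0 R1 R2 : ℝ)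
    (hL0 : L0 = φ (y 0) - φ ystar + μ / 2 * ‖s 0 - ystar‖ ^ 2)
    (hR1 : R1 = Real.sqrt (2 * L0 / μ))
    (hR2 : R2 = max (2 * R1) ((1 + τ * κ) * R1))
    (hs0 : ‖s 0 - ystar‖ ≤ R1)
    (hlev : {v : EuclideanSpace ℝ (Fin m) | φ v ≤ φ (y 0)} ⊆
      {v | ‖v - ystar‖ ≤ R1})
    (hB12 : {v : EuclideanSpace ℝ (Fin m) | ‖v - ystar‖ ≤ R1} ⊆
      {v | ‖v - ystar‖ ≤ R2})
    (hB2Y : {v : EuclideanSpace ℝ (Fin m) | ‖v - ystar‖ ≤ R2} ⊆ Y)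
    (hrec1 : ∀ k, ybar k = (1 + τ)⁻¹ • (y k + τ • s k))
    (hrec2 : ∀ k, s (k+1) = (1 - τ) • s k + τ • ybar k - (τ / μ) • gradient φ (ybar k))
    (hrec3 : ∀ k, y (k+1) ∈
        (Submodule.span ℝ {y k, ybar k, gradient φ (ybar k)} :
          Submodule ℝ (EuclideanSpace ℝ (Fin m))) ∧
      ∀ v ∈ (Submodule.span ℝ {y k, ybar k, gradient φ (ybar k)} :
          Submodule ℝ (EuclideanSpace ℝ (Fin m))),
        φ (y (k+1)) ≤ φ v) :
    (∀ k, φ (y (k+1)) ≤ φ (y k)) ∧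
    ∀ k : ℕ, φ (y k) - φ ystar ≤ (1 - τ) ^ k * L0 := by
  have hL : 0 < L := hμ.trans_le hμL
  have hκ1 : 1 ≤ κ := by rw [hκ, le_div_iff₀ hμ]; linarith
  have hκ0 : 0 < κ := by linarith
  have hτ2 : τ ^ 2 ≤ κ⁻¹ := by
    calc τ ^ 2 ≤ (κ ^ (-(1/2 : ℝ))) ^ 2 := by gcongr
      _ = κ⁻¹ := by
        rw [← Real.rpow_natCast, ← Real.rpow_mul hκ0.le, ← Real.rpow_neg_one]
        norm_num
  have hτL : τ ^ 2 * L ≤ μ := by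
    rw [hκ, inv_div, le_div_iff₀ hL] at hτ2
    exact hτ2
  have hτ1 : τ ≤ 1 := by
    have : κ⁻¹ ≤ 1 := inv_le_one_of_one_le₀ hκ1
    nlinarith
  have hmono : ∀ k, φ (y (k+1)) ≤ φ (y k) := fun k =>
    (hrec3 k).2 _ (Submodule.subset_span (by simp))
  have hmono0 : ∀ k, φ (y k) ≤ φ (y 0) := by
    intro k
    induction k with
    | zero => exact le_rfl
    | succ k ih => exact (hmono k).trans ih
  have hR1Y : ∀ v, ‖v - ystar‖ ≤ R1 → v ∈ Y := fun v hv => hB2Y (hB12 hv)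
  have hyR : ∀ k, ‖y k - ystar‖ ≤ R1 := fun k => hlev (hmono0 k)
  have hypos : ∀ k, 0 ≤ φ (y k) - φ ystar := fun k =>
    sub_nonneg.2 (hmin _ (hR1Y _ (hyR k)))
  have hL0n : 0 ≤ L0 := by
    rw [hL0]
    have := hypos 0
    positivity
  have hR1n : 0 ≤ R1 := by rw [hR1]; positivity
  have key : ∀ k, φ (y k) - φ ystar + μ / 2 * ‖s k - ystar‖ ^ 2 ≤ (1 - τ) ^ k * L0 := by
    intro k
    induction k with
    | zero => simp [hL0]
    | succ k ih =>
      have hle : (1 - τ) ^ k * L0 ≤ L0 :=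
        mul_le_of_le_one_left hL0n (pow_le_one₀ (by linarith) (by linarith))
      have hsR : ‖s k - ystar‖ ≤ R1 := by
        rw [hR1]
        apply Real.le_sqrt_of_sq_le
        rw [le_div_iff₀ hμ]
        have := hypos k
        linarith
      have hbar : ybar k - ystar = (1 + τ)⁻¹ • ((y k - ystar) + τ • (s k - ystar)) := by
        have h1τ : (1 + τ) ≠ 0 := by positivity
        rw [hrec1 k]
        have : ystar = (1 + τ)⁻¹ • ((1 + τ) • ystar) := by
          rw [smul_smul, inv_mul_cancel₀ h1τ, one_smul]
        nth_rewrite 1 [this]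
        module
      have hbR : ‖ybar k - ystar‖ ≤ R1 := by
        rw [hbar, norm_smul, Real.norm_of_nonneg (by positivity), inv_mul_le_iff₀ (by positivity)]
        calc _ ≤ ‖y k - ystar‖ + ‖τ • (s k - ystar)‖ := norm_add_le _ _
          _ = ‖y k - ystar‖ + τ * ‖s k - ystar‖ := by
            rw [norm_smul, Real.norm_of_nonneg hτ0.le]
          _ ≤ R1 + τ * R1 := by gcongr; exact hyR k
          _ = _ := by ring
      have hbY := hR1Y _ hbR
      set g := gradient φ (ybar k) with hg
      have hgn : ‖g‖ ≤ L * R1 := by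
        have := (hgradbd _ hbY _ hystar).2
        rw [hgrad0, sub_zero] at this
        exact this.trans (by gcongr)
      have hpY : ybar k - (1 / L) • g ∈ Y := by
        apply hB2Y
        show ‖ybar k - (1 / L) • g - ystar‖ ≤ R2
        have e : ybar k - (1 / L) • g - ystar = (ybar k - ystar) - (1 / L) • g := by abel
        have h1 : ‖(1 / L) • g‖ ≤ R1 := by
          rw [norm_smul, Real.norm_of_nonneg (by positivity), one_div, inv_mul_le_iff₀ hL]
          exact hgn
        have h2 : 2 * R1 ≤ R2 := by rw [hR2]; exact le_max_left _ _
        rw [e]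
        have := norm_sub_le (ybar k - ystar) ((1 / L) • g)
        linarith
      have hdesc : φ (y (k+1)) ≤ φ (ybar k) - 1 / (2 * L) * ‖g‖ ^ 2 := by
        have h1 : φ (y (k+1)) ≤ φ (ybar k - (1 / L) • g) := by
          apply (hrec3 k).2
          apply Submodule.sub_mem
          · exact Submodule.subset_span (by simp)
          · exact Submodule.smul_mem _ _ (Submodule.subset_span (by simp [hg]))
        have h2 := (hconv _ hpY _ hbY).2
        have e : ybar k - (1 / L) • g - ybar k = (-(1 / L)) • g := by module
        rw [e, ← hg, real_inner_smul_right, real_inner_self_eq_norm_sq, norm_smul, mul_pow,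
          Real.norm_eq_abs, sq_abs] at h2
        have e2 : L / 2 * ((-(1 / L)) ^ 2 * ‖g‖ ^ 2) + -(1 / L) * ‖g‖ ^ 2
            = - (1 / (2 * L) * ‖g‖ ^ 2) := by field_simp; ring
        linarith
      have hA := (hconv _ (hR1Y _ (hyR k)) _ hbY).1
      have hB := (hconv _ hystar _ hbY).1
      have hstep := lonag_step (s k - ystar) (ybar k - ystar) (y k - ystar) g (s (k+1) - ystar)
        μ L τ (φ (y k)) (φ (ybar k)) (φ ystar) (φ (y (k+1))) hμ hL hτ0 hτ1 hτL
        (by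
          have : (1 + τ) • (ybar k - ystar) = (y k - ystar) + τ • (s k - ystar) := by
            rw [hbar, smul_smul, mul_inv_cancel₀ (by positivity), one_smul]
          have h := eq_sub_of_add_eq this.symm
          rw [h]
          module)
        (by rw [hrec2 k]; module) hdesc
        (by
          rw [sub_sub_sub_cancel_right]
          have : 0 ≤ μ / 2 * ‖y k - ybar k‖ ^ 2 := by positivity
          linarith)
        (by rw [neg_sub, norm_sub_rev]; exact hB)
      calc _ ≤ _ := hstep
        _ ≤ (1 - τ) * ((1 - τ) ^ k * L0) := by
          apply mul_le_mul_of_nonneg_left ih; linarith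
        _ = _ := by ring
  refine ⟨hmono, fun k => ?_⟩
  have h := key k
  have : 0 ≤ μ / 2 * ‖s k - ystar‖ ^ 2 := by positivity
  linarith
end

section
/- For any x ∈ ℝⁿ, ψ†(QᵀMx) = (q + (I − qqᵀM)x)/‖q + (I − qqᵀM)x‖_M. -/
open Matrix

noncomputable def Mnorm {n : ℕ} (M : Matrix (Fin n) (Fin n) ℝ) (x : Fin n → ℝ) : ℝ :=
  Real.sqrt (x ⬝ᵥ (M *ᵥ x))

noncomputable def Rq {n : ℕ} (A M : Matrix (Fin n) (Fin n) ℝ) (x : Fin n → ℝ) : ℝ :=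
  (x ⬝ᵥ (A *ᵥ x)) / (x ⬝ᵥ (M *ᵥ x))

/-- ψ(x) = QᵀMx / (qᵀMx) -/
noncomputable def psiMap {n m : ℕ} (M : Matrix (Fin n) (Fin n) ℝ) (q : Fin n → ℝ)
    (Q : Matrix (Fin n) (Fin m) ℝ) (x : Fin n → ℝ) : Fin m → ℝ :=
  (q ⬝ᵥ (M *ᵥ x))⁻¹ • ((Qᵀ * M) *ᵥ x)

/-- ψ†(y) = (Qy + q)/‖Qy + q‖_M -/
noncomputable def psiDag {n m : ℕ} (M : Matrix (Fin n) (Fin n) ℝ) (q : Fin n → ℝ)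
    (Q : Matrix (Fin n) (Fin m) ℝ) (y : Fin m → ℝ) : Fin n → ℝ :=
  (Mnorm M (Q *ᵥ y + q))⁻¹ • (Q *ᵥ y + q)

/-- The hemisphere S₊ = {x : ‖x‖_M = 1, qᵀMx > 0}. -/
def Splus {n : ℕ} (M : Matrix (Fin n) (Fin n) ℝ) (q : Fin n → ℝ) : Set (Fin n → ℝ) :=
  {x | Mnorm M x = 1 ∧ 0 < q ⬝ᵥ (M *ᵥ x)}

/-- X = {x ∈ S₊ : Rq(x) ≤ Rq(q)}. -/
def Xset {n : ℕ} (A M : Matrix (Fin n) (Fin n) ℝ) (q : Fin n → ℝ) : Set (Fin n → ℝ) :=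
  {x | x ∈ Splus M q ∧ Rq A M x ≤ Rq A M q}

/-- For any x ∈ ℝⁿ, ψ†(QᵀMx) = (q + (I − qqᵀM)x)/‖q + (I − qqᵀM)x‖_M. -/
theorem stmt_16 (n : ℕ)
    (M : Matrix (Fin (n+2)) (Fin (n+2)) ℝ) (hM : M.PosDef)
    (q : Fin (n+2) → ℝ) (Q : Matrix (Fin (n+2)) (Fin (n+1)) ℝ)
    (hq1 : q ⬝ᵥ (M *ᵥ q) = 1)
    (hQMQ : Qᵀ * M * Q = 1)
    (hQMq : (Qᵀ * M) *ᵥ q = 0)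
    :
    ∀ x : Fin (n+2) → ℝ,
      psiDag M q Q ((Qᵀ * M) *ᵥ x) =
        (Mnorm M (q + ((1 - vecMulVec q (q ᵥ* M)) *ᵥ x)))⁻¹ •
          (q + ((1 - vecMulVec q (q ᵥ* M)) *ᵥ x)) := by
  intro x
  have hsym : Mᵀ = M := by
    have := hM.isHermitian
    rwa [Matrix.IsHermitian, Matrix.conjTranspose_eq_transpose_of_trivial] at this
  have hqMQ : (q ᵥ* M) ᵥ* Q = 0 := by
    have h := hQMq
    rw [← Matrix.mulVec_mulVec, Matrix.mulVec_transpose] at h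
    rwa [← Matrix.mulVec_transpose M q, hsym]
  let C : Matrix (Fin (n+2)) Unit ℝ := replicateCol Unit q
  let R : Matrix Unit (Fin (n+2)) ℝ := replicateRow Unit (q ᵥ* M)
  have h1 : fromRows (Qᵀ * M) R * fromCols Q C = 1 := by
    rw [Matrix.fromRows_mul_fromCols, hQMQ, ← Matrix.fromBlocks_one]
    congr 1
    · ext i j
      have := congrFun hQMq i
      simpa [C, Matrix.mul_apply, Matrix.mulVec, dotProduct] using this
    · ext i j
      have := congrFun hqMQ j
      simpa [R, Matrix.mul_apply, Matrix.vecMul, dotProduct] using this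
    · ext i j
      have := hq1
      rw [Matrix.dotProduct_mulVec] at this
      simpa [R, C, Matrix.mul_apply, dotProduct] using this
  have h2 : fromCols Q C * fromRows (Qᵀ * M) R = 1 := by
    refine (Matrix.mul_eq_one_comm_of_card_eq _ _ _ ?_).mp h1
    simp
  rw [Matrix.fromCols_mul_fromRows] at h2
  have h3 : C * R = vecMulVec q (q ᵥ* M) := by
    ext i j
    simp [C, R, Matrix.mul_apply, vecMulVec_apply]
  have h4 : Q *ᵥ ((Qᵀ * M) *ᵥ x) + q = q + ((1 - vecMulVec q (q ᵥ* M)) *ᵥ x) := by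
    rw [Matrix.mulVec_mulVec, ← h3, ← h2, add_sub_cancel_right]
    exact add_comm _ _
  rw [psiDag, h4]
end

section
/- Convergence of EIC. Let μ = μ_I > 0 and L = L_I be the strong convexity parameters of Theorem convexP with P = I, κ = L/μ, and 0 < τ ≤ κ^{−1/2}. Assume ρ_q satisfies λ₁ ≤ ρ_q ≤ λ₁ + (λ₂−λ₁)/(2+χ_I) and the initial vector x₀ ∈ X satisfies 0 ≤ Rq(x₀) − λ₁ ≤ (ρ_q − λ₁)/max{8κ, 2κ(1+τκ)²}, with z₀ = x₀. Generate for k ≥ 0: x̄_k = the M-normalization of x_k/(qᵀMx_k) + τ·z_k/(qᵀMz_k); r_k = 2(Ax̄_k − Rq(x̄_k)Mx̄_k); z_{k+1} = the M-normalization of (1−τ)z_k/(qᵀMz_k) + τ·x̄_k/(qᵀMx̄_k) − (τ(qᵀMx̄_k)/μ)·(I − qqᵀM)M⁻¹r_k; and x_{k+1} = the minimizer of Rq over X ∩ span{q, x_k, x̄_k, M⁻¹r_k}. Then Rq(x_k) ≤ Rq(x_{k−1}) ≤ … ≤ Rq(x₀), and Rq(x_k) − λ₁ ≤ 2(1−τ)^k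 (Rq(x₀) − λ₁) for all k ≥ 0. -/
open Matrix

/-- M-normalization v ↦ v/‖v‖_M. -/
noncomputable def Mnormalize {n : ℕ} (M : Matrix (Fin n) (Fin n) ℝ) (v : Fin n → ℝ) :
    Fin n → ℝ :=
  (Mnorm M v)⁻¹ • v

theorem eic_cs {V : Type*} [AddCommGroup V] [Module ℝ V] (b : V →ₗ[ℝ] V →ₗ[ℝ] ℝ)
    (hs : ∀ x y, b x y = b y x) (hp : ∀ x, 0 ≤ b x x) (x y : V) :
    (b x y) ^ 2 ≤ b x x * b y y := by
  have h : ∀ t : ℝ, 0 ≤ b y y * (t * t) + (2 * b x y) * t + b x x := by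
    intro t
    have := hp (x + t • y)
    simp only [map_add, LinearMap.add_apply, map_smul, LinearMap.smul_apply, smul_eq_mul] at this
    rw [hs y x] at this
    linarith
  have := discrim_le_zero h
  unfold discrim at this
  nlinarith

theorem eic_real {q0 v0 D s : ℝ} (hs0 : 0 ≤ s) (hs : 10 * s ≤ 1) (hD : 1 ≤ D)
    (h1 : 1 - q0 ^ 2 ≤ s) (h2 : D - v0 ^ 2 ≤ s * D) (h1' : 0 ≤ 1 - q0 ^ 2) (h2' : 0 ≤ D - v0 ^ 2)
    (hc : (1 - q0 * v0) ^ 2 ≤ (1 - q0 ^ 2) * (D - v0 ^ 2)) : D * (1 - 4 * s) ≤ 1 := by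
  obtain ⟨R, hR, rfl⟩ : ∃ R : ℝ, 0 ≤ R ∧ D = R ^ 2 :=
    ⟨Real.sqrt D, Real.sqrt_nonneg _, (Real.sq_sqrt (by linarith)).symm⟩
  have a1 : (1 - q0 * v0) ^ 2 ≤ (s * R) ^ 2 := by
    calc _ ≤ _ := hc
      _ ≤ s * (s * R ^ 2) := mul_le_mul h1 h2 h2' hs0
      _ = _ := by ring
  have a2 := abs_le.mp (abs_le_of_sq_le_sq a1 (by positivity))
  have a3 : ((1 - s) * R) ^ 2 ≤ (q0 * v0) ^ 2 := by
    calc _ = (1 - s) * ((1 - s) * R ^ 2) := by ring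
      _ ≤ q0 ^ 2 * v0 ^ 2 := mul_le_mul (by linarith) (by linarith) (by nlinarith [sq_nonneg R]) (sq_nonneg _)
      _ = _ := by ring
  have a4 : (1 - s) * R ≤ |q0 * v0| := by
    have := sq_le_sq.mp a3
    exact le_trans (le_abs_self _) this
  have a5 : (1 - 2 * s) * R ≤ 1 := by
    rcases abs_cases (q0 * v0) with ⟨h, _⟩ | ⟨h, _⟩
    · rw [h] at a4; linarith [a2.1]
    · rw [h] at a4
      have : 0 ≤ (1 - 2 * s) * R := mul_nonneg (by linarith) hR
      nlinarith [a2.2]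
  have a6 : 0 ≤ (1 - 2 * s) * R := mul_nonneg (by linarith) hR
  have a7 : ((1 - 2 * s) * R) ^ 2 ≤ 1 := by nlinarith
  nlinarith [sq_nonneg (s * R)]

structure EicSet {V : Type*} [AddCommGroup V] [Module ℝ V] (a m : V →ₗ[ℝ] V →ₗ[ℝ] ℝ)
    (q u : V) (l1 gap δ xmin xmax C : ℝ) : Prop where
  sa : ∀ x y, a x y = a y x
  sm : ∀ x y, m x y = m y x
  pm : ∀ x, 0 ≤ m x x
  qq : m q q = 1
  uu : m u u = 1
  qu : 0 < m q u
  au : ∀ v, a u v = l1 * m u v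
  l1pos : 0 < l1
  gpos : 0 < gap
  hgap : ∀ v, gap * (m v v - (m u v) ^ 2) ≤ a v v - l1 * m v v
  lo : ∀ d, m q d = 0 → xmin * m d d ≤ a d d
  hi : ∀ d, m q d = 0 → a d d ≤ xmax * m d d
  aq : a q q = l1 + δ
  d0 : 0 ≤ δ
  d10 : 10 * δ ≤ gap
  xl : l1 ≤ xmin
  xd : δ ≤ xmax
  xx : xmin ≤ xmax
  C0 : 0 ≤ C
  hC : 64 * δ ^ 2 * xmax ≤ C ^ 2 * gap

namespace EicSet
variable {V : Type*} [AddCommGroup V] [Module ℝ V] {a m : V →ₗ[ℝ] V →ₗ[ℝ] ℝ}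
    {q u : V} {l1 gap δ xmin xmax C : ℝ}

theorem D1 (S : EicSet a m q u l1 gap δ xmin xmax C) {v : V} (hv : m q v = 1) : 1 ≤ m v v := by
  have := eic_cs m S.sm S.pm q v
  rw [hv, S.qq] at this; linarith

theorem u2 (S : EicSet a m q u l1 gap δ xmin xmax C) (v : V) : (m u v) ^ 2 ≤ m v v := by
  have := eic_cs m S.sm S.pm u v
  rw [S.uu] at this; linarith

theorem al (S : EicSet a m q u l1 gap δ xmin xmax C) (v : V) : l1 * m v v ≤ a v v := by
  have h1 := S.hgap v
  have h2 := S.u2 v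
  have := mul_nonneg S.gpos.le (sub_nonneg.mpr h2)
  linarith

theorem Dle (S : EicSet a m q u l1 gap δ xmin xmax C) {v : V} (hv : m q v = 1)
    (hf : a v v ≤ (l1 + δ) * m v v) : m v v * (1 - 4 * (δ / gap)) ≤ 1 := by
  have g := S.gpos
  have hsm := S.sm
  refine eic_real (q0 := m u q) (v0 := m u v) (div_nonneg S.d0 g.le) ?_ (S.D1 hv) ?_ ?_ ?_ ?_ ?_
  · rw [mul_div_assoc', div_le_one g]; exact S.d10
  · have := S.hgap q
    rw [S.aq, S.qq] at this
    rw [le_div_iff₀ g]; linarith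
  · have := S.hgap v
    rw [div_mul_eq_mul_div, le_div_iff₀ g]; linarith
  · have := S.u2 q; rw [S.qq] at this; linarith
  · have := S.u2 v; linarith
  · have := eic_cs m S.sm S.pm (q - m u q • u) (v - m u v • u)
    simp only [map_sub, LinearMap.sub_apply, map_smul, LinearMap.smul_apply, smul_eq_mul, S.uu, hv, S.qq,
      hsm q u, hsm v u] at this
    calc _ = (1 - m u q * m u v - (m u v * m u q - m u v * (m u q * 1))) ^ 2 := by ring
      _ ≤ _ := by convert this using 2 <;> ring
      _ = _ := by ring

theorem y2 (S : EicSet a m q u l1 gap δ xmin xmax C) {v : V} (hv : m q v = 1)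
    (hf : a v v ≤ (l1 + δ) * m v v) : 3 * (m v v - 1) * gap ≤ 20 * δ := by
  have h := S.Dle hv hf
  have g := S.gpos
  have h' : m v v * (gap - 4 * δ) ≤ gap := by
    have := mul_le_mul_of_nonneg_left h g.le
    have e : gap * (m v v * (1 - 4 * (δ / gap))) = m v v * (gap - 4 * δ) := by field_simp
    linarith
  have h1 := S.D1 hv
  have : 3 * m v v ≤ 5 := by nlinarith [S.d10]
  nlinarith [S.d0]

set_option maxHeartbeats 1000000 in
theorem cross (S : EicSet a m q u l1 gap δ xmin xmax C) {v w : V} {f : ℝ} (hv : m q v = 1)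
    (hw : m q w = 1) (hfe : a v v = f * m v v) (hf : f ≤ l1 + δ / 4)
    (hfw : a w w ≤ (l1 + δ) * m w w) (t : ℝ)
    (ht : m v v * t = 2 * (a v (w - v) - f * m v (w - v))) :
    |(m w w - m v v) * t| ≤ C * m (w - v) (w - v) := by
  have hfv : a v v ≤ (l1 + δ) * m v v := by
    rw [hfe]; exact mul_le_mul_of_nonneg_right (by linarith [S.d0]) (S.pm v)
  have hD := S.D1 hv
  have y1 := S.y2 hv hfv
  have y2 := S.y2 hw hfw
  have g := S.gpos
  have hδ := S.d0
  have hf1 : l1 ≤ f := by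
    have := S.al v; rw [hfe] at this
    exact le_of_mul_le_mul_right this (by linarith)
  have hsm := S.sm
  have hsa := S.sa
  set d := w - v with hd
  have hqd : m q d = 0 := by rw [hd, map_sub, hv, hw, sub_self]
  have hN := S.pm d
  set N := m d d with hNdef
  have hx : 0 < xmax := by linarith [S.l1pos, S.xl, S.xx]
  -- first factor
  have e1 : (m w w - m v v) = m ((v - q) + (w - q)) d := by
    simp only [map_add, LinearMap.add_apply, map_sub, LinearMap.sub_apply, hqd]
    simp only [hd, map_sub, hsm w v]; ring
  have f1 : gap * (m w w - m v v) ^ 2 ≤ 80 / 3 * δ * N := by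
    have c1 := eic_cs m S.sm S.pm (v - q) d
    have c2 := eic_cs m S.sm S.pm (w - q) d
    have k1 : m (v - q) (v - q) = m v v - 1 := by
      simp only [map_sub, LinearMap.sub_apply, hsm v q, hv, S.qq]; ring
    have k2 : m (w - q) (w - q) = m w w - 1 := by
      simp only [map_sub, LinearMap.sub_apply, hsm w q, hw, S.qq]; ring
    rw [k1] at c1; rw [k2] at c2
    have e2 : m w w - m v v = m (v - q) d + m (w - q) d := by
      rw [e1, map_add, LinearMap.add_apply]
    rw [e2]
    have : (m (v - q) d + m (w - q) d) ^ 2 ≤ 2 * ((m v v - 1) * N) + 2 * ((m w w - 1) * N) := by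
      nlinarith [sq_nonneg (m (v - q) d - m (w - q) d)]
    have h3 := mul_le_mul_of_nonneg_left this g.le
    have h4 := mul_le_mul_of_nonneg_right y1 hN
    have h5 := mul_le_mul_of_nonneg_right y2 hN
    nlinarith
  -- gradient
  have f2 : t ^ 2 ≤ 9 / 4 * δ * xmax * N := by
    let b := a - l1 • m
    have bx : ∀ x y, b x y = a x y - l1 * m x y := fun x y => by
      simp [b]
    have c1 := eic_cs b (fun x y => by rw [bx, bx, hsa x y, hsm x y])
      (fun x => by rw [bx]; linarith [S.al x]) v d
    rw [bx, bx, bx, hfe] at c1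
    have c2 := eic_cs m S.sm S.pm (v - q) d
    have k1 : m (v - q) (v - q) = m v v - 1 := by
      simp only [map_sub, LinearMap.sub_apply, hsm v q, hv, S.qq]; ring
    have k2 : m (v - q) d = m v d := by
      simp only [map_sub, LinearMap.sub_apply, hqd]; ring
    rw [k1, k2] at c2
    set X := a v d - l1 * m v d
    set Y := m v d
    have hdd := S.hi d hqd
    have hdl := S.al d
    have c3 : X ^ 2 ≤ δ * m v v * xmax * N / 4 := by
      have p1 : f * m v v - l1 * m v v ≤ δ / 4 * m v v := by nlinarith
      have p2 : a d d - l1 * m d d ≤ xmax * N := by nlinarith [S.l1pos]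
      have := mul_le_mul p1 p2 (by linarith) (by positivity)
      linarith
    have c4 : ((f - l1) * Y) ^ 2 ≤ δ * m v v * xmax * N / 16 := by
      have p0 : (f - l1) ^ 2 ≤ δ * xmax / 16 := by nlinarith [S.xd]
      have p1 : Y ^ 2 ≤ m v v * N := by nlinarith
      have := mul_le_mul p0 p1 (sq_nonneg _) (by positivity)
      calc _ = (f - l1) ^ 2 * Y ^ 2 := by ring
        _ ≤ _ := this
        _ = _ := by ring
    have e3 : m v v * t = 2 * (X - (f - l1) * Y) := by rw [ht]; simp only [X, Y]; ring
    have c5 : (m v v * t) ^ 2 ≤ m v v * (9 / 4 * δ * xmax * N) := by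
      rw [e3]
      have := sq_nonneg (X + 2 * ((f - l1) * Y))
      linarith
    have c6 : m v v * t ^ 2 ≤ (m v v * t) ^ 2 / m v v := by
      rw [le_div_iff₀ (by linarith)]; apply le_of_eq; ring
    have c7 : (m v v * t) ^ 2 / m v v ≤ 9 / 4 * δ * xmax * N := by
      rw [div_le_iff₀ (by linarith)]; linarith
    nlinarith [sq_nonneg t]
  apply abs_le_of_sq_le_sq _ (mul_nonneg S.C0 hN)
  have f3 := mul_le_mul f1 f2 (sq_nonneg _) (by positivity)
  have f4 := mul_le_mul_of_nonneg_right S.hC (sq_nonneg N)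
  have f5 : 0 ≤ δ ^ 2 * xmax * N ^ 2 := by positivity
  refine le_of_mul_le_mul_left (a := gap) ?_ g
  linarith

theorem ident (S : EicSet a m q u l1 gap δ xmin xmax C) {v w : V} {f f' t : ℝ}
    (hfe : a v v = f * m v v) (hfw : a w w = f' * m w w)
    (ht : m v v * t = 2 * (a v (w - v) - f * m v (w - v))) :
    m w w * (f' - f - t) = a (w - v) (w - v) - f * m (w - v) (w - v) - (m w w - m v v) * t := by
  have hsm := S.sm
  have hsa := S.sa
  simp only [map_sub, LinearMap.sub_apply, hsm w v, hsa w v] at *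
  linarith

theorem strong (S : EicSet a m q u l1 gap δ xmin xmax C) {v w : V} {f f' t T μ : ℝ} (hv : m q v = 1)
    (hw : m q w = 1) (hfe : a v v = f * m v v) (hf : f ≤ l1 + δ / 4)
    (hfw : a w w = f' * m w w) (hf' : f' ≤ l1 + δ)
    (ht : m v v * t = 2 * (a v (w - v) - f * m v (w - v)))
    (hT : T ≤ xmin - (l1 + δ) - C) (hT0 : 0 ≤ T) (hμ : μ / 2 ≤ (1 - 4 * (δ / gap)) * T) :
    f + t + μ / 2 * m (w - v) (w - v) ≤ f' := by
  have hle : a w w ≤ (l1 + δ) * m w w := by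
    rw [hfw]; exact mul_le_mul_of_nonneg_right hf' (S.pm w)
  have hc := (abs_le.mp (S.cross hv hw hfe hf hle t ht)).2
  have hi := S.ident hfe hfw ht
  have hD := S.D1 hw
  have hDl := S.Dle hw hle
  have hqd : m q (w - v) = 0 := by rw [map_sub, hv, hw, sub_self]
  have hlo := S.lo _ hqd
  have hN := S.pm (w - v)
  set N := m (w - v) (w - v)
  have h1 : T * N ≤ m w w * (f' - f - t) := by
    rw [hi]
    have := mul_le_mul_of_nonneg_right hT hN
    have := mul_le_mul_of_nonneg_right (show f ≤ l1 + δ by linarith [S.d0]) hN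
    linarith
  have h2 : m w w * (μ / 2 * N) ≤ T * N := by
    have p1 : m w w * (μ / 2) ≤ m w w * ((1 - 4 * (δ / gap)) * T) :=
      mul_le_mul_of_nonneg_left hμ (by linarith)
    have p2 := mul_le_mul_of_nonneg_right hDl hT0
    have p3 : m w w * (μ / 2) ≤ T := by linarith
    have := mul_le_mul_of_nonneg_right p3 hN
    linarith
  have h3 : μ / 2 * N ≤ f' - f - t := le_of_mul_le_mul_left (h2.trans h1) (by linarith)
  linarith

theorem smooth (S : EicSet a m q u l1 gap δ xmin xmax C) {v w : V} {f f' t L : ℝ} (hv : m q v = 1)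
    (hw : m q w = 1) (hfe : a v v = f * m v v) (hf : f ≤ l1 + δ / 4)
    (hfw : a w w = f' * m w w) (hf' : f' ≤ l1 + δ)
    (ht : m v v * t = 2 * (a v (w - v) - f * m v (w - v)))
    (hL : xmax - l1 + C ≤ L / 2) :
    f' ≤ f + t + L / 2 * m (w - v) (w - v) := by
  have hle : a w w ≤ (l1 + δ) * m w w := by
    rw [hfw]; exact mul_le_mul_of_nonneg_right hf' (S.pm w)
  have hc := (abs_le.mp (S.cross hv hw hfe hf hle t ht)).1
  have hi := S.ident hfe hfw ht
  have hD := S.D1 hw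
  have hqd : m q (w - v) = 0 := by rw [map_sub, hv, hw, sub_self]
  have hhi := S.hi _ hqd
  have hN := S.pm (w - v)
  have hf1 : l1 ≤ f := by
    have := S.al v; rw [hfe] at this
    exact le_of_mul_le_mul_right this (by linarith [S.D1 hv])
  set N := m (w - v) (w - v)
  have hL0 : 0 ≤ L / 2 := by linarith [S.C0, S.xl, S.xx]
  have h1 : m w w * (f' - f - t) ≤ L / 2 * N := by
    rw [hi]
    have := mul_le_mul_of_nonneg_right hL hN
    have := mul_le_mul_of_nonneg_right hf1 hN
    linarith
  have h2 : L / 2 * N ≤ m w w * (L / 2 * N) := le_mul_of_one_le_left (mul_nonneg hL0 hN) hD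
  have h3 : f' - f - t ≤ L / 2 * N := le_of_mul_le_mul_left (h1.trans h2) (by linarith)
  linarith

set_option maxHeartbeats 1000000 in
theorem main (S : EicSet a m q u l1 gap δ xmin xmax C) {T μ L τ : ℝ}
    (hT : T ≤ xmin - (l1 + δ) - C) (hT0 : 0 ≤ T) (hμ : μ / 2 ≤ (1 - 4 * (δ / gap)) * T)
    (hL : xmax - l1 + C ≤ L / 2) (hμ0 : 0 < μ) (hL0 : 0 < L)
    (hτ0 : 0 < τ) (hτ1 : τ ≤ 1) (hτ : τ ^ 2 * L ≤ μ)
    (p w pb G : ℕ → V) (f fb : ℕ → ℝ)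
    (hp : ∀ k, m q (p k) = 1) (hf : ∀ k, a (p k) (p k) = f k * m (p k) (p k))
    (hfb : ∀ k, a (pb k) (pb k) = fb k * m (pb k) (pb k))
    (hqG : ∀ k, m q (G k) = 0)
    (hG : ∀ k d, m q d = 0 → m (pb k) (pb k) * m (G k) d = 2 * (a (pb k) d - fb k * m (pb k) d))
    (hpb : ∀ k, (1 + τ) • pb k = p k + τ • w k)
    (hw : ∀ k, w (k + 1) = (1 - τ) • w k + τ • pb k - (τ / μ) • G k)
    (hw0 : w 0 = p 0) (hfρ : ∀ k, f k ≤ l1 + δ)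
    (hmin : ∀ k v f', m q v = 1 → a v v = f' * m v v → f' ≤ l1 + δ →
      v = pb k - (1 / L) • G k → f (k + 1) ≤ f')
    (hinit : 8 * L * (f 0 - l1) ≤ δ * μ) (k : ℕ) :
    f k - l1 ≤ 2 * (1 - τ) ^ k * (f 0 - l1) := by
  have hsm := S.sm
  have hsa := S.sa
  set s : V := (m q u)⁻¹ • u with hs
  have hqs : m q s = 1 := by
    rw [hs, map_smul, smul_eq_mul, inv_mul_cancel₀ S.qu.ne']
  have has : ∀ v, a s v = l1 * m s v := by
    intro v
    simp only [hs, map_smul, LinearMap.smul_apply, smul_eq_mul, S.au]; ring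
  have hl1f : ∀ v f', m q v = 1 → a v v = f' * m v v → l1 ≤ f' := by
    intro v f' h1 h2
    have := S.al v; rw [h2] at this
    exact le_of_mul_le_mul_right this (by linarith [S.D1 h1])
  -- strong convexity at the minimizer
  have hstr : ∀ j, μ / 2 * m (p j - s) (p j - s) ≤ f j - l1 := by
    intro j
    have := S.strong (t := 0) hqs (hp j) (has s) (by linarith [S.d0]) (hf j) (hfρ j)
      (by rw [has]; ring) hT hT0 hμ
    linarith
  have hup : ∀ v f', m q v = 1 → a v v = f' * m v v →
      f' - l1 ≤ L / 2 * m (v - s) (v - s) := by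
    intro v f' h1 h2
    have hi := S.ident (t := 0) (has s) h2 (by rw [has]; ring)
    have hqd : m q (v - s) = 0 := by rw [map_sub, h1, hqs, sub_self]
    have h3 := S.hi _ hqd
    have hN := S.pm (v - s)
    have hD := S.D1 h1
    have h4 := hl1f v f' h1 h2
    have h5 := mul_le_mul_of_nonneg_right hL hN
    have h6 := mul_nonneg S.C0 hN
    nlinarith
  set e0 := f 0 - l1 with he0
  have he00 : 0 ≤ e0 := by linarith [hl1f _ _ (hp 0) (hf 0)]
  -- Lyapunov
  have key : ∀ k, m q (w k) = 1 ∧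
      f k - l1 + μ / 2 * m (w k - s) (w k - s) ≤ 2 * (1 - τ) ^ k * e0 := by
    intro k
    induction k with
    | zero =>
      rw [hw0]
      refine ⟨hp 0, ?_⟩
      have := hstr 0
      simp only [pow_zero]; linarith
    | succ k ih =>
      obtain ⟨hqw, hE⟩ := ih
      have hpow : (1 - τ) ^ k ≤ 1 := pow_le_one₀ (by linarith) (by linarith)
      have hE2 : f k - l1 + μ / 2 * m (w k - s) (w k - s) ≤ 2 * e0 := by nlinarith
      have hqpb : m q (pb k) = 1 := by
        have := congrArg (m q) (hpb k)
        simp only [map_add, map_smul, smul_eq_mul, hp, hqw] at this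
        have h1 : (1 + τ) * (m q (pb k) - 1) = 0 := by linarith
        rcases mul_eq_zero.mp h1 with h | h <;> linarith
      have hpk : p k = (1 + τ) • pb k - τ • w k := by rw [hpb]; abel
      have hfk := hl1f _ _ (hp k) (hf k)
      have hNw := S.pm (w k - s)
      have hNp := S.pm (p k - s)
      have hNb := S.pm (pb k - s)
      have hconv : (1 + τ) * m (pb k - s) (pb k - s) ≤
          m (p k - s) (p k - s) + τ * m (w k - s) (w k - s) := by
        have h0 := S.pm (w k - pb k)
        have h1 : m (p k - s) (p k - s) + τ * m (w k - s) (w k - s) =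
          (1 + τ) * m (pb k - s) (pb k - s) + (τ + τ ^ 2) * m (w k - pb k) (w k - pb k) := by
          rw [hpk]
          simp only [map_add, LinearMap.add_apply, map_sub, LinearMap.sub_apply, map_smul,
            LinearMap.smul_apply, smul_eq_mul, hsm s, hsm (w k) (pb k)]
          ring
        rw [h1]
        have : 0 ≤ (τ + τ ^ 2) * m (w k - pb k) (w k - pb k) := by positivity
        linarith
      have hfbk : fb k ≤ l1 + δ / 4 := by
        have h1 := hup _ _ hqpb (hfb k)
        have h2 := hstr k
        have h3 : (1 + τ) * (μ / 2 * m (pb k - s) (pb k - s)) ≤ (1 + τ) * (2 * e0) := by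
          have : 0 ≤ μ / 2 * m (w k - s) (w k - s) := by positivity
          nlinarith
        have h4 : μ / 2 * m (pb k - s) (pb k - s) ≤ 2 * e0 := le_of_mul_le_mul_left h3 (by linarith)
        have h5 := mul_le_mul_of_nonneg_left h4 hL0.le
        have h6 := mul_le_mul_of_nonneg_left h1 hμ0.le
        have h7 : μ * (fb k - l1) ≤ μ * (δ / 4) := by nlinarith
        have := le_of_mul_le_mul_left h7 hμ0
        linarith
      have hfb1 := hl1f _ _ hqpb (hfb k)
      -- gradient step
      set gg := m (G k) (G k) with hgg
      have hgg0 : 0 ≤ gg := S.pm _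
      have hDb := S.D1 hqpb
      obtain ⟨v, hv⟩ : ∃ v, v = pb k - (1 / L) • G k := ⟨_, rfl⟩
      have hqv : m q v = 1 := by rw [hv, map_sub, map_smul, hqG, hqpb]; simp
      have hDv := S.D1 hqv
      obtain ⟨f', hf'⟩ : ∃ f', a v v = f' * m v v := ⟨a v v / m v v, by field_simp⟩
      have hvd : v - pb k = (-(1 / L)) • G k := by rw [hv]; module
      have hqd : m q (v - pb k) = 0 := by rw [map_sub, hqv, hqpb, sub_self]
      have hGd := hG k _ hqd
      have htt : m (G k) (v - pb k) = -(1 / L) * gg := by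
        rw [hvd, map_smul, smul_eq_mul]
      have hdd : m (v - pb k) (v - pb k) = (1 / L) ^ 2 * gg := by
        rw [hvd]; simp only [map_smul, LinearMap.smul_apply, smul_eq_mul]; ring
      have hf'1 : f' ≤ fb k := by
        have hi := S.ident (hfb k) hf' hGd
        have h1 := S.hi _ hqd
        rw [hdd] at h1 hi
        rw [htt] at hi
        have h2 : m v v * (f' - fb k) ≤ 0 := by
          have h3 : m v v * (f' - fb k) ≤ (xmax - fb k) * ((1 / L) ^ 2 * gg) - m (pb k) (pb k) * (1 / L * gg) := by
            linarith
          have h4 : 0 ≤ (1 / L) ^ 2 * gg := by positivity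
          have h5 : (xmax - fb k) * ((1 / L) ^ 2 * gg) ≤ L * ((1 / L) ^ 2 * gg) :=
            mul_le_mul_of_nonneg_right (by linarith [S.C0]) h4
          have h6 : L * ((1 / L) ^ 2 * gg) = 1 / L * gg := by field_simp
          have h7 : 1 / L * gg ≤ m (pb k) (pb k) * (1 / L * gg) :=
            le_mul_of_one_le_left (by positivity) hDb
          linarith
        by_contra hcon
        push Not at hcon
        have : 0 < m v v * (f' - fb k) := mul_pos (by linarith) (by linarith)
        linarith
      have hf'ρ : f' ≤ l1 + δ := by linarith [S.d0]
      have hsmo := S.smooth hqpb hqv (hfb k) hfbk hf' hf'ρ hGd hL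
      rw [htt, hdd] at hsmo
      have hnext := hmin k v f' hqv hf' hf'ρ hv
      have hdesc : f (k + 1) ≤ fb k - gg / (2 * L) := by
        have : -(1 / L) * gg + L / 2 * ((1 / L) ^ 2 * gg) = - (gg / (2 * L)) := by field_simp; ring
        linarith
      have hs1 := S.strong hqpb hqs (hfb k) hfbk (has s) (by linarith [S.d0])
        (hG k (s - pb k) (by rw [map_sub, hqs, hqpb, sub_self])) hT hT0 hμ
      have hs2 := S.strong hqpb (hp k) (hfb k) hfbk (hf k) (hfρ k)
        (hG k (p k - pb k) (by rw [map_sub, hp, hqpb, sub_self])) hT hT0 hμ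
      have hs2' : fb k + m (G k) (p k - pb k) ≤ f k := by
        have := S.pm (p k - pb k)
        have : 0 ≤ μ / 2 * m (p k - pb k) (p k - pb k) := by positivity
        linarith
      refine ⟨by rw [hw]; simp only [map_add, map_sub, map_smul, smul_eq_mul, hqw, hqpb, hqG]; ring, ?_⟩
      have hexp : μ / 2 * m (w (k + 1) - s) (w (k + 1) - s) =
          (1 - τ) * (μ / 2 * m (w k - s) (w k - s)) + τ * (μ / 2 * m (s - pb k) (s - pb k))
          - μ / 2 * (τ * (1 - τ)) * m (w k - pb k) (w k - pb k)
          + (τ * m (G k) (s - pb k) + (1 - τ) * m (G k) (p k - pb k)) + τ ^ 2 / (2 * μ) * gg := by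
        rw [hw, hpk, hgg]
        simp only [map_add, LinearMap.add_apply, map_sub, LinearMap.sub_apply, map_smul,
            LinearMap.smul_apply, smul_eq_mul, hsm s, hsm (w k) (pb k), hsm (w k) (G k), hsm (pb k) (G k)]
        field_simp
        ring
      have hg2 : τ ^ 2 / (2 * μ) * gg ≤ gg / (2 * L) := by
        have : τ ^ 2 / (2 * μ) ≤ 1 / (2 * L) := by
          rw [div_le_div_iff₀ (by positivity) (by positivity)]; linarith
        calc _ ≤ 1 / (2 * L) * gg := mul_le_mul_of_nonneg_right this hgg0
          _ = _ := by ring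
      have h1 := mul_le_mul_of_nonneg_left hs1 hτ0.le
      have h2 := mul_le_mul_of_nonneg_left hs2' (sub_nonneg.mpr hτ1)
      have h3 : 0 ≤ μ / 2 * (τ * (1 - τ)) * m (w k - pb k) (w k - pb k) := by
        have := S.pm (w k - pb k)
        have : 0 ≤ 1 - τ := by linarith
        positivity
      have h4 := mul_le_mul_of_nonneg_left hE (sub_nonneg.mpr hτ1)
      rw [hexp, pow_succ (1 - τ) k]
      linarith
  have h := (key k).2
  have := S.pm (w k - s)
  have : 0 ≤ μ / 2 * m (w k - s) (w k - s) := by positivity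
  linarith
end EicSet

theorem eic_expand {N : ℕ} (M : Matrix (Fin N) (Fin N) ℝ) (u : Fin N → Fin N → ℝ)
    (horth : ∀ i j, u i ⬝ᵥ (M *ᵥ u j) = if i = j then (1:ℝ) else 0) (v : Fin N → ℝ) :
    v = ∑ i, (u i ⬝ᵥ (M *ᵥ v)) • u i := by
  let U : Matrix (Fin N) (Fin N) ℝ := Matrix.of (fun i j => u j i)
  have hcol : ∀ j, U *ᵥ Pi.single j 1 = u j := by
    intro j; ext i; simp [U]
  have h : (Uᵀ * M) * U = 1 := by
    ext i j
    rw [Matrix.mul_assoc, Matrix.one_apply, ← horth i j]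
    rw [Matrix.mul_apply]
    simp only [dotProduct]
    refine Finset.sum_congr rfl fun k _ => ?_
    simp [U, Matrix.mul_apply, Matrix.mulVec, dotProduct]
  have h2 : U * (Uᵀ * M) = 1 := mul_eq_one_comm.mp h
  have h3 : v = U *ᵥ ((Uᵀ * M) *ᵥ v) := by rw [Matrix.mulVec_mulVec, h2, Matrix.one_mulVec]
  conv_lhs => rw [h3]
  ext i
  rw [← Matrix.mulVec_mulVec]
  simp only [Matrix.mulVec, dotProduct, U, Matrix.of_apply, Matrix.transpose_apply, Finset.sum_apply,
    Pi.smul_apply, smul_eq_mul]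
  refine Finset.sum_congr rfl fun k _ => ?_
  ring

theorem eic_expand2 {N : ℕ} (A M : Matrix (Fin N) (Fin N) ℝ) (u : Fin N → Fin N → ℝ) (lam : Fin N → ℝ)
    (hA : Aᵀ = A) (hM : Mᵀ = M)
    (heig : ∀ i, A *ᵥ u i = lam i • (M *ᵥ u i))
    (horth : ∀ i j, u i ⬝ᵥ (M *ᵥ u j) = if i = j then (1:ℝ) else 0) (v : Fin N → ℝ) :
    v ⬝ᵥ (M *ᵥ v) = ∑ i, (u i ⬝ᵥ (M *ᵥ v)) ^ 2 ∧
    v ⬝ᵥ (A *ᵥ v) = ∑ i, lam i * (u i ⬝ᵥ (M *ᵥ v)) ^ 2 := by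
  have h := eic_expand M u horth v
  have hs : ∀ (K : Matrix (Fin N) (Fin N) ℝ), Kᵀ = K → ∀ x y, x ⬝ᵥ (K *ᵥ y) = (K *ᵥ x) ⬝ᵥ y := by
    intro K hK x y
    rw [Matrix.dotProduct_mulVec, ← Matrix.mulVec_transpose, hK]
  have h1 : ∀ w, v ⬝ᵥ w = ∑ i, (u i ⬝ᵥ (M *ᵥ v)) * (u i ⬝ᵥ w) := by
    intro w
    conv_lhs => rw [h]
    rw [sum_dotProduct]
    simp only [smul_dotProduct, smul_eq_mul]
  constructor
  · rw [h1]; exact Finset.sum_congr rfl fun i _ => by ring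
  · rw [h1]
    refine Finset.sum_congr rfl fun i _ => ?_
    rw [hs A hA, heig, smul_dotProduct, ← hs M hM, smul_eq_mul]; ring

theorem eic_rayleigh {N : ℕ} (B : Matrix (Fin N) (Fin N) ℝ) (hB : Bᵀ = B) (ximin ximax : ℝ)
    (hximin : IsLeast {ξ : ℝ | ∃ v : Fin N → ℝ, v ≠ 0 ∧ B *ᵥ v = ξ • v} ximin)
    (hximax : IsGreatest {ξ : ℝ | ∃ v : Fin N → ℝ, v ≠ 0 ∧ B *ᵥ v = ξ • v} ximax) (y : Fin N → ℝ) :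
    ximin * (y ⬝ᵥ y) ≤ y ⬝ᵥ (B *ᵥ y) ∧ y ⬝ᵥ (B *ᵥ y) ≤ ximax * (y ⬝ᵥ y) := by
  have hH : B.IsHermitian := by
    unfold Matrix.IsHermitian; rw [Matrix.conjTranspose_eq_transpose_of_trivial, hB]
  have horth : ∀ i j, (hH.eigenvectorBasis i : Fin N → ℝ) ⬝ᵥ
      ((1 : Matrix (Fin N) (Fin N) ℝ) *ᵥ (hH.eigenvectorBasis j : Fin N → ℝ)) =
      if i = j then (1:ℝ) else 0 := by
    intro i j
    rw [Matrix.one_mulVec]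
    have := orthonormal_iff_ite.mp hH.eigenvectorBasis.orthonormal i j
    rw [← this]
    simp [EuclideanSpace.inner_eq_star_dotProduct, dotProduct_comm]
  have hmem : ∀ i, hH.eigenvalues i ∈ {ξ : ℝ | ∃ v : Fin N → ℝ, v ≠ 0 ∧ B *ᵥ v = ξ • v} := by
    intro i
    refine ⟨_, ?_, hH.mulVec_eigenvectorBasis i⟩
    intro h0
    have := horth i i
    rw [h0] at this
    simp at this
  obtain ⟨h1, h2⟩ := eic_expand2 B 1 (fun i => (hH.eigenvectorBasis i : Fin N → ℝ)) hH.eigenvalues hB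
    (by simp) (fun i => by rw [Matrix.one_mulVec]; exact hH.mulVec_eigenvectorBasis i) horth y
  simp only [Matrix.one_mulVec] at h1 h2
  rw [h1, h2, Finset.mul_sum, Finset.mul_sum]
  exact ⟨Finset.sum_le_sum fun i _ => mul_le_mul_of_nonneg_right (hximin.2 (hmem i)) (sq_nonneg _),
    Finset.sum_le_sum fun i _ => mul_le_mul_of_nonneg_right (hximax.2 (hmem i)) (sq_nonneg _)⟩

theorem eic_resolve {n : ℕ} (M : Matrix (Fin (n+2)) (Fin (n+2)) ℝ) (hM : Mᵀ = M)
    (q : Fin (n+2) → ℝ) (Q : Matrix (Fin (n+2)) (Fin (n+1)) ℝ)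
    (hq1 : q ⬝ᵥ (M *ᵥ q) = 1)
    (hQMQ : Qᵀ * M * Q = 1)
    (hQMq : (Qᵀ * M) *ᵥ q = 0) (d : Fin (n+2) → ℝ) (hd : q ⬝ᵥ (M *ᵥ d) = 0) :
    ∃ y, d = Q *ᵥ y := by
  refine ⟨(Qᵀ * M) *ᵥ d, ?_⟩
  have hs : ∀ x y, x ⬝ᵥ (M *ᵥ y) = y ⬝ᵥ (M *ᵥ x) := by
    intro x y
    rw [Matrix.dotProduct_mulVec, ← Matrix.mulVec_transpose, hM, dotProduct_comm]
  have hrow : ∀ i x, Qᵀ i ⬝ᵥ (M *ᵥ x) = ((Qᵀ * M) *ᵥ x) i := by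
    intro i x; rw [← Matrix.mulVec_mulVec]; rfl
  have h := eic_expand M (Fin.cons q (fun i => Qᵀ i)) (by
    intro i j
    refine Fin.cases ?_ (fun i => ?_) i <;> refine Fin.cases ?_ (fun j => ?_) j
    · simpa using hq1
    · simp only [Fin.cons_zero, Fin.cons_succ]
      rw [hs, hrow, hQMq]
      simp [(Fin.succ_ne_zero j).symm]
    · simp only [Fin.cons_zero, Fin.cons_succ]
      rw [hrow, hQMq]
      simp [(Fin.succ_ne_zero i)]
    · simp only [Fin.cons_succ]
      have := congrFun (congrFun hQMQ i) j
      rw [hrow]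
      rw [Matrix.one_apply] at this
      simp only [Fin.succ_inj]
      rw [← this, Matrix.mul_apply]
      rfl) d
  rw [Fin.sum_univ_succ] at h
  simp only [Fin.cons_zero, Fin.cons_succ, hd, zero_smul, zero_add] at h
  conv_lhs => rw [h]
  ext i
  simp only [Finset.sum_apply, Pi.smul_apply, smul_eq_mul, hrow]
  simp only [Matrix.mulVec, dotProduct, Matrix.transpose_apply]
  exact Finset.sum_congr rfl fun k _ => by ring

/-- The real-number side conditions. -/
theorem eic_consts {l1 l2 ln xmin xmax χ δ μ L : ℝ} (h1 : 0 < l1) (h2 : l1 < l2) 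
    (hd0 : 0 ≤ δ) (hxx : xmin ≤ xmax) (hx1 : l2 - δ ≤ xmin) (hx0 : l1 ≤ xmin) (hxn : xmax ≤ ln)
    (hχ : χ = (8 * l2 / l1) * (xmax / xmin) * Real.sqrt ((l2 + l1) / (2 * (l2 - l1))))
    (hμ : μ = 2 * xmin * (1 - 4 * δ / (l2 - l1)) * (1 - l1 / l2 - (2 + χ) * δ / l2))
    (hL : L = 2 * xmax * (1 - l1 / ln + (χ / l2) * (xmin / xmax) * δ))
    (hρ : δ ≤ (l2 - l1) / (2 + χ)) (hμ0 : 0 < μ) :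
    ∃ T C : ℝ, 10 * δ ≤ l2 - l1 ∧ 0 ≤ C ∧ 64 * δ ^ 2 * xmax ≤ C ^ 2 * (l2 - l1) ∧
      T ≤ xmin - (l1 + δ) - C ∧ 0 ≤ T ∧ μ / 2 ≤ (1 - 4 * (δ / (l2 - l1))) * T ∧
      xmax - l1 + C ≤ L / 2 ∧ μ ≤ L := by
  have g : 0 < l2 - l1 := by linarith
  have hl2 : 0 < l2 := by linarith
  have hxm : 0 < xmin := by linarith
  have hxM : 0 < xmax := by linarith
  have hln : 0 < ln := by linarith
  set sq := Real.sqrt ((l2 + l1) / (2 * (l2 - l1))) with hsq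
  have hsq0 : 0 ≤ sq := Real.sqrt_nonneg _
  have hsq2 : sq ^ 2 = (l2 + l1) / (2 * (l2 - l1)) := Real.sq_sqrt (by positivity)
  have hsql : l1 / l2 ≤ sq := by
    apply Real.le_sqrt_of_sq_le
    rw [div_pow, div_le_div_iff₀ (by positivity) (by positivity)]
    nlinarith [mul_pos h1 g, mul_pos (mul_pos h1 h1) g, mul_pos h1 (mul_pos g g),
      mul_pos g (mul_pos g g), mul_pos h1 (mul_pos h1 h1)]
  have hχ8 : 8 ≤ χ := by
    have e1 : 1 ≤ xmax / xmin := by rw [le_div_iff₀ hxm]; linarith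
    have e2 : (8 * l2 / l1) * 1 * (l1 / l2) ≤ χ := by
      rw [hχ]
      have : 0 ≤ 8 * l2 / l1 := by positivity
      gcongr
    have e3 : (8 * l2 / l1) * 1 * (l1 / l2) = 8 := by field_simp
    linarith
  have hρ' : (2 + χ) * δ ≤ l2 - l1 := by
    rw [le_div_iff₀ (by linarith)] at hρ; linarith
  have h10 : 10 * δ ≤ l2 - l1 := by nlinarith
  have hC : xmin * χ * δ / l2 = 8 * δ * (xmax / l1) * sq := by
    rw [hχ]; field_simp
  have hT0 : 0 ≤ xmin * (1 - l1 / l2 - (2 + χ) * δ / l2) := by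
    have : 1 - l1 / l2 - (2 + χ) * δ / l2 = (l2 - l1 - (2 + χ) * δ) / l2 := by field_simp
    rw [this]
    exact mul_nonneg hxm.le (div_nonneg (by linarith) hl2.le)
  have hC0 : 0 ≤ xmin * χ * δ / l2 := by
    have : 0 ≤ χ := by linarith
    positivity
  have hTle : xmin * (1 - l1 / l2 - (2 + χ) * δ / l2) ≤ xmin - (l1 + δ) - xmin * χ * δ / l2 := by
    have e : xmin * (1 - l1 / l2 - (2 + χ) * δ / l2) =
      xmin - xmin * (l1 + 2 * δ) / l2 - xmin * χ * δ / l2 := by field_simp; ring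
    rw [e]
    have : l1 + δ ≤ xmin * (l1 + 2 * δ) / l2 := by
      rw [le_div_iff₀ hl2]
      have := mul_le_mul_of_nonneg_right hx1 (show 0 ≤ l1 + 2 * δ by linarith)
      nlinarith
    linarith
  have hμ2 : μ / 2 = (1 - 4 * (δ / (l2 - l1))) * (xmin * (1 - l1 / l2 - (2 + χ) * δ / l2)) := by
    rw [hμ]; ring
  have hL2 : xmax - l1 + xmin * χ * δ / l2 ≤ L / 2 := by
    have e : L / 2 = xmax - l1 * (xmax / ln) + xmin * χ * δ / l2 := by
      rw [hL]; field_simp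
    rw [e]
    have : xmax / ln ≤ 1 := by rw [div_le_one hln]; exact hxn
    nlinarith
  refine ⟨xmin * (1 - l1 / l2 - (2 + χ) * δ / l2), xmin * χ * δ / l2, h10, hC0, ?_, hTle, hT0,
    hμ2.le, hL2, ?_⟩
  · rw [hC]
    have e : (8 * δ * (xmax / l1) * sq) ^ 2 * (l2 - l1) =
      64 * δ ^ 2 * xmax * (xmax * (l2 + l1) / (2 * l1 ^ 2)) := by
      rw [mul_pow, hsq2]; field_simp
      ring
    rw [e]
    apply le_mul_of_one_le_right (by positivity)
    rw [le_div_iff₀ (by positivity)]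
    nlinarith
  · have h5 : 0 ≤ δ / (l2 - l1) := by positivity
    have h6 := mul_le_of_le_one_left hT0 (show 1 - 4 * (δ / (l2 - l1)) ≤ 1 by linarith)
    linarith


set_option maxHeartbeats 2000000 in
/-- Convergence of EIC: with μ = μ_I, L = L_I from the convexity theorem (P = I),
κ = L/μ, 0 < τ ≤ κ^{−1/2}, ρ_q in the admissible range and a sufficiently good
initial vector x₀ ∈ X with z₀ = x₀, the EIC iterates satisfy monotone decline of
the Rayleigh quotient and Rq(x_k) − λ₁ ≤ 2(1−τ)^k (Rq(x₀) − λ₁). -/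
theorem stmt_17 (n : ℕ)
    (A M : Matrix (Fin (n+2)) (Fin (n+2)) ℝ)
    (hA : A.PosDef) (hM : M.PosDef)
    (q : Fin (n+2) → ℝ) (Q : Matrix (Fin (n+2)) (Fin (n+1)) ℝ)
    (hq1 : q ⬝ᵥ (M *ᵥ q) = 1)
    (hQMQ : Qᵀ * M * Q = 1)
    (hQMq : (Qᵀ * M) *ᵥ q = 0)
    (lam : Fin (n+2) → ℝ) (u : Fin (n+2) → Fin (n+2) → ℝ)
    (hlam0 : 0 < lam 0) (hlam01 : lam 0 < lam 1) (hmono : Monotone lam)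
    (heig : ∀ i, A *ᵥ u i = lam i • (M *ᵥ u i))
    (horth : ∀ i j, u i ⬝ᵥ (M *ᵥ u j) = if i = j then (1:ℝ) else 0)
    (hqu1 : 0 < q ⬝ᵥ (M *ᵥ u 0))
    (B : Matrix (Fin (n+1)) (Fin (n+1)) ℝ) (hB : B = Qᵀ * A * Q)
    (ρq : ℝ) (hρq : ρq = Rq A M q)
    (ximin ximax : ℝ)
    (hximin : IsLeast {ξ : ℝ | ∃ v : Fin (n+1) → ℝ, v ≠ 0 ∧ B *ᵥ v = ξ • v} ximin)
    (hximax : IsGreatest {ξ : ℝ | ∃ v : Fin (n+1) → ℝ, v ≠ 0 ∧ B *ᵥ v = ξ • v} ximax)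
    (χI : ℝ)
    (hχI : χI = (8 * lam 1 / lam 0) * (ximax / ximin) *
      Real.sqrt ((lam 1 + lam 0) / (2 * (lam 1 - lam 0))))
    (μ L : ℝ)
    (hμ : μ = 2 * ximin * (1 - 4 * (ρq - lam 0) / (lam 1 - lam 0)) *
      (1 - lam 0 / lam 1 - (2 + χI) * (ρq - lam 0) / lam 1))
    (hL : L = 2 * ximax * (1 - lam 0 / lam (Fin.last (n+1)) +
      (χI / lam 1) * (ximin / ximax) * (ρq - lam 0)))
    (hμpos : 0 < μ)
    (κ : ℝ) (hκ : κ = L / μ)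
    (τ : ℝ) (hτ0 : 0 < τ) (hτ : τ ≤ κ ^ (-(1/2 : ℝ)))
    (hρ1 : lam 0 ≤ ρq) (hρ2 : ρq ≤ lam 0 + (lam 1 - lam 0) / (2 + χI))
    (x z xbar r : ℕ → (Fin (n+2) → ℝ))
    (hx0 : x 0 ∈ Xset A M q)
    (hinit1 : 0 ≤ Rq A M (x 0) - lam 0)
    (hinit2 : Rq A M (x 0) - lam 0 ≤
      (ρq - lam 0) / max (8 * κ) (2 * κ * (1 + τ * κ) ^ 2))
    (hz0 : z 0 = x 0)
    (hxbar : ∀ k, xbar k = Mnormalize M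
      ((q ⬝ᵥ (M *ᵥ x k))⁻¹ • x k + (τ * (q ⬝ᵥ (M *ᵥ z k))⁻¹) • z k))
    (hr : ∀ k, r k = (2 : ℝ) • (A *ᵥ xbar k - Rq A M (xbar k) • (M *ᵥ xbar k)))
    (hz : ∀ k, z (k+1) = Mnormalize M
      (((1 - τ) * (q ⬝ᵥ (M *ᵥ z k))⁻¹) • z k +
        (τ * (q ⬝ᵥ (M *ᵥ xbar k))⁻¹) • xbar k -
        (τ * (q ⬝ᵥ (M *ᵥ xbar k)) / μ) •
          ((1 - vecMulVec q (q ᵥ* M)) *ᵥ (M⁻¹ *ᵥ r k))))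
    (hxmin : ∀ k,
      x (k+1) ∈ Xset A M q ∩
        (Submodule.span ℝ {q, x k, xbar k, M⁻¹ *ᵥ r k} :
          Submodule ℝ (Fin (n+2) → ℝ)) ∧
      ∀ v ∈ Xset A M q ∩
        (Submodule.span ℝ {q, x k, xbar k, M⁻¹ *ᵥ r k} :
          Submodule ℝ (Fin (n+2) → ℝ)),
        Rq A M (x (k+1)) ≤ Rq A M v) :
    (∀ k, Rq A M (x (k+1)) ≤ Rq A M (x k)) ∧
    ∀ k : ℕ, Rq A M (x k) - lam 0 ≤ 2 * (1 - τ) ^ k * (Rq A M (x 0) - lam 0) := by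
  
  have hAt : Aᵀ = A := by
    have := hA.isHermitian; unfold Matrix.IsHermitian at this
    rwa [Matrix.conjTranspose_eq_transpose_of_trivial] at this
  have hMt : Mᵀ = M := by
    have := hM.isHermitian; unfold Matrix.IsHermitian at this
    rwa [Matrix.conjTranspose_eq_transpose_of_trivial] at this
  have hsym : ∀ (K : Matrix (Fin (n+2)) (Fin (n+2)) ℝ), Kᵀ = K → ∀ x y, x ⬝ᵥ (K *ᵥ y) = y ⬝ᵥ (K *ᵥ x) := by
    intro K hK x y
    rw [Matrix.dotProduct_mulVec, ← Matrix.mulVec_transpose, hK, dotProduct_comm]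
  obtain ⟨m, hm⟩ : ∃ m : (Fin (n+2) → ℝ) →ₗ[ℝ] (Fin (n+2) → ℝ) →ₗ[ℝ] ℝ, ∀ x y, m x y = x ⬝ᵥ (M *ᵥ y) :=
    ⟨Matrix.toLinearMap₂' ℝ M, fun x y => Matrix.toLinearMap₂'_apply' M x y⟩
  obtain ⟨a, ha⟩ : ∃ m : (Fin (n+2) → ℝ) →ₗ[ℝ] (Fin (n+2) → ℝ) →ₗ[ℝ] ℝ, ∀ x y, m x y = x ⬝ᵥ (A *ᵥ y) :=
    ⟨Matrix.toLinearMap₂' ℝ A, fun x y => Matrix.toLinearMap₂'_apply' A x y⟩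
  have hRq : ∀ v, Rq A M v = a v v / m v v := fun v => by rw [hm, ha]; rfl
  have hMn : ∀ v, Mnorm M v = Real.sqrt (m v v) := fun v => by rw [hm]; rfl
  have hXs : ∀ v, v ∈ Xset A M q ↔ (Real.sqrt (m v v) = 1 ∧ 0 < m q v) ∧ Rq A M v ≤ ρq := by
    intro v; rw [hρq, ← hMn, hm]; rfl
  have sm : ∀ x y, m x y = m y x := fun x y => by rw [hm, hm, hsym M hMt]
  have sa : ∀ x y, a x y = a y x := fun x y => by rw [ha, ha, hsym A hAt]
  have ppos : ∀ x, x ≠ 0 → 0 < m x x := by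
    intro x hx0
    rw [hm]
    have := hM.dotProduct_mulVec_pos hx0
    simpa using this
  have pm : ∀ x, 0 ≤ m x x := by
    intro x
    by_cases h : x = 0
    · rw [h]; simp
    · exact (ppos x h).le
  have hqq : m q q = 1 := by rw [hm, hq1]
  have hexp : ∀ v, m v v = ∑ i, (m (u i) v) ^ 2 ∧ a v v = ∑ i, lam i * (m (u i) v) ^ 2 := by
    intro v
    have := eic_expand2 A M u lam hAt hMt heig horth v
    simpa only [hm, ha] using this
  have hρa : ρq = a q q := by rw [hρq, hRq, hqq, div_one]
  have huu : m (u 0) (u 0) = 1 := by rw [hm, horth]; simp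
  have hgap : ∀ v, (lam 1 - lam 0) * (m v v - (m (u 0) v) ^ 2) ≤ a v v - lam 0 * m v v := by
    intro v
    obtain ⟨h1, h2⟩ := hexp v
    rw [Fin.sum_univ_succ] at h1 h2
    rw [h1, h2]
    have : lam 1 * ∑ i : Fin (n+1), (m (u i.succ) v) ^ 2 ≤
        ∑ i : Fin (n+1), lam i.succ * (m (u i.succ) v) ^ 2 := by
      rw [Finset.mul_sum]
      refine Finset.sum_le_sum fun i _ => mul_le_mul_of_nonneg_right (hmono ?_) (sq_nonneg _)
      rw [Fin.le_def]; simp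
    linarith
  have hmax : ∀ v, a v v ≤ lam (Fin.last (n+1)) * m v v := by
    intro v
    obtain ⟨h1, h2⟩ := hexp v
    rw [h1, h2, Finset.mul_sum]
    exact Finset.sum_le_sum fun i _ => mul_le_mul_of_nonneg_right (hmono (Fin.le_last i)) (sq_nonneg _)
  -- reduction to B
  have hBt : Bᵀ = B := by
    rw [hB, Matrix.transpose_mul, Matrix.transpose_mul, Matrix.transpose_transpose, hAt, Matrix.mul_assoc]
  have hQK : ∀ (K : Matrix (Fin (n+2)) (Fin (n+2)) ℝ) (y : Fin (n+1) → ℝ),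
      (Q *ᵥ y) ⬝ᵥ (K *ᵥ (Q *ᵥ y)) = y ⬝ᵥ ((Qᵀ * K * Q) *ᵥ y) := by
    intro K y
    rw [← Matrix.mulVec_mulVec, ← Matrix.mulVec_mulVec, Matrix.dotProduct_mulVec y Qᵀ,
      Matrix.vecMul_transpose]
  have hQm : ∀ y, m (Q *ᵥ y) (Q *ᵥ y) = y ⬝ᵥ y := by
    intro y; rw [hm, hQK, hQMQ, Matrix.one_mulVec]
  have hQa : ∀ y, a (Q *ᵥ y) (Q *ᵥ y) = y ⬝ᵥ (B *ᵥ y) := by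
    intro y; rw [ha, hQK, hB]
  have hqQ : ∀ y, m q (Q *ᵥ y) = 0 := by
    intro y
    rw [sm, hm, ← Matrix.vecMul_transpose, ← Matrix.dotProduct_mulVec, Matrix.mulVec_mulVec, hQMq,
      dotProduct_zero]
  have hray := eic_rayleigh B hBt ximin ximax hximin hximax
  have hlo : ∀ d, m q d = 0 → ximin * m d d ≤ a d d := by
    intro d hd
    obtain ⟨y, rfl⟩ := eic_resolve M hMt q Q hq1 hQMQ hQMq d (by rw [← hm, hd])
    rw [hQm, hQa]; exact (hray y).1
  have hhi : ∀ d, m q d = 0 → a d d ≤ ximax * m d d := by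
    intro d hd
    obtain ⟨y, rfl⟩ := eic_resolve M hMt q Q hq1 hQMQ hQMq d (by rw [← hm, hd])
    rw [hQm, hQa]; exact (hray y).2
  have hyy : ∀ y : Fin (n+1) → ℝ, y ≠ 0 → 0 < y ⬝ᵥ y := by
    intro y hy
    have := dotProduct_star_self_pos_iff.mpr hy
    simpa using this
  set δ := ρq - lam 0 with hδ
  have hδ0 : 0 ≤ δ := by linarith
  have g : 0 < lam 1 - lam 0 := by linarith
  have htr : ∀ d, m q d = 0 → (lam 1 - δ) * m d d ≤ a d d := by
    intro d hd
    have h1 := hgap d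
    have h2 := hgap q
    rw [hqq, ← hρa] at h2
    have h3 := eic_cs m sm pm (u 0 - m (u 0) q • q) d
    simp only [map_sub, LinearMap.sub_apply, map_smul, LinearMap.smul_apply, smul_eq_mul, huu, hqq, hd,
      sm q (u 0)] at h3
    have h4 : (m (u 0) d) ^ 2 ≤ (1 - (m (u 0) q) ^ 2) * m d d := by linarith
    have h5 := mul_le_mul_of_nonneg_left h4 g.le
    have h6 := mul_le_mul_of_nonneg_right h2 (pm d)
    rw [hδ]
    linarith
  have hx1 : lam 1 - δ ≤ ximin := by
    obtain ⟨y, hy0, hy⟩ := hximin.1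
    have h1 := htr (Q *ᵥ y) (hqQ y)
    rw [hQm, hQa, hy, dotProduct_smul, smul_eq_mul] at h1
    exact le_of_mul_le_mul_right h1 (hyy y hy0)
  have hx0' : lam 0 ≤ ximin := by
    obtain ⟨y, hy0, hy⟩ := hximin.1
    have h1 := hgap (Q *ᵥ y)
    have h2 := eic_cs m sm pm (u 0) (Q *ᵥ y)
    rw [huu] at h2
    have h3 : lam 0 * m (Q *ᵥ y) (Q *ᵥ y) ≤ a (Q *ᵥ y) (Q *ᵥ y) := by
      have := mul_nonneg g.le (show 0 ≤ m (Q *ᵥ y) (Q *ᵥ y) - (m (u 0) (Q *ᵥ y)) ^ 2 by linarith)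
      linarith
    rw [hQm, hQa, hy, dotProduct_smul, smul_eq_mul] at h3
    exact le_of_mul_le_mul_right h3 (hyy y hy0)
  have hxn : ximax ≤ lam (Fin.last (n+1)) := by
    obtain ⟨y, hy0, hy⟩ := hximax.1
    have h1 := hmax (Q *ᵥ y)
    rw [hQm, hQa, hy, dotProduct_smul, smul_eq_mul] at h1
    exact le_of_mul_le_mul_right h1 (hyy y hy0)
  have hxx : ximin ≤ ximax := hximin.2 hximax.1
  obtain ⟨T, C, h10, hC0, hCC, hT, hT0, hμT, hLC, hμL⟩ := eic_consts hlam0 hlam01 hδ0 hxx hx1 hx0' hxn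
    hχI hμ hL (by linarith) hμpos
  have S : EicSet a m q (u 0) (lam 0) (lam 1 - lam 0) δ ximin ximax C :=
    { sa := sa, sm := sm, pm := pm, qq := hqq, uu := huu, qu := by rw [hm]; exact hqu1
      au := fun v => by
        rw [sa, ha, heig, dotProduct_smul, smul_eq_mul, ← hm, sm]
      l1pos := hlam0, gpos := g, hgap := hgap, lo := hlo, hi := hhi
      aq := by rw [← hρa, hδ]; ring
      d0 := hδ0, d10 := h10, xl := hx0', xd := by linarith, xx := hxx, C0 := hC0, hC := hCC }
  have hLpos : 0 < L := by linarith
  have hκ0 : 0 < κ := by rw [hκ]; positivity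
  have hτ2 : τ ^ 2 * L ≤ μ := by
    have h1 : τ ^ 2 ≤ (κ ^ (-(1/2 : ℝ))) ^ 2 := pow_le_pow_left₀ hτ0.le hτ 2
    have h2 : (κ ^ (-(1/2 : ℝ))) ^ 2 = κ⁻¹ := by
      rw [← Real.rpow_natCast, ← Real.rpow_mul hκ0.le, ← Real.rpow_neg_one]; norm_num
    rw [h2, hκ, inv_div] at h1
    rwa [le_div_iff₀ hLpos] at h1
  have hτ1 : τ ≤ 1 := by
    by_contra hc
    push Not at hc
    have h1 : 1 < τ ^ 2 := one_lt_pow₀ hc two_ne_zero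
    have h2 := mul_lt_mul_of_pos_right h1 hLpos
    linarith
  have hinit : 8 * L * (Rq A M (x 0) - lam 0) ≤ δ * μ := by
    have h1 : (0:ℝ) < 8 * κ := by linarith
    have h2 : δ / max (8 * κ) (2 * κ * (1 + τ * κ) ^ 2) ≤ δ / (8 * κ) :=
      div_le_div_of_nonneg_left hδ0 h1 (le_max_left _ _)
    have h3 := hinit2.trans h2
    rw [le_div_iff₀ h1, hκ] at h3
    have h4 := mul_le_mul_of_nonneg_right h3 hμpos.le
    calc _ = (Rq A M (x 0) - lam 0) * (8 * (L / μ)) * μ := by field_simp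
      _ ≤ _ := h4
  -- monotonicity
  have hxX : ∀ k, x k ∈ Xset A M q := by
    intro k
    cases k with
    | zero => exact hx0
    | succ k => exact (hxmin k).1.1
  have hmono2 : ∀ k, Rq A M (x (k+1)) ≤ Rq A M (x k) := by
    intro k
    exact (hxmin k).2 (x k) ⟨hxX k, Submodule.subset_span (by simp)⟩
  refine ⟨hmono2, ?_⟩
  -- normalization facts
  have hne : ∀ v, m q v ≠ 0 → 0 < m v v := by
    intro v hv
    apply ppos
    rintro rfl
    simp at hv
  have hRs : ∀ v, m q v ≠ 0 → a v v = Rq A M v * m v v := by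
    intro v hv
    rw [hRq, div_mul_cancel₀ _ (hne v hv).ne']
  have hRsc : ∀ (c : ℝ) v, c ≠ 0 → Rq A M (c • v) = Rq A M v := by
    intro c v hc
    rw [hRq, hRq]
    simp only [map_smul, LinearMap.smul_apply, smul_eq_mul]
    rw [mul_div_mul_left _ _ hc, mul_div_mul_left _ _ hc]
  have hnz : ∀ v, 0 < m q v → 0 < m q (Mnormalize M v) ∧
      (m q (Mnormalize M v))⁻¹ • Mnormalize M v = (m q v)⁻¹ • v ∧
      m (Mnormalize M v) (Mnormalize M v) = 1 := by
    intro v hv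
    have h1 := hne v hv.ne'
    have h2 : 0 < Real.sqrt (m v v) := Real.sqrt_pos.mpr h1
    have h3 : Mnormalize M v = (Real.sqrt (m v v))⁻¹ • v := by rw [← hMn]; rfl
    rw [h3]
    refine ⟨?_, ?_, ?_⟩
    · rw [map_smul, smul_eq_mul]; positivity
    · rw [map_smul, smul_smul, smul_eq_mul]
      congr 1
      field_simp
    · simp only [map_smul, LinearMap.smul_apply, smul_eq_mul]
      have := Real.mul_self_sqrt h1.le
      field_simp
      rw [sq, this]
  simp only [← hm] at hxbar hz
  have hcx : ∀ k, 0 < m q (x k) := fun k => ((hXs _).mp (hxX k)).1.2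
  set G : ℕ → (Fin (n+2) → ℝ) := fun k =>
    (m q (xbar k)) • ((1 - vecMulVec q (q ᵥ* M)) *ᵥ (M⁻¹ *ᵥ r k)) with hG
  have hproj : ∀ v, (1 - vecMulVec q (q ᵥ* M)) *ᵥ v = v - m q v • q := by
    intro v
    rw [Matrix.sub_mulVec, Matrix.one_mulVec, Matrix.vecMulVec_mulVec, hm, Matrix.dotProduct_mulVec]
    simp
  have hqG : ∀ k, m q (G k) = 0 := by
    intro k
    simp only [hG, hproj, map_smul, map_sub, smul_eq_mul, hqq]; ring
  have hbv : ∀ k, 0 < m q (z k) →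
      m q ((m q (x k))⁻¹ • x k + (τ * (m q (z k))⁻¹) • z k) = 1 + τ := by
    intro k hzk
    have h1 := (hcx k).ne'
    have h2 := hzk.ne'
    simp only [map_add, map_smul, smul_eq_mul]
    field_simp
  have hxbp : ∀ k, 0 < m q (z k) → 0 < m q (xbar k) := by
    intro k hzk
    rw [hxbar]; exact (hnz _ (by rw [hbv k hzk]; linarith)).1
  have hzv : ∀ k, 0 < m q (z k) →
      m q (((1 - τ) * (m q (z k))⁻¹) • z k + (τ * (m q (xbar k))⁻¹) • xbar k -
        (τ * (m q (xbar k)) / μ) • ((1 - vecMulVec q (q ᵥ* M)) *ᵥ (M⁻¹ *ᵥ r k))) = 1 := by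
    intro k hzk
    have h1 := (hxbp k hzk).ne'
    have h2 := hzk.ne'
    simp only [map_add, map_sub, map_smul, smul_eq_mul, hproj, hqq]
    field_simp
    ring
  have hzp : ∀ k, 0 < m q (z k) := by
    intro k
    induction k with
    | zero => rw [hz0]; exact hcx 0
    | succ k ih => rw [hz]; exact (hnz _ (by rw [hzv k ih]; norm_num)).1
  have hMinv : ∀ v, M *ᵥ (M⁻¹ *ᵥ v) = v := by
    intro v
    rw [Matrix.mulVec_mulVec, Matrix.mul_nonsing_inv _ ((Matrix.isUnit_iff_isUnit_det _).mp hM.isUnit),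
      Matrix.one_mulVec]
  have hpbne : ∀ k, m q ((m q (xbar k))⁻¹ • xbar k) ≠ 0 := by
    intro k
    rw [map_smul, smul_eq_mul, inv_mul_cancel₀ (hxbp k (hzp k)).ne']
    exact one_ne_zero
  have hwz : ∀ k, (m q (z (k+1)))⁻¹ • z (k+1) =
      ((1 - τ) * (m q (z k))⁻¹) • z k + (τ * (m q (xbar k))⁻¹) • xbar k -
        (τ * (m q (xbar k)) / μ) • ((1 - vecMulVec q (q ᵥ* M)) *ᵥ (M⁻¹ *ᵥ r k)) := by
    intro k
    have h1 := hzv k (hzp k)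
    have h2 := (hnz _ (by rw [h1]; norm_num)).2.1
    rw [← hz, h1, inv_one, one_smul] at h2
    exact h2
  have hpbx : ∀ k, (1 + τ) • ((m q (xbar k))⁻¹ • xbar k) =
      (m q (x k))⁻¹ • x k + (τ * (m q (z k))⁻¹) • z k := by
    intro k
    have h1 := hbv k (hzp k)
    have h2 := (hnz _ (by rw [h1]; linarith)).2.1
    rw [← hxbar, h1] at h2
    rw [h2, smul_smul, mul_inv_cancel₀ (by linarith), one_smul]
  intro k
  refine S.main hT hT0 hμT hLC hμpos hLpos hτ0 hτ1 hτ2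
    (fun k => (m q (x k))⁻¹ • x k) (fun k => (m q (z k))⁻¹ • z k)
    (fun k => (m q (xbar k))⁻¹ • xbar k) G (fun k => Rq A M (x k)) (fun k => Rq A M (xbar k))
    ?_ ?_ ?_ hqG ?_ ?_ ?_ ?_ ?_ ?_ hinit k
  · intro k
    simp only [map_smul, smul_eq_mul]
    exact inv_mul_cancel₀ (hcx k).ne'
  · intro k
    have h1 := hRs (x k) (hcx k).ne'
    simp only [map_smul, LinearMap.smul_apply, smul_eq_mul]
    rw [h1]; ring
  · intro k
    have h1 := hRs (xbar k) (hxbp k (hzp k)).ne'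
    simp only [map_smul, LinearMap.smul_apply, smul_eq_mul]
    rw [h1]; ring
  · intro k d hd
    have h1 : m (xbar k) (xbar k) = 1 := by
      rw [hxbar]; exact (hnz _ (by rw [hbv k (hzp k)]; linarith)).2.2
    have h2 := (hxbp k (hzp k)).ne'
    have h3 : m (M⁻¹ *ᵥ r k) d = 2 * (a (xbar k) d - Rq A M (xbar k) * m (xbar k) d) := by
      rw [sm, hm, hMinv, hr, dotProduct_smul, dotProduct_sub, dotProduct_smul, ← ha, ← hm, sa d, sm d]
      simp only [smul_eq_mul]
    simp only [hG, hproj, map_smul, map_sub, LinearMap.smul_apply, LinearMap.sub_apply, smul_eq_mul,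
      h1, hd, h3]
    field_simp
    ring
  · intro k
    rw [hpbx, smul_smul]
  · intro k
    rw [hwz, smul_smul, smul_smul]
    simp only [hG, smul_smul]
    congr 3
    ring
  · rw [hz0]
  · intro k
    have := ((hXs _).mp (hxX k)).2
    linarith
  · intro k v f' hqv hav hf' hv
    have hvv := hne v (by rw [hqv]; norm_num)
    have hn := hnz v (by rw [hqv]; norm_num)
    have hsc : Mnormalize M v = (Real.sqrt (m v v))⁻¹ • v := by rw [← hMn]; rfl
    have hRv : Rq A M (Mnormalize M v) = f' := by
      rw [hsc, hRsc _ _ (inv_ne_zero (Real.sqrt_pos.mpr hvv).ne'), hRq, hav, mul_div_cancel_right₀ _ hvv.ne']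
    have := (hxmin k).2 (Mnormalize M v) ⟨?_, ?_⟩
    · rw [hRv] at this; exact this
    · rw [hXs]
      refine ⟨⟨by rw [hn.2.2, Real.sqrt_one], hn.1⟩, ?_⟩
      rw [hRv]; linarith
    · rw [hsc]
      apply Submodule.smul_mem
      rw [hv]
      simp only [hG, hproj]
      have m1 : q ∈ Submodule.span ℝ {q, x k, xbar k, M⁻¹ *ᵥ r k} := Submodule.subset_span (by simp)
      have m2 : xbar k ∈ Submodule.span ℝ {q, x k, xbar k, M⁻¹ *ᵥ r k} := Submodule.subset_span (by simp)
      have m3 : M⁻¹ *ᵥ r k ∈ Submodule.span ℝ {q, x k, xbar k, M⁻¹ *ᵥ r k} :=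
        Submodule.subset_span (by simp)
      exact Submodule.sub_mem _ (Submodule.smul_mem _ _ m2) (Submodule.smul_mem _ _
        (Submodule.smul_mem _ _ (Submodule.sub_mem _ m3 (Submodule.smul_mem _ _ m1))))
end

section
/- Suppose T is an n×n symmetric positive definite matrix and P = QᵀTQ. Then for any z ∈ ℝⁿ, QP⁻¹Qᵀz = ΠT⁻¹z, where q̃ = T⁻¹Mq and Π = I − q̃qᵀM/(qᵀMq̃) is the complementation of the oblique projector q̃qᵀM/(qᵀMq̃). -/
open Matrix

/-- If T is SPD and P = QᵀTQ, then for any z, QP⁻¹Qᵀz = ΠT⁻¹z, where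
q̃ = T⁻¹Mq and Π = I − q̃qᵀM/(qᵀMq̃). -/
theorem stmt_18 (n : ℕ)
    (M T : Matrix (Fin (n+2)) (Fin (n+2)) ℝ)
    (hM : M.PosDef) (hT : T.PosDef)
    (q : Fin (n+2) → ℝ) (Q : Matrix (Fin (n+2)) (Fin (n+1)) ℝ)
    (hq1 : q ⬝ᵥ (M *ᵥ q) = 1)
    (hQMQ : Qᵀ * M * Q = 1)
    (hQMq : (Qᵀ * M) *ᵥ q = 0)
    (P : Matrix (Fin (n+1)) (Fin (n+1)) ℝ) (hP : P = Qᵀ * T * Q)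
    (qt : Fin (n+2) → ℝ) (hqt : qt = T⁻¹ *ᵥ (M *ᵥ q))
    (Pi : Matrix (Fin (n+2)) (Fin (n+2)) ℝ)
    (hPi : Pi = 1 - (q ⬝ᵥ (M *ᵥ qt))⁻¹ • vecMulVec qt (q ᵥ* M)) :
    ∀ z : Fin (n+2) → ℝ, Q *ᵥ (P⁻¹ *ᵥ (Qᵀ *ᵥ z)) = Pi *ᵥ (T⁻¹ *ᵥ z) := by
  intro z
  have hTu : IsUnit T.det := (Matrix.isUnit_iff_isUnit_det T).1 hT.isUnit
  have hMt : Mᵀ = M := by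
    have := hM.isHermitian.eq
    rwa [conjTranspose_eq_transpose_of_trivial] at this
  have hQinj : Function.Injective Q.mulVec := by
    intro a b hab
    have h2 : (Qᵀ * M) *ᵥ (Q *ᵥ a) = (Qᵀ * M) *ᵥ (Q *ᵥ b) := congrArg _ hab
    simpa [mulVec_mulVec, hQMQ] using h2
  have hPpd : P.PosDef := by
    have := hT.conjTranspose_mul_mul_same hQinj
    rwa [conjTranspose_eq_transpose_of_trivial, ← hP] at this
  have hPu : IsUnit P.det := (Matrix.isUnit_iff_isUnit_det P).1 hPpd.isUnit
  have hMq : M *ᵥ q ≠ 0 := by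
    intro h
    rw [h] at hq1
    simp at hq1
  have hqM : q ᵥ* M = M *ᵥ q := by
    rw [← mulVec_transpose, hMt]
  have hdot : ∀ x, q ⬝ᵥ (M *ᵥ x) = (M *ᵥ q) ⬝ᵥ x := by
    intro x
    rw [dotProduct_mulVec, hqM]
  have hc : q ⬝ᵥ (M *ᵥ qt) ≠ 0 := by
    rw [hdot, hqt]
    have := hT.inv.dotProduct_mulVec_pos hMq
    simp only [star_trivial] at this
    exact this.ne'
  set c := q ⬝ᵥ (M *ᵥ qt) with hcdef
  set α := c⁻¹ * ((M *ᵥ q) ⬝ᵥ (T⁻¹ *ᵥ z)) with hα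
  obtain ⟨w, hw⟩ : ∃ w, w = Pi *ᵥ (T⁻¹ *ᵥ z) := ⟨_, rfl⟩
  have hw2 : w = T⁻¹ *ᵥ z - α • qt := by
    rw [hw, hPi, sub_mulVec, one_mulVec, smul_mulVec, vecMulVec_mulVec, hqM]
    ext i
    simp [hα]
    ring
  have hqw : q ⬝ᵥ (M *ᵥ w) = 0 := by
    rw [hw2, mulVec_sub, mulVec_smul, dotProduct_sub, dotProduct_smul, ← hcdef, hα, hdot]
    simp only [smul_eq_mul]
    field_simp
    ring
  have hTw : T *ᵥ w = z - α • (M *ᵥ q) := by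
    rw [hw2, mulVec_sub, mulVec_smul, hqt, mulVec_mulVec, mulVec_mulVec, mul_nonsing_inv _ hTu,
      one_mulVec, one_mulVec]
  have hcomp : Q *ᵥ ((Qᵀ * M) *ᵥ w) = w := by
    have hB : (fromRows (replicateRow Unit (q ᵥ* M)) (Qᵀ * M)) *
        (fromCols (replicateCol Unit q) Q) = 1 := by
      rw [fromRows_mul_fromCols, ← fromBlocks_one]
      congr 1
      · ext i j
        rw [hqM]
        simpa [Matrix.mul_apply, dotProduct, mul_comm] using hq1
      · ext i j
        have h3 : (M *ᵥ q) ᵥ* Q = 0 := by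
          rw [← mulVec_transpose, mulVec_mulVec, hQMq]
        rw [hqM]
        exact congrFun h3 j
      · ext i j
        exact congrFun hQMq i
    have hB2 := (Matrix.mul_eq_one_comm_of_card_eq _ _ _ (by simp; ring)).1 hB
    rw [fromCols_mul_fromRows] at hB2
    have h4 := congrArg (fun X => X *ᵥ w) hB2
    simp only [add_mulVec, one_mulVec, ← mulVec_mulVec] at h4
    have h5 : replicateRow Unit (q ᵥ* M) *ᵥ w = 0 := by
      ext i
      have : (q ᵥ* M) ⬝ᵥ w = 0 := by rw [← dotProduct_mulVec, hqw]
      exact this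
    rw [h5] at h4
    simpa [mulVec_mulVec] using h4
  have hPw : P *ᵥ ((Qᵀ * M) *ᵥ w) = Qᵀ *ᵥ z := by
    rw [hP, ← mulVec_mulVec, hcomp, ← mulVec_mulVec, hTw, mulVec_sub, mulVec_smul,
      mulVec_mulVec, hQMq]
    simp
  rw [← hw, ← hPw, mulVec_mulVec _ P⁻¹ P, nonsing_inv_mul _ hPu, one_mulVec, hcomp]
end

section
/- Convergence of EPIC. Let T be an n×n symmetric positive definite matrix and P = QᵀTQ; let μ_P > 0 and L_P be the strong convexity parameters of Theorem convexP for this P, κ_P = L_P/μ_P, and 0 < τ_P ≤ κ_P^{−1/2}. Assume ρ_q satisfies λ₁ ≤ ρ_q ≤ λ₁ + (λ₂−λ₁)/(2+χ_P) and the initial vector x₀ ∈ X satisfies 0 ≤ Rq(x₀) − λ₁ ≤ (ρ_q − λ₁)/max{8κ_P, 2κ_P(1+τ_P κ_P)²}, with z₀ = x₀. Generate for k ≥ 0: x̄_k = the M-normalization of x_k/(qᵀMx_k) + τ_P·z_k/(qᵀMz_k); r_k = 2(Ax̄_k − Rq(x̄_k)Mx̄_k); r̃_k = ΠT⁻¹r_k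 where Π = I − q̃qᵀM/(qᵀMq̃) and q̃ = T⁻¹Mq; z_{k+1} = the M-normalization of (1−τ_P)z_k/(qᵀMz_k) + τ_P·x̄_k/(qᵀMx̄_k) − (τ_P(qᵀMx̄_k)/μ_P)·r̃_k; and x_{k+1} = the minimizer of Rq over X ∩ span{q, x_k, x̄_k, r̃_k}. Then Rq(x_k) ≤ Rq(x_{k−1}) ≤ … ≤ Rq(x₀), and Rq(x_k) − λ₁ ≤ 2(1−τ_P)^k (Rq(x₀) − λ₁) for all k ≥ 0. -/
open Matrix

/-- Cauchy–Schwarz for a nonnegative symmetric bilinear form. -/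
theorem epic_cs {V : Type*} [AddCommGroup V] [Module ℝ V] (m : V →ₗ[ℝ] V →ₗ[ℝ] ℝ)
    (hs : ∀ x y, m x y = m y x) (hp : ∀ x, 0 ≤ m x x) (x y : V) :
    (m x y)^2 ≤ m x x * m y y := by
  have h : ∀ s : ℝ, 0 ≤ m y y * (s * s) + (2 * m x y) * s + m x x := by
    intro s
    have := hp (x + s • y)
    simp only [map_add, map_smul, LinearMap.add_apply, LinearMap.smul_apply, smul_eq_mul] at this
    rw [hs y x] at this
    linarith
  have := discrim_le_zero h
  unfold discrim at this
  linarith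

theorem epic_trace {V : Type*} [AddCommGroup V] [Module ℝ V] (m a : V →ₗ[ℝ] V →ₗ[ℝ] ℝ)
    (hs : ∀ x y, m x y = m y x) (hp : ∀ x, 0 ≤ m x x) (q u : V) (l1 l2 δ : ℝ)
    (h12 : l1 < l2) (hq : m q q = 1) (hu : m u u = 1)
    (hlow : ∀ x, l2 * m x x - (l2 - l1) * (m u x)^2 ≤ a x x)
    (hδ : a q q = l1 + δ) (w : V) (hw : m q w = 0) :
    (l2 - δ) * m w w ≤ a w w := by
  have h1 := hlow w
  have h2 := hlow q
  have h3 := epic_cs m hs hp (u - m u q • q) w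
  simp only [map_sub, map_smul, LinearMap.sub_apply, LinearMap.smul_apply, smul_eq_mul,
    hw, hq, hu, hs q u] at h3
  rw [hδ, hq] at h2
  have := hp w
  nlinarith

theorem epic_sin_real (σ D x1 q1 : ℝ) (hσ0 : 0 ≤ σ) (hσ1 : σ ≤ 1/6) (hD1 : 1 ≤ D)
    (_hq0 : 0 ≤ 1 - q1^2) (hx0 : 0 ≤ D - x1^2)
    (hql' : 1 - q1^2 ≤ σ) (hxl' : D - x1^2 ≤ σ * D)
    (hc' : (1 - q1 * x1)^2 ≤ (1 - q1^2) * (D - x1^2)) :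
    D - 1 ≤ 12 * σ ∧ (1 - 4 * σ) * D ≤ 1 ∧ 1 ≤ D := by
  have hD0 : 0 < D := by linarith
  obtain ⟨s, hs0, hsD⟩ : ∃ s, 0 < s ∧ s^2 = D :=
    ⟨Real.sqrt D, by positivity, Real.sq_sqrt (by linarith)⟩
  have hc2 : (1 - q1 * x1)^2 ≤ (σ * s)^2 := by
    refine hc'.trans ?_
    calc (1 - q1^2) * (D - x1^2) ≤ σ * (σ * D) := by gcongr
      _ = (σ * s)^2 := by rw [← hsD]; ring
  have hb1 := abs_le_of_sq_le_sq' hc2 (by positivity)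
  have hσ2 : 0 ≤ 1 - σ := by linarith
  have hqx : ((1 - σ) * s)^2 ≤ (q1 * x1)^2 := by
    calc ((1 - σ) * s)^2 = (1 - σ) * ((1 - σ) * D) := by rw [← hsD]; ring
      _ ≤ q1^2 * x1^2 := by
        apply mul_le_mul (by linarith) (by linarith) (by positivity) (by positivity)
      _ = _ := by ring
  have hb2 : (1 - 2*σ) * s ≤ 1 := by
    have h3 := sq_le_sq.1 hqx
    rw [abs_of_nonneg (by positivity)] at h3
    rcases abs_cases (q1 * x1) with h | h
    · linarith
    · have := mul_nonneg hσ0 hs0.le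
      have : σ * s ≤ 1/6 * s := mul_le_mul_of_nonneg_right hσ1 hs0.le
      linarith
  have hb3 : ((1 - 2*σ) * s)^2 ≤ 1 := by
    have : 0 ≤ (1 - 2*σ) * s := mul_nonneg (by linarith) hs0.le
    exact pow_le_one₀ this hb2
  have hb4 : (1 - 4*σ) * D ≤ 1 := by
    rw [← hsD]; nlinarith only [hb3, mul_nonneg (sq_nonneg σ) (sq_nonneg s)]
  refine ⟨?_, hb4, hD1⟩
  nlinarith only [hb4, hσ0, hσ1, hD1]

theorem epic_sin {V : Type*} [AddCommGroup V] [Module ℝ V] (m a : V →ₗ[ℝ] V →ₗ[ℝ] ℝ)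
    (hs : ∀ x y, m x y = m y x) (hp : ∀ x, 0 ≤ m x x) (q u : V) (l1 l2 δ : ℝ)
    (h12 : l1 < l2) (hq : m q q = 1) (hu : m u u = 1)
    (hlow : ∀ x, l2 * m x x - (l2 - l1) * (m u x)^2 ≤ a x x)
    (hδ : a q q = l1 + δ) (hδ0 : 0 ≤ δ) (hδs : 6 * δ ≤ l2 - l1)
    (x : V) (hx : m q x = 1) (hax : a x x ≤ (l1 + δ) * m x x) :
    m x x - 1 ≤ 12 * δ / (l2 - l1) ∧ (1 - 4 * δ / (l2 - l1)) * m x x ≤ 1 ∧ 1 ≤ m x x := by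
  obtain ⟨σ, hσ⟩ : ∃ σ, σ = δ / (l2 - l1) := ⟨_, rfl⟩
  have hpos : 0 < l2 - l1 := by linarith
  have hδσ : δ = σ * (l2 - l1) := by rw [hσ]; field_simp
  have e1 : 12 * δ / (l2 - l1) = 12 * σ := by rw [hσ]; ring
  have e2 : 4 * δ / (l2 - l1) = 4 * σ := by rw [hσ]; ring
  rw [e1, e2]
  have hσ0 : 0 ≤ σ := by rw [hσ]; positivity
  have hσ1 : σ ≤ 1/6 := by rw [hσ, div_le_iff₀ hpos]; linarith
  have hD1 : 1 ≤ m x x := by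
    have := epic_cs m hs hp q x
    rw [hx, hq] at this; linarith
  obtain ⟨D, hD⟩ : ∃ D, D = m x x := ⟨_, rfl⟩
  obtain ⟨x1, hx1⟩ : ∃ D, D = m u x := ⟨_, rfl⟩
  obtain ⟨q1, hq1⟩ : ∃ D, D = m u q := ⟨_, rfl⟩
  have hxl := hlow x
  have hql := hlow q
  have hc := epic_cs m hs hp (q - m u q • u) (x - m u x • u)
  simp only [map_sub, map_smul, LinearMap.sub_apply, LinearMap.smul_apply, smul_eq_mul,
    hx, hq, hu, hs q u, hs x u] at hc
  rw [hδ, hq] at hql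
  have hq0 : 0 ≤ 1 - (m u q)^2 := by
    have := epic_cs m hs hp u q
    rw [hu, hq] at this; linarith
  have hx0 : 0 ≤ m x x - (m u x)^2 := by
    have := epic_cs m hs hp u x
    rw [hu] at this; linarith
  rw [← hD, ← hx1] at hx0 hxl
  rw [← hq1] at hq0 hql
  rw [← hD] at hax hD1 ⊢
  rw [← hx1, ← hq1, ← hD] at hc
  have hql' : 1 - q1^2 ≤ σ := by
    have : (l2 - l1) * (1 - q1^2) ≤ (l2 - l1) * σ := by rw [hδσ] at hql; linarith
    exact le_of_mul_le_mul_left this hpos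
  have hxl' : D - x1^2 ≤ σ * D := by
    have : (l2 - l1) * (D - x1^2) ≤ (l2 - l1) * (σ * D) := by rw [hδσ] at hax; linarith
    exact le_of_mul_le_mul_left this hpos
  have hc' : (1 - q1 * x1)^2 ≤ (1 - q1^2) * (D - x1^2) := by
    refine le_trans (le_of_eq ?_) (le_trans hc (le_of_eq ?_)) <;> ring
  exact epic_sin_real σ D x1 q1 hσ0 hσ1 hD1 hq0 hx0 hql' hxl' hc'

/-- two-sided quadratic estimate -/
theorem epic_main {V : Type*} [AddCommGroup V] [Module ℝ V] (m a : V →ₗ[ℝ] V →ₗ[ℝ] ℝ)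
    (hs : ∀ x y, m x y = m y x) (has : ∀ x y, a x y = a y x)
    (hp : ∀ x, 0 ≤ m x x) (q u : V) (l1 l2 ln δ e : ℝ)
    (h1 : 0 < l1) (h12 : l1 < l2) (h2n : l2 ≤ ln) (hq : m q q = 1) (hu : m u u = 1)
    (hlow : ∀ x, l2 * m x x - (l2 - l1) * (m u x)^2 ≤ a x x)
    (hup : ∀ x, a x x ≤ ln * m x x)
    (hcs : ∀ x w ρ, 0 ≤ ρ → a x x = ρ * m x x →
      (a x w - ρ * m x w)^2 ≤ (ρ * (ρ - l1) / l1 * m x x) * a w w)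
    (hδ : a q q = l1 + δ) (hδ0 : 0 ≤ δ) (hδs : 6 * δ ≤ l2 - l1)
    (he0 : 0 ≤ e) (he : e^2 = 32 * δ^2 * (l1 + l2) / (l1^2 * (l2 - l1)))
    (x y : V) (hx : m q x = 1) (hy : m q y = 1) (ρx ρy : ℝ)
    (hρx : a x x = ρx * m x x) (hρy : a y y = ρy * m y y) (hρx1 : l1 ≤ ρx)
    (hρx' : ρx - l1 ≤ δ / 4) (hρy' : ρy ≤ l1 + δ)
    (hpos : 0 ≤ 1 - l1 / l2 - 2 * δ / l2 - e) :
    (1 - 4 * δ / (l2 - l1)) * (1 - l1 / l2 - 2 * δ / l2 - e) * a (y - x) (y - x) ≤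
      ρy - ρx - 2 / m x x * (a x (y - x) - ρx * m x (y - x)) ∧
    ρy - ρx - 2 / m x x * (a x (y - x) - ρx * m x (y - x)) ≤
      (1 - l1 / ln + e) * a (y - x) (y - x) := by
  have hpl : 0 < l2 - l1 := by linarith
  have hl2 : 0 < l2 := by linarith
  have hln : 0 < ln := by linarith
  obtain ⟨w, hw⟩ : ∃ w, w = y - x := ⟨_, rfl⟩
  have hyw : y = x + w := by rw [hw]; abel
  rw [← hw]
  have hqw : m q w = 0 := by rw [hw, map_sub, hx, hy]; ring
  obtain ⟨sx1, sx2, sx3⟩ := epic_sin m a hs hp q u l1 l2 δ h12 hq hu hlow hδ hδ0 hδs x hx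
    (by rw [hρx]; apply mul_le_mul_of_nonneg_right _ (hp x); linarith)
  obtain ⟨sy1, sy2, sy3⟩ := epic_sin m a hs hp q u l1 l2 δ h12 hq hu hlow hδ hδ0 hδs y hy
    (by rw [hρy]; exact mul_le_mul_of_nonneg_right hρy' (hp y))
  have htr := epic_trace m a hs hp q u l1 l2 δ h12 hq hu hlow hδ w hqw
  have hc := hcs x w ρx (by linarith) hρx
  have hupw := hup w
  have hmw := hp w
  -- D difference
  have hDD : m y y - m x x = m ((y - q) + (x - q)) w := by
    rw [hyw]
    simp only [map_add, map_sub, LinearMap.add_apply, LinearMap.sub_apply, hqw]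
    rw [hs w x]; ring
  have hpar : m ((y - q) + (x - q)) ((y - q) + (x - q)) ≤ 2 * ((m y y - 1) + (m x x - 1)) := by
    have := hp ((y - q) - (x - q))
    simp only [map_add, map_sub, LinearMap.add_apply, LinearMap.sub_apply, hq, hx, hy, hs y q, hs x q] at this ⊢
    linarith
  have hdc := epic_cs m hs hp ((y - q) + (x - q)) w
  rw [← hDD] at hdc
  have hid : a y y - ρx * m y y = 2 * (a x w - ρx * m x w) + (a w w - ρx * m w w) := by
    rw [hyw]
    simp only [map_add, LinearMap.add_apply]
    rw [hs w x, has w x, hρx]; ring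
  obtain ⟨D, hD⟩ : ∃ D, D = m y y := ⟨_, rfl⟩
  obtain ⟨D', hD'⟩ : ∃ D, D = m x x := ⟨_, rfl⟩
  obtain ⟨b, hb⟩ : ∃ D, D = a w w := ⟨_, rfl⟩
  obtain ⟨c, hcc⟩ : ∃ D, D = m w w := ⟨_, rfl⟩
  obtain ⟨h, hh⟩ : ∃ D, D = a x w - ρx * m x w := ⟨_, rfl⟩
  rw [hρy] at hid
  rw [← hD, ← hh, ← hb, ← hcc] at hid
  rw [← hD, ← hD'] at hpar
  rw [← hD, ← hD', ← hcc] at hdc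
  rw [← hcc, ← hb] at htr hupw
  rw [← hcc] at hmw
  rw [← hh, ← hD', ← hb] at hc
  rw [← hD'] at sx1 sx2 sx3
  rw [← hD] at sy1 sy2 sy3
  rw [← hD', ← hh, ← hb]
  have hcb : l1 * c ≤ b := le_trans (mul_le_mul_of_nonneg_right (by linarith) hmw) htr
  have hb0 : 0 ≤ b := le_trans (by positivity) hcb
  have hD0 : 0 < D := by linarith
  have hD'0 : 0 < D' := by linarith
  -- g
  obtain ⟨g, hg⟩ : ∃ g, g = 2 / D' * h := ⟨_, rfl⟩
  rw [← hg]
  have hg2 : g^2 ≤ (l1 + l2) / 2 * δ / l1 * b := by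
    have e1 : g^2 = 4 / D'^2 * h^2 := by rw [hg]; ring
    rw [e1]
    calc 4 / D'^2 * h^2 ≤ 4 / D'^2 * (ρx * (ρx - l1) / l1 * D' * b) := by gcongr
      _ = 4 * (ρx * (ρx - l1) / l1 * b) / D' := by field_simp
      _ ≤ 4 * (ρx * (ρx - l1) / l1 * b) := by
        apply div_le_self _ sx3
        have : 0 ≤ ρx - l1 := by linarith
        have : 0 ≤ ρx := by linarith
        positivity
      _ ≤ 4 * (((l1 + l2) / 2) * (δ / 4) / l1 * b) := by
        have : 0 ≤ ρx - l1 := by linarith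
        have : 0 ≤ ρx := by linarith
        have : ρx ≤ (l1 + l2) / 2 := by linarith
        gcongr
      _ = _ := by ring
  have hd2 : (D - D')^2 ≤ 48 * δ / (l2 - l1) * (b / l1) := by
    calc (D - D')^2 ≤ _ := hdc
      _ ≤ (48 * δ / (l2 - l1)) * c := by
        apply mul_le_mul_of_nonneg_right _ hmw
        have : 48 * δ / (l2 - l1) = 4 * (12 * δ / (l2 - l1)) := by ring
        rw [this]; linarith
      _ ≤ _ := by
        apply mul_le_mul_of_nonneg_left _ (by positivity)
        rw [le_div_iff₀ h1]; linarith
  have hE : ((D - D') * g)^2 ≤ (e * b)^2 := by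
    rw [mul_pow, mul_pow, he]
    calc (D - D')^2 * g^2 ≤ (48 * δ / (l2 - l1) * (b / l1)) * ((l1 + l2) / 2 * δ / l1 * b) := by
          apply mul_le_mul hd2 hg2 (sq_nonneg _) (by positivity)
      _ = 24 * (δ^2 * (l1 + l2) / (l1^2 * (l2 - l1)) * b^2) := by field_simp; ring
      _ ≤ 32 * (δ^2 * (l1 + l2) / (l1^2 * (l2 - l1)) * b^2) := by
          apply mul_le_mul_of_nonneg_right (by norm_num)
          have : 0 < l1 + l2 := by linarith
          positivity
      _ = _ := by ring
  have hE2 := abs_le_of_sq_le_sq' hE (by positivity)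
  have hid2 : D * (ρy - ρx - g) = (b - ρx * c) - (D - D') * g := by
    have : D' * g = 2 * h := by rw [hg]; field_simp
    linear_combination hid - this
  have hlo : (1 - l1 / l2 - 2 * δ / l2 - e) * b ≤ D * (ρy - ρx - g) := by
    have : ρx * c ≤ (l1 + 2 * δ) / l2 * b := by
      rw [div_mul_eq_mul_div, le_div_iff₀ hl2]
      have k1 : (l1 + δ) * l2 ≤ (l1 + 2 * δ) * (l2 - δ) := by nlinarith only [hδ0, hδs, h12]
      calc ρx * c * l2 ≤ ((l1 + δ) * l2) * c := by
            have : ρx * c ≤ (l1 + δ) * c := mul_le_mul_of_nonneg_right (by linarith) hmw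
            nlinarith only [this, hl2]
        _ ≤ (l1 + 2 * δ) * (l2 - δ) * c := mul_le_mul_of_nonneg_right k1 hmw
        _ ≤ (l1 + 2 * δ) * b := by
            rw [mul_assoc]; apply mul_le_mul_of_nonneg_left htr (by linarith)
    have k2 : (1 - l1 / l2 - 2 * δ / l2 - e) * b = b - (l1 + 2 * δ) / l2 * b - e * b := by ring
    rw [hid2, k2]; linarith [hE2.2]
  have hhi : D * (ρy - ρx - g) ≤ (1 - l1 / ln + e) * b := by
    have : l1 / ln * b ≤ ρx * c := by
      rw [div_mul_eq_mul_div, div_le_iff₀ hln]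
      nlinarith only [mul_le_mul_of_nonneg_left hupw h1.le, mul_le_mul_of_nonneg_right hρx1 (mul_nonneg hmw hln.le)]
    rw [hid2]; linarith [hE2.1]
  have hF0 : 0 ≤ ρy - ρx - g := by
    by_contra hneg
    push Not at hneg
    linarith [mul_nonneg hpos hb0, mul_neg_of_pos_of_neg hD0 hneg]
  constructor
  · have h4 : 0 ≤ 1 - 4 * δ / (l2 - l1) := by
      have : 4 * δ / (l2 - l1) ≤ 1 := by rw [div_le_iff₀ hpl]; linarith
      linarith
    calc (1 - 4 * δ / (l2 - l1)) * (1 - l1 / l2 - 2 * δ / l2 - e) * b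
        ≤ (1 - 4 * δ / (l2 - l1)) * (D * (ρy - ρx - g)) := by
          rw [mul_assoc]; exact mul_le_mul_of_nonneg_left hlo h4
      _ = ((1 - 4 * δ / (l2 - l1)) * D) * (ρy - ρx - g) := by ring
      _ ≤ 1 * (ρy - ρx - g) := mul_le_mul_of_nonneg_right sy2 hF0
      _ = _ := one_mul _
  · linarith [mul_le_mul_of_nonneg_right sy3 hF0]


/-- One step of the accelerated scheme, abstract form. -/
theorem epic_step {V : Type*} [AddCommGroup V] [Module ℝ V] (t : V →ₗ[ℝ] V →ₗ[ℝ] ℝ)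
    (hts : ∀ x y, t x y = t y x) (htp : ∀ x, 0 ≤ t x x) (φ : V →ₗ[ℝ] ℝ)
    (f : V → ℝ) (g : V → V → ℝ) (l1 δ μ L τ : ℝ) (hδ0 : 0 ≤ δ) (hμ : 0 < μ) (hμL : μ ≤ L)
    (hτ0 : 0 < τ) (hτ : τ^2 * L ≤ μ) (hτ1 : τ ≤ 1)
    (hsc : ∀ x y, φ x = 1 → φ y = 1 → f x - l1 ≤ δ / 4 → f y ≤ l1 + δ →
      μ / 2 * t (y - x) (y - x) ≤ f y - f x - g x (y - x) ∧
      f y - f x - g x (y - x) ≤ L / 2 * t (y - x) (y - x))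
    (xs : V) (hxs : φ xs = 1) (hfxs : f xs = l1) (hgxs : ∀ w, g xs w = 0)
    (hU : ∀ y, φ y = 1 → f y - l1 ≤ L / 2 * t (y - xs) (y - xs))
    (hdesc : ∀ x R, φ x = 1 → φ R = 0 → (∀ w, φ w = 0 → t R w = g x w) →
      f (x - (1 / L) • R) ≤ f x)
    (X Z Xb R : V) (hX : φ X = 1) (hZ : φ Z = 1) (hXb : (1 + τ) • Xb = X + τ • Z)
    (hR : φ R = 0) (hRg : ∀ w, φ w = 0 → t R w = g Xb w)
    (hfX : f X ≤ l1 + δ) (ε : ℝ)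
    (hE : f X - l1 + μ / 2 * t (Z - xs) (Z - xs) ≤ 2 * ε) (hε : 8 * (L / μ) * ε ≤ δ) :
    f (Xb - (1 / L) • R) ≤ l1 + δ ∧
    f (Xb - (1 / L) • R) - l1 + μ / 2 * t ((1 - τ) • Z + τ • Xb - (τ / μ) • R - xs)
        ((1 - τ) • Z + τ • Xb - (τ / μ) • R - xs) ≤
      (1 - τ) * (f X - l1 + μ / 2 * t (Z - xs) (Z - xs)) := by
  have hL : 0 < L := by linarith
  have hXb1 : φ Xb = 1 := by
    have := congrArg φ hXb
    simp only [map_smul, map_add, hX, hZ, smul_eq_mul, mul_one] at this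
    have h0 : (1 + τ) ≠ 0 := by positivity
    exact mul_left_cancel₀ h0 (by rw [this, mul_one])
  have hsX := (hsc xs X hxs hX (by rw [hfxs]; linarith) hfX).1
  rw [hgxs, hfxs] at hsX
  -- shifted variables
  obtain ⟨ζ, hζ⟩ : ∃ ζ, ζ = Z - xs := ⟨_, rfl⟩
  obtain ⟨η, hη⟩ : ∃ η, η = Xb - xs := ⟨_, rfl⟩
  have hX2 : X - xs = (1 + τ) • η - τ • ζ := by
    have : X = (1 + τ) • Xb - τ • Z := by rw [hXb]; abel
    rw [this, hη, hζ]; module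
  have hXm : X - Xb = τ • η - τ • ζ := by
    have : X = (1 + τ) • Xb - τ • Z := by rw [hXb]; abel
    rw [this, hη, hζ]; module
  have hZn : (1 - τ) • Z + τ • Xb - (τ / μ) • R - xs = (1 - τ) • ζ + τ • η - (τ / μ) • R := by
    rw [hη, hζ]; module
  rw [hZn]
  rw [← hζ] at hE ⊢
  rw [hX2] at hsX
  have hφη : φ η = 0 := by rw [hη, map_sub, hXb1, hxs]; ring
  have hφζ : φ ζ = 0 := by rw [hζ, map_sub, hZ, hxs]; ring
  have hF0 : 0 ≤ f X - l1 := by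
    have := htp ((1 + τ) • η - τ • ζ)
    have : 0 ≤ μ / 2 * t ((1 + τ) • η - τ • ζ) ((1 + τ) • η - τ • ζ) := by positivity
    linarith
  have e1 : (1 + τ) * t η η = t ((1 + τ) • η - τ • ζ) ((1 + τ) • η - τ • ζ) + τ * t ζ ζ
      - τ * (1 + τ) * t (η - ζ) (η - ζ) := by
    simp only [map_sub, map_smul, LinearMap.sub_apply, LinearMap.smul_apply, smul_eq_mul]
    rw [hts ζ η]
    ring
  have hηb : μ / 2 * t η η ≤ 2 * ε := by
    have h1 : 0 ≤ τ * (1 + τ) * t (η - ζ) (η - ζ) := by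
      have := htp (η - ζ)
      positivity
    have h2 : μ / 2 * ((1 + τ) * t η η) ≤
        μ / 2 * (t ((1 + τ) • η - τ • ζ) ((1 + τ) • η - τ • ζ) + τ * t ζ ζ) := by
      apply mul_le_mul_of_nonneg_left _ (by positivity); linarith
    have h3 : 0 ≤ τ * (μ / 2 * t η η) := by have := htp η; positivity
    have h4 : τ * (μ / 2 * t ζ ζ) ≤ τ * (2 * ε - (f X - l1)) :=
      mul_le_mul_of_nonneg_left (by linarith) hτ0.le
    have h5 : 0 ≤ μ / 2 * t ζ ζ := by have := htp ζ; positivity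
    have h6 : (1 - τ) * (f X - l1) ≤ (1 - τ) * (2 * ε) :=
      mul_le_mul_of_nonneg_left (by linarith) (by linarith)
    linarith
  have hfXb : f Xb - l1 ≤ δ / 4 := by
    have h1 := hU Xb hXb1
    rw [← hη] at h1
    have h2 : L / 2 * t η η = (L / μ) * (μ / 2 * t η η) := by field_simp
    have h3 : (L / μ) * (μ / 2 * t η η) ≤ (L / μ) * (2 * ε) :=
      mul_le_mul_of_nonneg_left hηb (by positivity)
    linarith
  have hp := hdesc Xb R hXb1 hR hRg
  have hp2 : f (Xb - (1 / L) • R) ≤ l1 + δ := by linarith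
  refine ⟨hp2, ?_⟩
  have s1 := (hsc Xb (Xb - (1 / L) • R) hXb1 (by rw [map_sub, map_smul, hXb1, hR]; simp) hfXb hp2).2
  have s2 := (hsc Xb xs hXb1 hxs hfXb (by rw [hfxs]; linarith)).1
  have s3 := (hsc Xb X hXb1 hX hfXb hfX).1
  have w1 : Xb - (1 / L) • R - Xb = (-(1 / L)) • R := by module
  have w2 : xs - Xb = (-1 : ℝ) • η := by rw [hη]; module
  have hG := htp R
  have h0 := htp (X - Xb)
  have h0' : 0 ≤ μ / 2 * t (X - Xb) (X - Xb) := by positivity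
  have s3' : 0 ≤ f X - f Xb - g Xb (X - Xb) := by linarith
  rw [w1, ← hRg _ (by rw [map_smul, hR]; simp)] at s1
  rw [w2, ← hRg _ (by rw [map_smul, hφη]; simp), hfxs] at s2
  rw [hXm, ← hRg _ (by rw [map_sub, map_smul, map_smul, hφη, hφζ]; simp)] at s3'
  have e2 : t ((1 - τ) • ζ + τ • η - (τ / μ) • R) ((1 - τ) • ζ + τ • η - (τ / μ) • R) =
      (1 - τ) * t ζ ζ + τ * t η η - τ * (1 - τ) * t (η - ζ) (η - ζ)
      - 2 * (τ / μ) * ((1 - τ) * t R ζ + τ * t R η) + (τ / μ)^2 * t R R := by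
    simp only [map_add, map_sub, map_smul, LinearMap.add_apply, LinearMap.sub_apply,
      LinearMap.smul_apply, smul_eq_mul]
    rw [hts ζ η, hts ζ R, hts η R]
    ring
  rw [e2]
  simp only [map_sub, map_smul, LinearMap.sub_apply, LinearMap.smul_apply, smul_eq_mul] at s1 s2 s3'
  have e3 : L / 2 * (-(1 / L) * (-(1 / L) * t R R)) = t R R / (2 * L) := by field_simp
  have e4 : 1 / L * t R R = 2 * (t R R / (2 * L)) := by field_simp
  have e5 : μ / 2 * ((τ / μ)^2 * t R R) ≤ t R R / (2 * L) := by
    have : μ / 2 * ((τ / μ)^2 * t R R) = (τ^2 / μ) * (t R R / 2) := by field_simp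
    rw [this]
    have h1 : τ^2 / μ ≤ 1 / L := by
      rw [div_le_div_iff₀ hμ hL]; linarith
    calc _ ≤ 1 / L * (t R R / 2) := by gcongr
      _ = _ := by field_simp
  have e6 : 0 ≤ μ / 2 * (τ * (1 - τ) * t (η - ζ) (η - ζ)) := by
    have := htp (η - ζ)
    have : 0 ≤ 1 - τ := by linarith
    positivity
  have e7 : μ / 2 * (2 * (τ / μ) * ((1 - τ) * t R ζ + τ * t R η)) =
      τ * ((1 - τ) * t R ζ + τ * t R η) := by field_simp
  have s2' := mul_le_mul_of_nonneg_left s2 hτ0.le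
  have s3'' := mul_nonneg (sub_nonneg.2 hτ1) s3'
  linarith


theorem epic_pencil {N : ℕ} (B P : Matrix (Fin (N+1)) (Fin (N+1)) ℝ) (hB : B.IsHermitian)
    (hP : P.PosDef) (ξ : ℝ)
    (hξ : ∀ ζ : ℝ, (∃ v : Fin (N+1) → ℝ, v ≠ 0 ∧ B *ᵥ v = ζ • (P *ᵥ v)) → ξ ≤ ζ)
    (v : Fin (N+1) → ℝ) : ξ * (v ⬝ᵥ (P *ᵥ v)) ≤ v ⬝ᵥ (B *ᵥ v) := by
  have hPpos : ∀ v : Fin (N+1) → ℝ, v ≠ 0 → 0 < v ⬝ᵥ (P *ᵥ v) := fun v hv => by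
    simpa using hP.dotProduct_mulVec_pos hv
  have hcomp : IsCompact (Metric.sphere (0 : Fin (N+1) → ℝ) 1) := isCompact_sphere _ _
  have hne : (Metric.sphere (0 : Fin (N+1) → ℝ) 1).Nonempty :=
    NormedSpace.sphere_nonempty.2 zero_le_one
  have hnz : ∀ v ∈ Metric.sphere (0 : Fin (N+1) → ℝ) 1, v ≠ 0 := by
    rintro v hv rfl
    simp at hv
  have hc : ContinuousOn (fun v : Fin (N+1) → ℝ => (v ⬝ᵥ (B *ᵥ v)) / (v ⬝ᵥ (P *ᵥ v)))
      (Metric.sphere (0 : Fin (N+1) → ℝ) 1) := by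
    apply ContinuousOn.div
    · fun_prop
    · fun_prop
    · intro v hv; exact (hPpos v (hnz v hv)).ne'
  obtain ⟨v0, hv0, hmin⟩ := hcomp.exists_isMinOn hne hc
  obtain ⟨c, hcdef⟩ : ∃ c, c = (v0 ⬝ᵥ (B *ᵥ v0)) / (v0 ⬝ᵥ (P *ᵥ v0)) := ⟨_, rfl⟩
  have hall : ∀ v : Fin (N+1) → ℝ, c * (v ⬝ᵥ (P *ᵥ v)) ≤ v ⬝ᵥ (B *ᵥ v) := by
    intro v
    by_cases hv : v = 0
    · simp [hv]
    have hn : 0 < ‖v‖ := norm_pos_iff.2 hv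
    have h1 : (‖v‖⁻¹) • v ∈ Metric.sphere (0 : Fin (N+1) → ℝ) 1 := by
      simp [norm_smul, hn.ne']
    have h2 := hmin h1
    simp only [Set.mem_ofPred_eq] at h2
    rw [← hcdef, le_div_iff₀ (hPpos _ (hnz _ h1))] at h2
    simp only [mulVec_smul, dotProduct_smul, smul_dotProduct, smul_eq_mul] at h2
    have h3 : 0 < ‖v‖⁻¹ * ‖v‖⁻¹ := by positivity
    refine le_of_mul_le_mul_left ?_ h3
    linarith
  have hpsd : (B - c • P).PosSemidef := by
    refine Matrix.PosSemidef.of_dotProduct_mulVec_nonneg (hB.sub (hP.1.smul (IsSelfAdjoint.all c))) ?_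
    intro v
    simp only [star_trivial, sub_mulVec, smul_mulVec, dotProduct_sub, dotProduct_smul, smul_eq_mul]
    linarith [hall v]
  have hz : (B - c • P) *ᵥ v0 = 0 := by
    rw [← hpsd.dotProduct_mulVec_zero_iff]
    simp only [star_trivial, sub_mulVec, smul_mulVec, dotProduct_sub, dotProduct_smul, smul_eq_mul]
    rw [hcdef, div_mul_cancel₀ _ (hPpos v0 (hnz v0 hv0)).ne', sub_self]
  have hle := hξ c ⟨v0, hnz v0 hv0, by
    rw [sub_mulVec, smul_mulVec, sub_eq_zero] at hz; exact hz⟩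
  have hv0 : 0 ≤ v ⬝ᵥ (P *ᵥ v) := by
    simpa using hP.posSemidef.dotProduct_mulVec_nonneg v
  exact (mul_le_mul_of_nonneg_right hle hv0).trans (hall v)

theorem epic_expand {N : ℕ} (A M : Matrix (Fin N) (Fin N) ℝ) (hM : M.PosDef)
    (lam : Fin N → ℝ) (u : Fin N → Fin N → ℝ)
    (heig : ∀ i, A *ᵥ u i = lam i • (M *ᵥ u i))
    (horth : ∀ i j, u i ⬝ᵥ (M *ᵥ u j) = if i = j then (1:ℝ) else 0) (x y : Fin N → ℝ) :
    x ⬝ᵥ (M *ᵥ y) = ∑ i, (u i ⬝ᵥ (M *ᵥ x)) * (u i ⬝ᵥ (M *ᵥ y)) ∧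
    x ⬝ᵥ (A *ᵥ y) = ∑ i, lam i * ((u i ⬝ᵥ (M *ᵥ x)) * (u i ⬝ᵥ (M *ᵥ y))) := by
  have hsM : ∀ x y : Fin N → ℝ, x ⬝ᵥ (M *ᵥ y) = y ⬝ᵥ (M *ᵥ x) := by
    intro x y
    have : Mᵀ = M := by have h := hM.1; rwa [IsHermitian, conjTranspose_eq_transpose_of_trivial] at h
    rw [dotProduct_mulVec, ← mulVec_transpose, this, dotProduct_comm]
  have hU : (of u) * (M * (of u)ᵀ) = 1 := by
    ext i j
    have := horth i j
    rw [Matrix.one_apply, ← this]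
    simp only [mul_apply, dotProduct, mulVec, of_apply, transpose_apply]
  have hU2 : (M * (of u)ᵀ) * of u = 1 := mul_eq_one_comm.1 hU
  have hU3 : (of u)ᵀ * (of u * M) = 1 := by
    have : (of u * M) * (of u)ᵀ = 1 := by rw [Matrix.mul_assoc]; exact hU
    exact mul_eq_one_comm.1 this
  have hexp : ∀ y : Fin N → ℝ, y = ∑ i, (u i ⬝ᵥ (M *ᵥ y)) • u i := by
    intro y
    have : ((of u)ᵀ * (of u * M)) *ᵥ y = y := by rw [hU3, one_mulVec]
    conv_lhs => rw [← this]
    rw [← mulVec_mulVec, ← mulVec_mulVec]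
    ext j
    simp [mulVec, dotProduct, Finset.sum_apply, mul_comm]
  have h1 : M *ᵥ y = ∑ i, (u i ⬝ᵥ (M *ᵥ y)) • (M *ᵥ u i) := by
    conv_lhs => rw [hexp y]
    rw [mulVec_sum]
    simp [mulVec_smul]
  have h2 : A *ᵥ y = ∑ i, (u i ⬝ᵥ (M *ᵥ y)) • (lam i • (M *ᵥ u i)) := by
    conv_lhs => rw [hexp y]
    rw [mulVec_sum]
    simp [mulVec_smul, heig]
  constructor
  · conv_lhs => rw [h1]
    rw [dotProduct_sum]
    refine Finset.sum_congr rfl fun i _ => ?_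
    rw [dotProduct_smul, smul_eq_mul, hsM x (u i)]; ring
  · conv_lhs => rw [h2]
    rw [dotProduct_sum]
    refine Finset.sum_congr rfl fun i _ => ?_
    rw [dotProduct_smul, dotProduct_smul, smul_eq_mul, smul_eq_mul, hsM x (u i)]; ring

theorem epic_compl {N : ℕ} (M : Matrix (Fin (N+1)) (Fin (N+1)) ℝ) 
    (q : Fin (N+1) → ℝ) (Q : Matrix (Fin (N+1)) (Fin N) ℝ)
    (hsM : ∀ x y : Fin (N+1) → ℝ, x ⬝ᵥ (M *ᵥ y) = y ⬝ᵥ (M *ᵥ x))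
    (hq1 : q ⬝ᵥ (M *ᵥ q) = 1)
    (hQMQ : Qᵀ * M * Q = 1)
    (hQMq : (Qᵀ * M) *ᵥ q = 0) :
    (∀ s, q ⬝ᵥ (M *ᵥ (Q *ᵥ s)) = 0) ∧ 
    ∀ w : Fin (N+1) → ℝ, q ⬝ᵥ (M *ᵥ w) = 0 → ∃ s, w = Q *ᵥ s := by
  have hqQ : ∀ s, q ⬝ᵥ (M *ᵥ (Q *ᵥ s)) = 0 := by
    intro s
    rw [hsM, ← vecMul_transpose, ← dotProduct_mulVec, mulVec_mulVec, hQMq, dotProduct_zero]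
  refine ⟨hqQ, ?_⟩
  let F : (ℝ × (Fin N → ℝ)) →ₗ[ℝ] (Fin (N+1) → ℝ) :=
    (LinearMap.toSpanSingleton ℝ _ q).coprod Q.mulVecLin
  have hF : ∀ p, F p = p.1 • q + Q *ᵥ p.2 := fun p => by simp [F]
  have hinj : Function.Injective F := by
    rw [← LinearMap.ker_eq_bot, LinearMap.ker_eq_bot']
    intro p hp
    rw [hF] at hp
    have h1 := congrArg (fun v => q ⬝ᵥ (M *ᵥ v)) hp
    simp only [mulVec_add, mulVec_smul, dotProduct_add, dotProduct_smul, hq1, hqQ, smul_eq_mul,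
      mulVec_zero, dotProduct_zero, mul_one, add_zero] at h1
    have h2 := congrArg (fun v => (Qᵀ * M) *ᵥ v) hp
    simp only [mulVec_add, mulVec_smul, hQMq, mulVec_mulVec, hQMQ, mulVec_zero, one_mulVec,
      smul_zero, zero_add] at h2
    exact Prod.ext h1 h2
  have hsurj : Function.Surjective F := by
    rwa [← LinearMap.injective_iff_surjective_of_finrank_eq_finrank]
    simp [add_comm]
  intro w hw
  obtain ⟨p, hp⟩ := hsurj w
  rw [hF] at hp
  rw [← hp] at hw
  simp only [mulVec_add, mulVec_smul, dotProduct_add, dotProduct_smul, hq1, hqQ, smul_eq_mul,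
      mul_one, add_zero] at hw
  exact ⟨p.2, by rw [← hp, hw]; simp⟩

theorem epic_cs_pencil {N : ℕ} (lam c d : Fin N → ℝ) (l1 ρ : ℝ) (hl1 : 0 < l1)
    (hl : ∀ i, l1 ≤ lam i) (_hρ : 0 ≤ ρ)
    (h : ∑ i, lam i * (c i * c i) = ρ * ∑ i, c i * c i) :
    (∑ i, lam i * (c i * d i) - ρ * ∑ i, c i * d i)^2 ≤
      (ρ * (ρ - l1) / l1 * ∑ i, c i * c i) * ∑ i, lam i * (d i * d i) := by
  have hlp : ∀ i, 0 < lam i := fun i => hl1.trans_le (hl i)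
  have e1 : ∑ i, lam i * (c i * d i) - ρ * ∑ i, c i * d i =
      ∑ i, ((lam i - ρ) / Real.sqrt (lam i) * c i) * (Real.sqrt (lam i) * d i) := by
    rw [Finset.mul_sum, ← Finset.sum_sub_distrib]
    refine Finset.sum_congr rfl fun i _ => ?_
    have := Real.sqrt_pos.2 (hlp i)
    field_simp
  rw [e1]
  refine (Finset.sum_mul_sq_le_sq_mul_sq _ _ _).trans ?_
  have e2 : ∑ i, (Real.sqrt (lam i) * d i)^2 = ∑ i, lam i * (d i * d i) := by
    refine Finset.sum_congr rfl fun i _ => ?_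
    rw [mul_pow, Real.sq_sqrt (hlp i).le]; ring
  rw [e2]
  have e4 : ∑ i, ((lam i - ρ) / Real.sqrt (lam i) * c i)^2 =
      (∑ i, lam i * (c i * c i)) - 2 * ρ * (∑ i, c i * c i) + ρ^2 * ∑ i, (c i * c i) / lam i := by
    simp only [Finset.mul_sum]
    rw [← Finset.sum_sub_distrib, ← Finset.sum_add_distrib]
    refine Finset.sum_congr rfl fun i _ => ?_
    rw [mul_pow, div_pow, Real.sq_sqrt (hlp i).le]
    have := (hlp i).ne'
    field_simp
    ring
  have e5 : ∑ i, (c i * c i) / lam i ≤ (∑ i, c i * c i) / l1 := by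
    rw [Finset.sum_div]
    refine Finset.sum_le_sum fun i _ => ?_
    have := mul_self_nonneg (c i)
    have := hl i
    gcongr
  apply mul_le_mul_of_nonneg_right
  · rw [e4, h]
    have := mul_le_mul_of_nonneg_left e5 (sq_nonneg ρ)
    have e6 : ρ * (ρ - l1) / l1 * ∑ i, c i * c i = ρ^2 * ((∑ i, c i * c i) / l1) - ρ * ∑ i, c i * c i := by
      field_simp
    rw [e6]; linarith
  · refine Finset.sum_nonneg fun i _ => mul_nonneg (hlp i).le (mul_self_nonneg _)

/-- properties of the projected preconditioned residual -/
theorem epic_proj {N : ℕ} (M T : Matrix (Fin N) (Fin N) ℝ) (hM : M.PosDef) (hT : T.PosDef)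
    (q : Fin N → ℝ) (hq1 : q ⬝ᵥ (M *ᵥ q) = 1) (qt : Fin N → ℝ) (hqt : qt = T⁻¹ *ᵥ (M *ᵥ q))
    (Pi : Matrix (Fin N) (Fin N) ℝ)
    (hPi : Pi = 1 - (q ⬝ᵥ (M *ᵥ qt))⁻¹ • vecMulVec qt (q ᵥ* M)) (r : Fin N → ℝ) :
    q ⬝ᵥ (M *ᵥ (Pi *ᵥ (T⁻¹ *ᵥ r))) = 0 ∧
    ∀ w, q ⬝ᵥ (M *ᵥ w) = 0 → w ⬝ᵥ (T *ᵥ (Pi *ᵥ (T⁻¹ *ᵥ r))) = w ⬝ᵥ r := by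
  have hMt : Mᵀ = M := by have h := hM.1; rwa [IsHermitian, conjTranspose_eq_transpose_of_trivial] at h
  have hqM : q ᵥ* M = M *ᵥ q := by rw [← mulVec_transpose, hMt]
  have hMq : M *ᵥ q ≠ 0 := by
    intro h; rw [h] at hq1; simp at hq1
  have hTT : ∀ v : Fin N → ℝ, T *ᵥ (T⁻¹ *ᵥ v) = v := by
    intro v
    rw [mulVec_mulVec, mul_nonsing_inv _ ((isUnit_iff_isUnit_det T).1 hT.isUnit), one_mulVec]
  have hd : 0 < q ⬝ᵥ (M *ᵥ qt) := by
    rw [dotProduct_mulVec, hqM, hqt]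
    simpa using hT.inv.dotProduct_mulVec_pos hMq
  have hPv : ∀ v : Fin N → ℝ, Pi *ᵥ v = v - ((q ⬝ᵥ (M *ᵥ qt))⁻¹ * (q ⬝ᵥ (M *ᵥ v))) • qt := by
    intro v
    rw [hPi, sub_mulVec, one_mulVec, smul_mulVec, vecMulVec_mulVec, ← dotProduct_mulVec]
    simp [smul_smul]
  refine ⟨?_, ?_⟩
  · rw [hPv, mulVec_sub, mulVec_smul, dotProduct_sub, dotProduct_smul, smul_eq_mul]
    field_simp
    ring
  · intro w hw
    rw [hPv, mulVec_sub, mulVec_smul, hTT, dotProduct_sub, dotProduct_smul, hqt, hTT, ← hqM, dotProduct_comm w (q ᵥ* M), ← dotProduct_mulVec, hw]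
    simp


theorem epic_facts {V : Type*} [AddCommGroup V] [Module ℝ V] (m a t : V →ₗ[ℝ] V →ₗ[ℝ] ℝ)
    (hs : ∀ x y, m x y = m y x) (has : ∀ x y, a x y = a y x)
    (hp : ∀ x, 0 ≤ m x x) (htp : ∀ x, 0 ≤ t x x) (q u : V) (l1 l2 ln δ e ξ₁ ξ₂ μ L : ℝ)
    (h1 : 0 < l1) (h12 : l1 < l2) (h2n : l2 ≤ ln) (hq : m q q = 1) (hu : m u u = 1)
    (hau : ∀ x, a u x = l1 * m u x) (hqu : 0 < m q u)
    (hlow : ∀ x, l2 * m x x - (l2 - l1) * (m u x)^2 ≤ a x x)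
    (hlow1 : ∀ x, l1 * m x x ≤ a x x)
    (hup : ∀ x, a x x ≤ ln * m x x)
    (hcs : ∀ x w ρ, 0 ≤ ρ → a x x = ρ * m x x →
      (a x w - ρ * m x w)^2 ≤ (ρ * (ρ - l1) / l1 * m x x) * a w w)
    (hδ : a q q = l1 + δ) (hδ0 : 0 ≤ δ) (hδs : 6 * δ ≤ l2 - l1)
    (he0 : 0 ≤ e) (he : e^2 = 32 * δ^2 * (l1 + l2) / (l1^2 * (l2 - l1)))
    (hpos : 0 ≤ 1 - l1 / l2 - 2 * δ / l2 - e) 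
    (hξ1 : ∀ w, m q w = 0 → ξ₁ * t w w ≤ a w w) (hξ2 : ∀ w, m q w = 0 → a w w ≤ ξ₂ * t w w)
    (hξ20 : 0 < ξ₂) (hL0 : 0 < L)
    (hμ : μ / 2 ≤ (1 - 4 * δ / (l2 - l1)) * (1 - l1 / l2 - 2 * δ / l2 - e) * ξ₁)
    (hL : L / 2 = (1 - l1 / ln + e) * ξ₂)
    (f : V → ℝ) (hf : ∀ x, f x = a x x / m x x) (g : V → V → ℝ)
    (hg : ∀ x w, g x w = 2 / m x x * (a x w - f x * m x w)) (xs : V)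
    (hxs : xs = (m q u)⁻¹ • u) :
    (∀ x y, m q x = 1 → m q y = 1 → f x - l1 ≤ δ / 4 → f y ≤ l1 + δ →
      μ / 2 * t (y - x) (y - x) ≤ f y - f x - g x (y - x) ∧
      f y - f x - g x (y - x) ≤ L / 2 * t (y - x) (y - x)) ∧
    m q xs = 1 ∧ f xs = l1 ∧ (∀ w, g xs w = 0) ∧
    (∀ y, m q y = 1 → f y - l1 ≤ L / 2 * t (y - xs) (y - xs)) ∧
    (∀ x R, m q x = 1 → m q R = 0 → (∀ w, m q w = 0 → t R w = g x w) →
      f (x - (1 / L) • R) ≤ f x) := by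
  have hln : 0 < ln := by linarith
  have hD1 : ∀ x, m q x = 1 → 1 ≤ m x x := by
    intro x hx
    have := epic_cs m hs hp q x
    rw [hx, hq] at this; linarith
  have hfm : ∀ x, m q x = 1 → a x x = f x * m x x := by
    intro x hx
    have := hD1 x hx
    rw [hf, div_mul_cancel₀]; linarith
  have hfl : ∀ x, m q x = 1 → l1 ≤ f x := by
    intro x hx
    have := hD1 x hx
    rw [hf, le_div_iff₀ (by linarith)]; exact hlow1 x
  have hxs1 : m q xs = 1 := by
    rw [hxs, map_smul, smul_eq_mul, inv_mul_cancel₀ hqu.ne']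
  have haxs : ∀ w, a xs w = l1 * m xs w := by
    intro w
    rw [hxs]; simp only [map_smul, LinearMap.smul_apply, smul_eq_mul, hau]; ring
  have hfxs : f xs = l1 := by
    have := hD1 xs hxs1
    rw [hf, haxs, mul_div_cancel_right₀]; linarith
  have hl1n : 0 ≤ 1 - l1 / ln := by
    have : l1 / ln ≤ 1 := by rw [div_le_one hln]; linarith
    linarith
  -- for w in H and ρ ≥ l1
  have hkey : ∀ w ρ, m q w = 0 → l1 ≤ ρ → a w w - ρ * m w w ≤ L / 2 * t w w := by
    intro w ρ hw hρ
    have k1 : l1 / ln * a w w ≤ ρ * m w w := by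
      rw [div_mul_eq_mul_div, div_le_iff₀ hln]
      nlinarith only [mul_le_mul_of_nonneg_left (hup w) h1.le,
        mul_le_mul_of_nonneg_right hρ (mul_nonneg (hp w) hln.le)]
    have k2 : (1 - l1 / ln) * a w w ≤ (1 - l1 / ln) * (ξ₂ * t w w) :=
      mul_le_mul_of_nonneg_left (hξ2 w hw) hl1n
    have k3 : 0 ≤ e * ξ₂ * t w w := by have := htp w; positivity
    rw [hL]; linarith
  have hdiff : ∀ x w ρ, a x x = ρ * m x x → a (x + w) (x + w) - ρ * m (x + w) (x + w) =
      2 * (a x w - ρ * m x w) + (a w w - ρ * m w w) := by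
    intro x w ρ h
    simp only [map_add, LinearMap.add_apply]
    rw [hs w x, has w x, h]; ring
  refine ⟨?_, hxs1, hfxs, ?_, ?_, ?_⟩
  · intro x y hx hy hfx hfy
    have hw : m q (y - x) = 0 := by rw [map_sub, hx, hy]; ring
    obtain ⟨k1, k2⟩ := epic_main m a hs has hp q u l1 l2 ln δ e h1 h12 h2n hq hu hlow hup hcs hδ hδ0 hδs
      he0 he x y hx hy (f x) (f y) (hfm x hx) (hfm y hy) (hfl x hx) hfx hfy hpos
    rw [hg]
    constructor
    · refine le_trans ?_ k1
      have h4 : 0 ≤ 1 - 4 * δ / (l2 - l1) := by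
        have : 4 * δ / (l2 - l1) ≤ 1 := by rw [div_le_iff₀ (by linarith)]; linarith
        linarith
      calc _ ≤ (1 - 4 * δ / (l2 - l1)) * (1 - l1 / l2 - 2 * δ / l2 - e) * ξ₁ * t (y - x) (y - x) :=
            mul_le_mul_of_nonneg_right hμ (htp _)
        _ ≤ _ := by
            rw [mul_assoc _ ξ₁]
            exact mul_le_mul_of_nonneg_left (hξ1 _ hw) (mul_nonneg h4 hpos)
    · refine k2.trans ?_
      rw [hL, mul_assoc _ ξ₂]
      exact mul_le_mul_of_nonneg_left (hξ2 _ hw) (by linarith)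
  · intro w
    rw [hg, hfxs, haxs]; ring
  · intro y hy
    have hw : m q (y - xs) = 0 := by rw [map_sub, hxs1, hy]; ring
    have k1 := hdiff xs (y - xs) l1 (haxs xs)
    rw [add_sub_cancel, haxs (y - xs), hfm y hy] at k1
    have k2 := hkey (y - xs) l1 hw le_rfl
    have k3 := mul_le_mul_of_nonneg_right (hD1 y hy) (sub_nonneg.2 (hfl y hy))
    linarith
  · intro x R hx hR hRg
    have hD := hD1 x hx
    obtain ⟨w, hw⟩ : ∃ w, w = -(1 / L) • R := ⟨_, rfl⟩
    have hqw : m q w = 0 := by rw [hw, map_smul, hR]; simp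
    have hxw : x - (1 / L) • R = x + w := by rw [hw]; module
    rw [hxw]
    have hqy : m q (x + w) = 1 := by rw [map_add, hx, hqw]; ring
    have k1 := hdiff x w (f x) (hfm x hx)
    rw [hfm _ hqy] at k1
    have k2 := hkey w (f x) hqw (hfl x hx)
    have k3 := hRg w hqw
    rw [hg] at k3
    have k4 : 2 * (a x w - f x * m x w) = m x x * t R w := by rw [k3]; field_simp
    have k5 : t R w = - (1 / L * t R R) := by rw [hw]; simp
    have k6 : L / 2 * t w w = 1 / 2 * (1 / L * t R R) := by
      rw [hw]; simp; field_simp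
    have k7 : 0 ≤ 1 / L * t R R := by have := htp R; positivity
    have k8 : 1 * (1 / L * t R R) ≤ m x x * (1 / L * t R R) := mul_le_mul_of_nonneg_right hD k7
    rw [k4, k5] at k1
    rw [k6] at k2
    have k9 : (f (x + w) - f x) * m (x + w) (x + w) ≤ 0 := by linarith
    by_contra hneg
    push Not at hneg
    have := mul_pos (sub_pos.2 hneg) (lt_of_lt_of_le one_pos (hD1 _ hqy))
    linarith

theorem epic_symm {N : ℕ} (M : Matrix (Fin N) (Fin N) ℝ) (hM : M.IsHermitian)
    (x y : Fin N → ℝ) : x ⬝ᵥ (M *ᵥ y) = y ⬝ᵥ (M *ᵥ x) := by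
  have hMt : Mᵀ = M := by rwa [IsHermitian, conjTranspose_eq_transpose_of_trivial] at hM
  rw [dotProduct_mulVec, ← mulVec_transpose, hMt, dotProduct_comm]

theorem epic_tau (τ κ μ L : ℝ) (hμ : 0 < μ) (hμL : μ ≤ L) (hκ : κ = L / μ) (hτ0 : 0 < τ)
    (hτ : τ ≤ κ ^ (-(1/2 : ℝ))) : τ^2 * L ≤ μ ∧ τ ≤ 1 := by
  have hL : 0 < L := by linarith
  have hκ1 : 1 ≤ κ := by rw [hκ, le_div_iff₀ hμ]; linarith
  have hκ0 : 0 < κ := by linarith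
  rw [Real.rpow_neg hκ0.le, ← Real.sqrt_eq_rpow] at hτ
  have hs := Real.sqrt_pos.2 hκ0
  have h1 : τ^2 ≤ ((Real.sqrt κ)⁻¹)^2 := by gcongr
  rw [inv_pow, Real.sq_sqrt hκ0.le, hκ, inv_div, le_div_iff₀ hL] at h1
  refine ⟨h1, hτ.trans ?_⟩
  apply inv_le_one_of_one_le₀
  rw [Real.one_le_sqrt]; exact hκ1

theorem epic_consts (l1 l2 ln δ ξ₁ ξ₂ χ μ L : ℝ) (h1 : 0 < l1) (h12 : l1 < l2) (h2n : l2 ≤ ln)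
    (hξ0 : 0 < ξ₁) (hξ : ξ₁ ≤ ξ₂) (hδ0 : 0 ≤ δ)
    (hχ : χ = (8 * l2 / l1) * (ξ₂ / ξ₁) * Real.sqrt ((l2 + l1) / (2 * (l2 - l1))))
    (hμ : μ = 2 * ξ₁ * (1 - 4 * δ / (l2 - l1)) * (1 - l1 / l2 - (2 + χ) * δ / l2))
    (hL : L = 2 * ξ₂ * (1 - l1 / ln + (χ / l2) * (ξ₁ / ξ₂) * δ))
    (hδ : δ ≤ (l2 - l1) / (2 + χ)) :
    6 * δ ≤ l2 - l1 ∧ ∃ e, 0 ≤ e ∧ e^2 = 32 * δ^2 * (l1 + l2) / (l1^2 * (l2 - l1)) ∧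
      0 ≤ 1 - l1 / l2 - 2 * δ / l2 - e ∧
      μ / 2 ≤ (1 - 4 * δ / (l2 - l1)) * (1 - l1 / l2 - 2 * δ / l2 - e) * ξ₁ ∧
      L / 2 = (1 - l1 / ln + e) * ξ₂ ∧ μ ≤ L := by
  have hpl : 0 < l2 - l1 := by linarith
  have hl2 : 0 < l2 := by linarith
  have hln : 0 < ln := by linarith
  have hξ2 : 0 < ξ₂ := by linarith
  obtain ⟨S, hS⟩ : ∃ S, S = Real.sqrt ((l2 + l1) / (2 * (l2 - l1))) := ⟨_, rfl⟩
  have hS0 : 0 ≤ S := by rw [hS]; positivity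
  have hSq : S^2 = (l2 + l1) / (2 * (l2 - l1)) := by
    rw [hS, Real.sq_sqrt]; have : 0 < l2 + l1 := by linarith
    positivity
  have hS1 : 1 / 2 ≤ S := by
    have : (1:ℝ) / 2 ≤ S^2 := by
      rw [hSq, div_le_div_iff₀ (by norm_num) (by positivity)]; linarith
    nlinarith
  rw [← hS] at hχ
  obtain ⟨χ₀, hχ₀⟩ : ∃ c, c = (8 * l2 / l1) * S := ⟨_, rfl⟩
  have hr : 1 ≤ ξ₂ / ξ₁ := by rw [le_div_iff₀ hξ0]; linarith
  have hχ₀4 : 4 ≤ χ₀ := by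
    have : 8 ≤ 8 * l2 / l1 := by rw [le_div_iff₀ h1]; linarith
    rw [hχ₀]; nlinarith
  have hχχ : χ = χ₀ * (ξ₂ / ξ₁) := by rw [hχ, hχ₀]; ring
  have hχge : χ₀ ≤ χ := by rw [hχχ]; exact le_mul_of_one_le_right (by linarith) hr
  have hδ' : δ * (2 + χ) ≤ l2 - l1 := by rwa [le_div_iff₀ (by linarith)] at hδ
  have h6 : 6 * δ ≤ l2 - l1 := by nlinarith
  have hLe : χ / l2 * (ξ₁ / ξ₂) * δ = χ₀ * δ / l2 := by rw [hχχ]; field_simp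
  have h4 : 0 ≤ 1 - 4 * δ / (l2 - l1) := by
    have : 4 * δ / (l2 - l1) ≤ 1 := by rw [div_le_iff₀ hpl]; linarith
    linarith
  have h4' : 1 - 4 * δ / (l2 - l1) ≤ 1 := by
    have : 0 ≤ 4 * δ / (l2 - l1) := by positivity
    linarith
  have hbpos : 0 ≤ 1 - l1 / l2 - (2 + χ) * δ / l2 := by
    have : 1 - l1 / l2 - (2 + χ) * δ / l2 = (l2 - l1 - δ * (2 + χ)) / l2 := by field_simp
    rw [this]; apply div_nonneg _ hl2.le; linarith
  have hbe : 1 - l1 / l2 - (2 + χ) * δ / l2 ≤ 1 - l1 / l2 - 2 * δ / l2 - χ₀ * δ / l2 := by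
    have : χ₀ * δ / l2 ≤ χ * δ / l2 := by gcongr
    have e : (2 + χ) * δ / l2 = 2 * δ / l2 + χ * δ / l2 := by ring
    linarith
  have he0 : 0 ≤ χ₀ * δ / l2 := by have : 0 ≤ χ₀ := by linarith
                                   positivity
  have hμ2 : μ / 2 ≤ (1 - 4 * δ / (l2 - l1)) * (1 - l1 / l2 - 2 * δ / l2 - χ₀ * δ / l2) * ξ₁ := by
    have : μ / 2 = (1 - 4 * δ / (l2 - l1)) * (1 - l1 / l2 - (2 + χ) * δ / l2) * ξ₁ := by
      rw [hμ]; ring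
    rw [this]; gcongr
  have hL2 : L / 2 = (1 - l1 / ln + χ₀ * δ / l2) * ξ₂ := by rw [hL, hLe]; ring
  refine ⟨h6, χ₀ * δ / l2, he0, ?_, by linarith, hμ2, hL2, ?_⟩
  · have : (χ₀ * δ / l2)^2 = 64 / l1^2 * δ^2 * S^2 := by rw [hχ₀]; field_simp; ring
    rw [this, hSq]; field_simp; ring
  · have hc : 0 ≤ 1 - l1 / l2 - 2 * δ / l2 - χ₀ * δ / l2 := by linarith
    have k1 : 1 - l1 / l2 - 2 * δ / l2 - χ₀ * δ / l2 ≤ 1 - l1 / ln + χ₀ * δ / l2 := by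
      have : l1 / ln ≤ l1 / l2 := by gcongr
      have : 0 ≤ 2 * δ / l2 := by positivity
      linarith
    have k2 : (1 - 4 * δ / (l2 - l1)) * (1 - l1 / l2 - 2 * δ / l2 - χ₀ * δ / l2) * ξ₁ ≤
        1 * (1 - l1 / ln + χ₀ * δ / l2) * ξ₂ := by
      have : 0 ≤ 1 - l1 / ln + χ₀ * δ / l2 := hc.trans k1
      gcongr
    linarith


/-- Convergence of EPIC: with T SPD, P = QᵀTQ, μ_P, L_P from the convexity
theorem, κ_P = L_P/μ_P, 0 < τ_P ≤ κ_P^{−1/2}, ρ_q in the admissible range and a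
sufficiently good initial vector x₀ ∈ X with z₀ = x₀, the EPIC iterates satisfy
monotone decline of the Rayleigh quotient and
Rq(x_k) − λ₁ ≤ 2(1−τ_P)^k (Rq(x₀) − λ₁). -/
theorem stmt_19 (n : ℕ)
    (A M T : Matrix (Fin (n+2)) (Fin (n+2)) ℝ)
    (hA : A.PosDef) (hM : M.PosDef) (hT : T.PosDef)
    (q : Fin (n+2) → ℝ) (Q : Matrix (Fin (n+2)) (Fin (n+1)) ℝ)
    (hq1 : q ⬝ᵥ (M *ᵥ q) = 1)
    (hQMQ : Qᵀ * M * Q = 1)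
    (hQMq : (Qᵀ * M) *ᵥ q = 0)
    (lam : Fin (n+2) → ℝ) (u : Fin (n+2) → Fin (n+2) → ℝ)
    (hlam0 : 0 < lam 0) (hlam01 : lam 0 < lam 1) (hmono : Monotone lam)
    (heig : ∀ i, A *ᵥ u i = lam i • (M *ᵥ u i))
    (horth : ∀ i j, u i ⬝ᵥ (M *ᵥ u j) = if i = j then (1:ℝ) else 0)
    (hqu1 : 0 < q ⬝ᵥ (M *ᵥ u 0))
    (B : Matrix (Fin (n+1)) (Fin (n+1)) ℝ) (hB : B = Qᵀ * A * Q)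
    (P : Matrix (Fin (n+1)) (Fin (n+1)) ℝ) (hP : P = Qᵀ * T * Q)
    (ρq : ℝ) (hρq : ρq = Rq A M q)
    (ximin ximax : ℝ)
    (hximin : IsLeast {ξ : ℝ | ∃ v : Fin (n+1) → ℝ, v ≠ 0 ∧ B *ᵥ v = ξ • (P *ᵥ v)} ximin)
    (hximax : IsGreatest {ξ : ℝ | ∃ v : Fin (n+1) → ℝ, v ≠ 0 ∧ B *ᵥ v = ξ • (P *ᵥ v)} ximax)
    (χP : ℝ)
    (hχP : χP = (8 * lam 1 / lam 0) * (ximax / ximin) *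
      Real.sqrt ((lam 1 + lam 0) / (2 * (lam 1 - lam 0))))
    (μP LP : ℝ)
    (hμP : μP = 2 * ximin * (1 - 4 * (ρq - lam 0) / (lam 1 - lam 0)) *
      (1 - lam 0 / lam 1 - (2 + χP) * (ρq - lam 0) / lam 1))
    (hLP : LP = 2 * ximax * (1 - lam 0 / lam (Fin.last (n+1)) +
      (χP / lam 1) * (ximin / ximax) * (ρq - lam 0)))
    (hμpos : 0 < μP)
    (κP : ℝ) (hκP : κP = LP / μP)
    (τP : ℝ) (hτ0 : 0 < τP) (hτ : τP ≤ κP ^ (-(1/2 : ℝ)))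
    (hρ1 : lam 0 ≤ ρq) (hρ2 : ρq ≤ lam 0 + (lam 1 - lam 0) / (2 + χP))
    (qt : Fin (n+2) → ℝ) (hqt : qt = T⁻¹ *ᵥ (M *ᵥ q))
    (Pi : Matrix (Fin (n+2)) (Fin (n+2)) ℝ)
    (hPi : Pi = 1 - (q ⬝ᵥ (M *ᵥ qt))⁻¹ • vecMulVec qt (q ᵥ* M))
    (x z xbar r rt : ℕ → (Fin (n+2) → ℝ))
    (hx0 : x 0 ∈ Xset A M q)
    (hinit1 : 0 ≤ Rq A M (x 0) - lam 0)
    (hinit2 : Rq A M (x 0) - lam 0 ≤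
      (ρq - lam 0) / max (8 * κP) (2 * κP * (1 + τP * κP) ^ 2))
    (hz0 : z 0 = x 0)
    (hxbar : ∀ k, xbar k = Mnormalize M
      ((q ⬝ᵥ (M *ᵥ x k))⁻¹ • x k + (τP * (q ⬝ᵥ (M *ᵥ z k))⁻¹) • z k))
    (hr : ∀ k, r k = (2 : ℝ) • (A *ᵥ xbar k - Rq A M (xbar k) • (M *ᵥ xbar k)))
    (hrt : ∀ k, rt k = Pi *ᵥ (T⁻¹ *ᵥ r k))
    (hz : ∀ k, z (k+1) = Mnormalize M
      (((1 - τP) * (q ⬝ᵥ (M *ᵥ z k))⁻¹) • z k +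
        (τP * (q ⬝ᵥ (M *ᵥ xbar k))⁻¹) • xbar k -
        (τP * (q ⬝ᵥ (M *ᵥ xbar k)) / μP) • rt k))
    (hxmin : ∀ k,
      x (k+1) ∈ Xset A M q ∩
        (Submodule.span ℝ {q, x k, xbar k, rt k} :
          Submodule ℝ (Fin (n+2) → ℝ)) ∧
      ∀ v ∈ Xset A M q ∩
        (Submodule.span ℝ {q, x k, xbar k, rt k} :
          Submodule ℝ (Fin (n+2) → ℝ)),
        Rq A M (x (k+1)) ≤ Rq A M v) :
    (∀ k, Rq A M (x (k+1)) ≤ Rq A M (x k)) ∧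
    ∀ k : ℕ, Rq A M (x k) - lam 0 ≤ 2 * (1 - τP) ^ k * (Rq A M (x 0) - lam 0) := by
  have hsM : ∀ x y : Fin (n+2) → ℝ, x ⬝ᵥ (M *ᵥ y) = y ⬝ᵥ (M *ᵥ x) := epic_symm M hM.1
  have hsA : ∀ x y : Fin (n+2) → ℝ, x ⬝ᵥ (A *ᵥ y) = y ⬝ᵥ (A *ᵥ x) := epic_symm A hA.1
  have hsT : ∀ x y : Fin (n+2) → ℝ, x ⬝ᵥ (T *ᵥ y) = y ⬝ᵥ (T *ᵥ x) := epic_symm T hT.1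
  obtain ⟨hqQ, hcompl⟩ := epic_compl M q Q hsM hq1 hQMQ hQMq
  have hQinj : ∀ s : Fin (n+1) → ℝ, Q *ᵥ s = 0 → s = 0 := by
    intro s h
    have := congrArg (fun v => (Qᵀ * M) *ᵥ v) h
    simpa only [mulVec_mulVec, hQMQ, one_mulVec, mulVec_zero] using this
  have hQform : ∀ (C : Matrix (Fin (n+2)) (Fin (n+2)) ℝ) (s : Fin (n+1) → ℝ),
      s ⬝ᵥ ((Qᵀ * C * Q) *ᵥ s) = (Q *ᵥ s) ⬝ᵥ (C *ᵥ (Q *ᵥ s)) := by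
    intro C s
    rw [← mulVec_mulVec, ← mulVec_mulVec, dotProduct_mulVec s Qᵀ, vecMul_transpose]
  have hQpd : ∀ C : Matrix (Fin (n+2)) (Fin (n+2)) ℝ, C.PosDef → (Qᵀ * C * Q).PosDef := by
    intro C hC
    refine Matrix.PosDef.of_dotProduct_mulVec_pos ?_ ?_
    · have := hC.1
      rw [IsHermitian, conjTranspose_eq_transpose_of_trivial] at this ⊢
      rw [transpose_mul, transpose_mul, this, transpose_transpose, Matrix.mul_assoc]
    · intro s hs
      rw [star_trivial, hQform]
      simpa using hC.dotProduct_mulVec_pos (x := Q *ᵥ s) (fun h => hs (hQinj s h))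
  have hBpd : B.PosDef := hB ▸ hQpd A hA
  have hPpd : P.PosDef := hP ▸ hQpd T hT
  have hξ12 : ximin ≤ ximax := hximin.2 hximax.1
  have hξ0 : 0 < ximin := by
    obtain ⟨v, hv, hv2⟩ := hximin.1
    have h1 : 0 < v ⬝ᵥ (B *ᵥ v) := by simpa using hBpd.dotProduct_mulVec_pos hv
    have h2 : 0 < v ⬝ᵥ (P *ᵥ v) := by simpa using hPpd.dotProduct_mulVec_pos hv
    rw [hv2, dotProduct_smul, smul_eq_mul] at h1
    exact pos_of_mul_pos_left h1 h2.le
  have hξ20 : 0 < ximax := hξ0.trans_le hξ12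
  have hb1 : ∀ w, q ⬝ᵥ (M *ᵥ w) = 0 → ximin * (w ⬝ᵥ (T *ᵥ w)) ≤ w ⬝ᵥ (A *ᵥ w) := by
    intro w hw
    obtain ⟨s, rfl⟩ := hcompl w hw
    have := epic_pencil B P hBpd.1 hPpd ximin (fun ζ hζ => hximin.2 hζ) s
    rwa [hB, hP, hQform, hQform] at this
  have hb2 : ∀ w, q ⬝ᵥ (M *ᵥ w) = 0 → w ⬝ᵥ (A *ᵥ w) ≤ ximax * (w ⬝ᵥ (T *ᵥ w)) := by
    intro w hw
    obtain ⟨s, rfl⟩ := hcompl w hw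
    have := epic_pencil (-B) P hBpd.1.neg hPpd (-ximax) (fun ζ hζ => by
      obtain ⟨v, hv, hv2⟩ := hζ
      have h3 : -ζ ≤ ximax := hximax.2 ⟨v, hv, by
        rw [neg_smul, ← hv2, neg_mulVec, neg_neg]⟩
      linarith) s
    rw [neg_mulVec, dotProduct_neg, hB, hP, hQform, hQform] at this
    linarith
  -- bilinear forms
  obtain ⟨m, hm⟩ : ∃ m : (Fin (n+2) → ℝ) →ₗ[ℝ] (Fin (n+2) → ℝ) →ₗ[ℝ] ℝ,
      ∀ x y, m x y = x ⬝ᵥ (M *ᵥ y) := ⟨Matrix.toBilin' M, fun x y => Matrix.toBilin'_apply' M x y⟩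
  obtain ⟨a, ha⟩ : ∃ m : (Fin (n+2) → ℝ) →ₗ[ℝ] (Fin (n+2) → ℝ) →ₗ[ℝ] ℝ,
      ∀ x y, m x y = x ⬝ᵥ (A *ᵥ y) := ⟨Matrix.toBilin' A, fun x y => Matrix.toBilin'_apply' A x y⟩
  obtain ⟨t, ht⟩ : ∃ m : (Fin (n+2) → ℝ) →ₗ[ℝ] (Fin (n+2) → ℝ) →ₗ[ℝ] ℝ,
      ∀ x y, m x y = x ⬝ᵥ (T *ᵥ y) := ⟨Matrix.toBilin' T, fun x y => Matrix.toBilin'_apply' T x y⟩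
  have hexp := epic_expand A M hM lam u heig horth
  have hlam1 : ∀ i, lam 0 ≤ lam i := fun i => hmono (Fin.zero_le i)
  have hms : ∀ x y, m x y = m y x := fun x y => by rw [hm, hm, hsM]
  have has : ∀ x y, a x y = a y x := fun x y => by rw [ha, ha, hsA]
  have hts : ∀ x y, t x y = t y x := fun x y => by rw [ht, ht, hsT]
  have hmpos : ∀ x, x ≠ 0 → 0 < m x x := fun x hx => by
    rw [hm]; simpa using hM.dotProduct_mulVec_pos hx
  have hmp : ∀ x, 0 ≤ m x x := fun x => by
    rw [hm]; simpa using hM.posSemidef.dotProduct_mulVec_nonneg x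
  have htp : ∀ x, 0 ≤ t x x := fun x => by
    rw [ht]; simpa using hT.posSemidef.dotProduct_mulVec_nonneg x
  have hl2n : lam 1 ≤ lam (Fin.last (n+1)) := hmono (Fin.le_last _)
  have hlow : ∀ x, lam 1 * m x x - (lam 1 - lam 0) * (m (u 0) x)^2 ≤ a x x := by
    intro x
    rw [hm, hm, ha, (hexp x x).1, (hexp x x).2, Fin.sum_univ_succ, Fin.sum_univ_succ (n := n+1)]
    have : lam 1 * ∑ i : Fin (n+1), (u i.succ ⬝ᵥ (M *ᵥ x)) * (u i.succ ⬝ᵥ (M *ᵥ x)) ≤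
        ∑ i : Fin (n+1), lam i.succ * ((u i.succ ⬝ᵥ (M *ᵥ x)) * (u i.succ ⬝ᵥ (M *ᵥ x))) := by
      rw [Finset.mul_sum]
      refine Finset.sum_le_sum fun i _ => ?_
      refine mul_le_mul_of_nonneg_right (hmono ?_) (mul_self_nonneg _)
      rw [← Fin.succ_zero_eq_one]
      exact Fin.succ_le_succ_iff.2 (Fin.zero_le i)
    linarith
  have hlow1 : ∀ x, lam 0 * m x x ≤ a x x := by
    intro x
    rw [hm, ha, (hexp x x).1, (hexp x x).2, Finset.mul_sum]
    exact Finset.sum_le_sum fun i _ => mul_le_mul_of_nonneg_right (hlam1 i) (mul_self_nonneg _)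
  have hup : ∀ x, a x x ≤ lam (Fin.last (n+1)) * m x x := by
    intro x
    rw [hm, ha, (hexp x x).1, (hexp x x).2, Finset.mul_sum]
    exact Finset.sum_le_sum fun i _ =>
      mul_le_mul_of_nonneg_right (hmono (Fin.le_last i)) (mul_self_nonneg _)
  have hcs : ∀ x w ρ, 0 ≤ ρ → a x x = ρ * m x x →
      (a x w - ρ * m x w)^2 ≤ (ρ * (ρ - lam 0) / lam 0 * m x x) * a w w := by
    intro x w ρ hρ h
    rw [hm, ha, (hexp x x).1, (hexp x x).2] at h
    rw [hm, hm, ha, ha, (hexp x w).1, (hexp x w).2, (hexp x x).1, (hexp w w).2]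
    exact epic_cs_pencil lam _ _ (lam 0) ρ hlam0 hlam1 hρ h
  have hau : ∀ x, a (u 0) x = lam 0 * m (u 0) x := by
    intro x
    rw [has, hms, ha, hm, heig, dotProduct_smul, smul_eq_mul]
  have huu : m (u 0) (u 0) = 1 := by rw [hm, horth]; simp
  -- constants
  obtain ⟨δ, hδ⟩ : ∃ δ, δ = ρq - (lam 0) := ⟨_, rfl⟩
  rw [← hδ] at hinit2 hμP hLP
  have hδ0 : 0 ≤ δ := by linarith
  have hqq : m q q = 1 := by rw [hm, hq1]
  have haq : a q q = (lam 0) + δ := by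
    rw [hδ, hρq, Rq, hq1, div_one, ha]; ring
  obtain ⟨h6, e, he0, he, hepos, hμ2, hL2, hμL⟩ := epic_consts (lam 0) (lam 1) (lam (Fin.last (n+1))) δ ximin ximax χP μP LP
    hlam0 hlam01 hl2n hξ0 hξ12 hδ0 hχP hμP hLP (by linarith)
  have hL0 : 0 < LP := by linarith
  obtain ⟨hτ2, hτ1⟩ := epic_tau τP κP μP LP hμpos hμL hκP hτ0 hτ
  obtain ⟨f, hf⟩ : ∃ f : (Fin (n+2) → ℝ) → ℝ, ∀ x, f x = a x x / m x x := ⟨_, fun _ => rfl⟩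
  have hfR : ∀ x, Rq A M x = f x := fun x => by rw [hf, Rq, ha, hm]
  obtain ⟨g, hg⟩ : ∃ g : (Fin (n+2) → ℝ) → (Fin (n+2) → ℝ) → ℝ,
    ∀ x w, g x w = 2 / m x x * (a x w - f x * m x w) := ⟨_, fun _ _ => rfl⟩
  obtain ⟨xs, hxs⟩ : ∃ xs, xs = (m q (u 0))⁻¹ • u 0 := ⟨_, rfl⟩
  obtain ⟨F1, F2, F3, F4, F5, F6⟩ := epic_facts m a t hms has hmp htp q (u 0) (lam 0) (lam 1) (lam (Fin.last (n+1))) δ e ximin ximax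
    μP LP hlam0 hlam01 hl2n hqq huu hau (by rw [hm]; exact hqu1) hlow hlow1 hup hcs haq hδ0 h6 he0 he
    hepos (fun w hw => by rw [ht, ha]; exact hb1 w (by rw [← hm]; exact hw))
    (fun w hw => by rw [ht, ha]; exact hb2 w (by rw [← hm]; exact hw)) hξ20 hL0 hμ2 hL2 f hf g hg xs hxs
  -- scale invariance
  have hfs : ∀ (c : ℝ) x, c ≠ 0 → f (c • x) = f x := by
    intro c x hc
    rw [hf, hf]
    simp only [map_smul, LinearMap.smul_apply, smul_eq_mul]
    rw [mul_div_mul_left _ _ hc, mul_div_mul_left _ _ hc]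
  have hnrm : ∀ v, v ≠ 0 → ∃ c, 0 < c ∧ Mnormalize M v = c • v ∧ c^2 * m v v = 1 := by
    intro v hv
    have h1 := hmpos v hv
    refine ⟨(Mnorm M v)⁻¹, ?_, rfl, ?_⟩
    · rw [Mnorm, ← hm]; exact inv_pos.2 (Real.sqrt_pos.2 h1)
    · rw [Mnorm, ← hm, inv_pow, Real.sq_sqrt h1.le, inv_mul_cancel₀ h1.ne']
  have hne : ∀ v, 0 < m q v → v ≠ 0 := by
    rintro v hv rfl; simp at hv
  have hρδ : f q = (lam 0) + δ := by rw [hf, haq, hqq, div_one]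
  have hxX : ∀ k, x k ∈ Xset A M q := by
    intro k
    cases k with
    | zero => exact hx0
    | succ k => exact (hxmin k).1.1
  have hxφ : ∀ k, 0 < m q (x k) := fun k => by rw [hm]; exact (hxX k).1.2
  have hxf : ∀ k, f (x k) ≤ (lam 0) + δ := fun k => by rw [← hρδ, ← hfR, ← hfR]; exact (hxX k).2
  have hmon : ∀ k, f (x (k+1)) ≤ f (x k) := by
    intro k
    rw [← hfR, ← hfR]
    exact (hxmin k).2 _ ⟨hxX k, Submodule.subset_span (by simp)⟩
  have hε : 8 * (LP / μP) * (f (x 0) - (lam 0)) ≤ δ := by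
    have hκ0 : 0 < κP := by rw [hκP]; positivity
    have h8 : 0 < max (8 * κP) (2 * κP * (1 + τP * κP) ^ 2) := lt_max_of_lt_left (by positivity)
    rw [le_div_iff₀ h8, hfR] at hinit2
    rw [hfR] at hinit1
    rw [← hκP]
    have := mul_le_mul_of_nonneg_left (le_max_left (8 * κP) (2 * κP * (1 + τP * κP) ^ 2)) hinit1
    linarith
  -- one step
  have hstep : ∀ k, 0 < m q (z k) →
      f (x k) - (lam 0) + μP / 2 * t ((m q (z k))⁻¹ • z k - xs) ((m q (z k))⁻¹ • z k - xs) ≤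
        2 * (f (x 0) - (lam 0)) →
      0 < m q (z (k+1)) ∧
      f (x (k+1)) - (lam 0) +
        μP / 2 * t ((m q (z (k+1)))⁻¹ • z (k+1) - xs) ((m q (z (k+1)))⁻¹ • z (k+1) - xs) ≤
      (1 - τP) *
        (f (x k) - (lam 0) + μP / 2 * t ((m q (z k))⁻¹ • z k - xs) ((m q (z k))⁻¹ • z k - xs)) := by
    intro k hzk hE
    obtain ⟨Z, hZ⟩ : ∃ Z, Z = (m q (z k))⁻¹ • z k := ⟨_, rfl⟩
    obtain ⟨X, hX⟩ : ∃ X, X = (m q (x k))⁻¹ • x k := ⟨_, rfl⟩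
    obtain ⟨Xb, hXb⟩ : ∃ Xb, Xb = (1 + τP)⁻¹ • (X + τP • Z) := ⟨_, rfl⟩
    rw [← hZ] at hE ⊢
    have hZ1 : m q Z = 1 := by rw [hZ, map_smul, smul_eq_mul, inv_mul_cancel₀ hzk.ne']
    have hX1 : m q X = 1 := by rw [hX, map_smul, smul_eq_mul, inv_mul_cancel₀ (hxφ k).ne']
    have h1τ : (1 + τP) ≠ 0 := by positivity
    have hXb' : (1 + τP) • Xb = X + τP • Z := by rw [hXb, smul_smul, mul_inv_cancel₀ h1τ, one_smul]
    have hXb1 : m q Xb = 1 := by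
      rw [hXb, map_smul, map_add, map_smul, hX1, hZ1, smul_eq_mul, smul_eq_mul, mul_one,
        inv_mul_cancel₀ h1τ]
    -- xbar
    obtain ⟨c, hc0, hxc, hcD⟩ : ∃ c, 0 < c ∧ xbar k = c • Xb ∧ c^2 * m Xb Xb = 1 := by
      have h1 : (q ⬝ᵥ (M *ᵥ x k))⁻¹ • x k + (τP * (q ⬝ᵥ (M *ᵥ z k))⁻¹) • z k =
          (1 + τP) • Xb := by
        rw [hXb', hX, hZ, ← hm, ← hm, smul_smul]
      obtain ⟨c, hc0, hc1, hc2⟩ := hnrm ((1 + τP) • Xb) (hne _ (by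
        rw [map_smul, hXb1, smul_eq_mul]; positivity))
      refine ⟨c * (1 + τP), by positivity, ?_, ?_⟩
      · rw [hxbar, h1, hc1, smul_smul]
      · simp only [map_smul, LinearMap.smul_apply, smul_eq_mul] at hc2
        linarith [hc2]
    have hφb : m q (xbar k) = c := by rw [hxc, map_smul, hXb1, smul_eq_mul, mul_one]
    have hfb : f (xbar k) = f Xb := by rw [hxc, hfs _ _ hc0.ne']
    obtain ⟨R, hRdef⟩ : ∃ R, R = c • rt k := ⟨_, rfl⟩
    obtain ⟨hpr1, hpr2⟩ := epic_proj M T hM hT q hq1 qt hqt Pi hPi (r k)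
    rw [← hrt] at hpr1 hpr2
    have hR0 : m q R = 0 := by rw [hRdef, map_smul, hm, hpr1, smul_zero]
    have hDb : 0 < m Xb Xb := hmpos _ (hne _ (by rw [hXb1]; exact one_pos))
    have hRg : ∀ w, m q w = 0 → t R w = g Xb w := by
      intro w hw
      have h1 : c^2 = 1 / m Xb Xb := by rw [eq_div_iff hDb.ne']; exact hcD
      rw [hts, hRdef, map_smul, ht, hpr2 w (by rw [← hm]; exact hw), hr, dotProduct_smul,
        dotProduct_sub, dotProduct_smul, ← ha, ← hm, hfR, hfb, hxc, hg, map_smul, map_smul,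
        has w Xb, hms w Xb]
      simp only [smul_eq_mul]
      have : c * (2 * (c * a Xb w - f Xb * (c * m Xb w))) =
        c^2 * (2 * (a Xb w - f Xb * m Xb w)) := by ring
      rw [this, h1]; ring
    have hfX : f X = f (x k) := by rw [hX]; exact hfs _ _ (inv_pos.2 (hxφ k)).ne'
    rw [← hfX] at hE ⊢
    obtain ⟨S1, S2⟩ := epic_step t hts htp (m q) f g (lam 0) δ μP LP τP hδ0 hμpos hμL hτ0 hτ2 hτ1 F1 xs F2 F3
      F4 F5 F6 X Z Xb R hX1 hZ1 hXb' hR0 hRg (by rw [hfX]; exact hxf k) (f (x 0) - (lam 0)) hE hε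
    -- z
    have hzv : ((1 - τP) * (q ⬝ᵥ (M *ᵥ z k))⁻¹) • z k +
        (τP * (q ⬝ᵥ (M *ᵥ xbar k))⁻¹) • xbar k -
        (τP * (q ⬝ᵥ (M *ᵥ xbar k)) / μP) • rt k = (1 - τP) • Z + τP • Xb - (τP / μP) • R := by
      rw [← hm, ← hm, hφb, hxc, hZ, hRdef, smul_smul, smul_smul, smul_smul, mul_assoc τP,
        inv_mul_cancel₀ hc0.ne', mul_one]
      congr 2
      ring
    obtain ⟨Zn, hZn⟩ : ∃ Zn, Zn = (1 - τP) • Z + τP • Xb - (τP / μP) • R := ⟨_, rfl⟩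
    rw [← hZn] at hzv S2
    have hZn1 : m q Zn = 1 := by
      rw [hZn]
      simp only [map_sub, map_add, map_smul, hZ1, hXb1, hR0, smul_eq_mul]
      ring
    obtain ⟨d, hd0, hd1, -⟩ := hnrm Zn (hne _ (by rw [hZn1]; exact one_pos))
    have hzk1 : z (k+1) = d • Zn := by rw [hz, hzv, hd1]
    have hφz : m q (z (k+1)) = d := by rw [hzk1, map_smul, hZn1, smul_eq_mul, mul_one]
    have hZk1 : (m q (z (k+1)))⁻¹ • z (k+1) = Zn := by
      rw [hφz, hzk1, smul_smul, inv_mul_cancel₀ hd0.ne', one_smul]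
    rw [hZk1]
    refine ⟨by rw [hφz]; exact hd0, ?_⟩
    -- competitor
    obtain ⟨p, hp⟩ : ∃ p, p = Xb - (1 / LP) • R := ⟨_, rfl⟩
    rw [← hp] at S1 S2
    have hp1 : m q p = 1 := by rw [hp, map_sub, map_smul, hXb1, hR0]; simp
    obtain ⟨d', hd0', hd1', hd2'⟩ := hnrm p (hne _ (by rw [hp1]; exact one_pos))
    have hpX : d' • p ∈ Xset A M q := by
      refine ⟨⟨?_, ?_⟩, ?_⟩
      · rw [Mnorm, ← hm]
        simp only [map_smul, LinearMap.smul_apply, smul_eq_mul]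
        rw [show d' * (d' * m p p) = d'^2 * m p p by ring, hd2', Real.sqrt_one]
      · rw [← hm, map_smul, hp1, smul_eq_mul, mul_one]; exact hd0'
      · rw [hfR, hfR, hfs _ _ hd0'.ne', hρδ]; exact S1
    have hpS : d' • p ∈ (Submodule.span ℝ {q, x k, xbar k, rt k} :
          Submodule ℝ (Fin (n+2) → ℝ)) := by
      apply Submodule.smul_mem
      have h1 : p = c⁻¹ • xbar k - (1 / LP * c) • rt k := by
        rw [hp, hxc, hRdef, smul_smul, smul_smul, inv_mul_cancel₀ hc0.ne', one_smul]
      rw [h1]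
      apply Submodule.sub_mem <;> apply Submodule.smul_mem <;> apply Submodule.subset_span <;> simp
    have hle := (hxmin k).2 _ ⟨hpX, hpS⟩
    rw [hfR, hfR, hfs _ _ hd0'.ne'] at hle
    linarith
  have h1τ : 0 ≤ 1 - τP := by linarith
  rw [hfR] at hinit1
  have hall : ∀ k, 0 < m q (z k) ∧
      f (x k) - (lam 0) + μP / 2 * t ((m q (z k))⁻¹ • z k - xs) ((m q (z k))⁻¹ • z k - xs) ≤
        2 * (1 - τP)^k * (f (x 0) - (lam 0)) := by
    intro k
    induction k with
    | zero =>
      refine ⟨by rw [hz0]; exact hxφ 0, ?_⟩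
      rw [hz0]
      have hX1 : m q ((m q (x 0))⁻¹ • x 0) = 1 := by
        rw [map_smul, smul_eq_mul, inv_mul_cancel₀ (hxφ 0).ne']
      have hfX : f ((m q (x 0))⁻¹ • x 0) = f (x 0) := hfs _ _ (inv_pos.2 (hxφ 0)).ne'
      have := (F1 xs _ F2 hX1 (by rw [F3]; linarith) (by rw [hfX]; exact hxf 0)).1
      rw [F4, F3, hfX] at this
      rw [pow_zero]; linarith
    | succ k ih =>
      have hpw : (1 - τP)^k ≤ 1 := pow_le_one₀ h1τ (by linarith)
      have h2 := mul_le_mul_of_nonneg_right hpw hinit1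
      obtain ⟨s1, s2⟩ := hstep k ih.1 (by linarith [ih.2])
      refine ⟨s1, s2.trans ?_⟩
      have := mul_le_mul_of_nonneg_left ih.2 h1τ
      refine this.trans (le_of_eq ?_)
      ring
  refine ⟨fun k => by rw [hfR, hfR]; exact hmon k, fun k => ?_⟩
  rw [hfR, hfR]
  have h1 := (hall k).2
  have h2 := htp ((m q (z k))⁻¹ • z k - xs)
  have h3 : 0 ≤ μP / 2 * t ((m q (z k))⁻¹ • z k - xs) ((m q (z k))⁻¹ • z k - xs) := by positivity
  linarith
end
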